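/- Time-splitting approximation for the fractional Burgers equation (Proposition timesplit): Fix 0 < α < 1 and N > 0. There exist h₀ = h₀(α,N) > 0 and C = C(α,N) > 0 such that the following holds for every 0 < h ≤ h₀. Let θ : ℝ × [0,h] → ℝ be a smooth periodic-in-x solution of ∂_t θ = θ ∂_x θ − L_α θ with ‖θ(·,t)‖_{C³} ≤ N for 0 ≤ t ≤ h, where L_α f(x) = P.V. ∫_ℝ (f(x) − f(x+y))/|y|^{1+2α} dy. Let w solve the inviscid Burgers equation ∂_t w = w ∂_x w on [0,h] with w(·,0) = θ(·,0), and set v(x,h) = (Φ_h ∗ w(·,h))(x), where Φ_t is the fractional heat kernel of e^{−L_α t}. Then ‖θ(·,h) − v(·,h)‖_{C¹} ≤ C h². -/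

import Mathlib

open Set MeasureTheory Filter Topology

noncomputable section

/-- The normalization constant matching the unnormalized fractional Laplacian
`L_α f(x) = P.V.∫ (f(x)−f(x+y))/|y|^{1+2α} dy`, whose Fourier symbol is
`(∫ (1−cos u)/|u|^{1+2α} du) · |ξ|^{2α}`. -/
def fracNormConst (α : ℝ) : ℝ := ∫ u : ℝ, (1 - Real.cos u) / |u| ^ (1 + 2*α)

/-- The convolution kernel of the semigroup `e^{−L_α t}`: the inverse Fourier transform of
`exp(−c_α t |ξ|^{2α})` with the normalization constant `c_α` matching `L_α`. -/
def fracSemigroupKernel (α t x : ℝ) : ℝ :=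
  (1 / (2 * Real.pi)) *
    (∫ s : ℝ, Complex.exp (((x * s : ℝ) : ℂ) * Complex.I
      - ((fracNormConst α * t * |s| ^ (2*α) : ℝ) : ℂ))).re

/-!
Let `S_t = e^{-L_α t}` and `v(t) = S_t w(t)`. Then
`∂_t v = v ∂_x v - L_α v + (S_t (w ∂_x w) - S_t w · S_t ∂_x w)`: the function `v` solves the
equation of `θ` up to the covariance of `w` and `∂_x w` under the transition probabilities of `S_t`,
which is `O(t)` because `w` and `∂_x w` are bounded and Lipschitz. The maximum principle for the
linear equation satisfied by `θ - v`, which vanishes at time `0`, bounds `θ - v` by `O(h²)`; applied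
to the increments of `θ - v`, it bounds the derivative as well.

The Lévy measure of `L_α` is first truncated to jumps of size larger than `ε`. The generator is then
a bounded operator on bounded continuous functions and all constants are uniform in `ε`. The
truncated semigroups converge to the convolution with `Φ_t` on periodic functions, since they do so
on trigonometric polynomials and `Φ_t` is integrable.

The solution `w` is only known to be regular in each variable separately. A Baire category argument
shows that it is nevertheless constant along its characteristics, and this controls its `C³` norm.
-/

open scoped BoundedContinuousFunction

theorem abs_sub_le_of_hasDerivAt {f f' : ℝ → ℝ} {M : ℝ} (hf : ∀ x, HasDerivAt f (f' x) x)
    (hM : ∀ x, |f' x| ≤ M) (x y : ℝ) : |f x - f y| ≤ M * |x - y| :=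
  convex_univ.norm_image_sub_le_of_norm_hasDerivWithin_le
    (fun x _ ↦ (hf x).hasDerivWithinAt) (fun x _ ↦ hM x) (mem_univ y) (mem_univ x)

theorem abs_taylor_le {s : Set ℝ} {f f' : ℝ → ℝ} {M x y : ℝ} (hs : Convex ℝ s)
    (hf : ∀ u ∈ s, HasDerivAt f (f' u) u) (hM : ∀ u ∈ s, |f' u - f' x| ≤ M * |u - x|)
    (hx : x ∈ s) (hy : y ∈ s) : |f y - f x - (y - x) * f' x| ≤ M * (y - x) ^ 2 := by
  rcases eq_or_ne y x with rfl | hne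
  · simp
  have hM0 : 0 ≤ M :=
    nonneg_of_mul_nonneg_left ((abs_nonneg _).trans (hM y hy)) (abs_pos.2 (sub_ne_zero.2 hne))
  have hsub : uIcc x y ⊆ s := hs.ordConnected.uIcc_subset hx hy
  have hmean := (convex_uIcc x y).norm_image_sub_le_of_norm_hasDerivWithin_le
    (f := fun u ↦ f u - u * f' x) (f' := fun u ↦ f' u - f' x) (C := M * |y - x|)
    (fun u hu ↦ by
      simpa using ((hf u (hsub hu)).fun_sub ((hasDerivAt_id' u).mul_const (f' x))).hasDerivWithinAt)
    (fun u hu ↦ (hM u (hsub hu)).trans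
      (mul_le_mul_of_nonneg_left (abs_sub_left_of_mem_uIcc hu) hM0))
    left_mem_uIcc right_mem_uIcc
  calc |f y - f x - (y - x) * f' x| = |f y - y * f' x - (f x - x * f' x)| := by
        congr 1; ring
    _ ≤ M * |y - x| * |y - x| := hmean
    _ = M * (y - x) ^ 2 := by rw [mul_assoc, ← sq, sq_abs]

theorem line_mem_of_mem_uIcc {S : Set ℝ} {c s t u x : ℝ} (hS : Convex ℝ S) (hx : x ∈ S)
    (hy : x - c * (s - t) ∈ S) (hu : u ∈ uIcc t s) : x - c * (u - t) ∈ S := by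
  obtain ⟨p, hp, rfl⟩ : u ∈ AffineMap.lineMap t s '' Icc (0 : ℝ) 1 := by
    rwa [← segment_eq_image_lineMap, segment_eq_uIcc]
  convert hS.lineMap_mem hx hy hp using 1
  simp only [AffineMap.lineMap_apply, vsub_eq_sub, vadd_eq_add, smul_eq_mul]
  ring

theorem eq_zero_of_abs_hasDerivWithinAt_le {g g' : ℝ → ℝ} {K s t : ℝ}
    (hg : ∀ u ∈ uIcc t s, HasDerivWithinAt g (g' u) (uIcc t s) u)
    (hK : ∀ u ∈ uIcc t s, |g' u| ≤ K * |g u|) (h0 : g t = 0) : g s = 0 := by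
  set γ : ℝ → ℝ := ⇑(AffineMap.lineMap t s : ℝ →ᵃ[ℝ] ℝ)
  have hγ : MapsTo γ (Icc 0 1) (uIcc t s) := fun p hp ↦
    (convex_uIcc t s).lineMap_mem left_mem_uIcc right_mem_uIcc hp
  have hderiv : ∀ p ∈ Icc (0 : ℝ) 1,
      HasDerivWithinAt (g ∘ γ) ((s - t) * g' (γ p)) (Icc 0 1) p := fun p hp ↦
    (hg _ (hγ hp)).scomp p AffineMap.hasDerivWithinAt_lineMap hγ
  have := eq_zero_of_abs_deriv_le_mul_abs_self_of_eq_zero_right (f := g ∘ γ) (K := |s - t| * K)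
    (fun p hp ↦ (hderiv p hp).continuousWithinAt)
    (fun p hp ↦ (hderiv p ⟨hp.1, hp.2.le⟩).mono_of_mem_nhdsWithin
      (Icc_mem_nhdsGE_of_mem hp)) (by simpa [γ] using h0)
    (fun p hp ↦ by
      rw [norm_mul, Real.norm_eq_abs, mul_assoc]
      exact mul_le_mul_of_nonneg_left (hK _ (hγ ⟨hp.1, hp.2.le⟩)) (abs_nonneg _))
    1 (right_mem_Icc.2 zero_le_one)
  simpa [γ] using this

/-- Control of the `C^{1,1}` size of `f` on `(a, b)` by the constant `n`. It is phrased with finite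
differences, so that it passes to pointwise limits. -/
structure C11On (f : ℝ → ℝ) (n a b : ℝ) : Prop where
  abs_le : ∀ y ∈ Ioo a b, |f y| ≤ n
  abs_sub_le : ∀ y ∈ Ioo a b, ∀ z ∈ Ioo a b, |f y - f z| ≤ n * |y - z|
  abs_sub_sub_le : ∀ y z k, y ∈ Ioo a b → z ∈ Ioo a b → y + k ∈ Ioo a b → z + k ∈ Ioo a b →
    |f (y + k) - f y - (f (z + k) - f z)| ≤ n * (|k| * |y - z|)

namespace C11On

variable {f : ℝ → ℝ} {n a b : ℝ}

theorem mono {m a' b' : ℝ} (hf : C11On f n a b) (hnm : n ≤ m) (ha : a ≤ a') (hb : b' ≤ b) :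
    C11On f m a' b' := by
  have hs : Ioo a' b' ⊆ Ioo a b := Ioo_subset_Ioo ha hb
  refine ⟨fun y hy ↦ (hf.abs_le y (hs hy)).trans hnm, fun y hy z hz ↦ ?_,
    fun y z k hy hz hyk hzk ↦ ?_⟩
  · exact (hf.abs_sub_le y (hs hy) z (hs hz)).trans (by gcongr)
  · exact (hf.abs_sub_sub_le y z k (hs hy) (hs hz) (hs hyk) (hs hzk)).trans (by gcongr)

theorem abs_deriv_le (hf : C11On f n a b) (hd : Differentiable ℝ f) {x : ℝ} (hx : x ∈ Ioo a b) :
    |deriv f x| ≤ n := by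
  refine (hd x).hasDerivAt.le_of_lip' ((abs_nonneg _).trans (hf.abs_le x hx)) ?_
  filter_upwards [Ioo_mem_nhds hx.1 hx.2] with y hy using hf.abs_sub_le y hy x hx

theorem abs_deriv_sub_le (hf : C11On f n a b) (hd : Differentiable ℝ f) {x y : ℝ}
    (hx : x ∈ Ioo a b) (hy : y ∈ Ioo a b) : |deriv f x - deriv f y| ≤ n * |x - y| := by
  have hn : 0 ≤ n := (abs_nonneg _).trans (hf.abs_le x hx)
  have hderiv (z : ℝ) : HasDerivAt (fun k ↦ f (z + k)) (deriv f z) 0 := by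
    simpa using (hd (z + 0)).hasDerivAt.comp_const_add z 0
  have hmem {z : ℝ} (hz : z ∈ Ioo a b) : ∀ᶠ k in 𝓝 (0 : ℝ), z + k ∈ Ioo a b :=
    (continuous_const_add z).tendsto' 0 z (add_zero z) |>.eventually_mem (Ioo_mem_nhds hz.1 hz.2)
  refine ((hderiv x).sub (hderiv y)).le_of_lip' (C := n * |x - y|) (by positivity) ?_
  filter_upwards [hmem hx, hmem hy] with k hxk hyk
  have := hf.abs_sub_sub_le x y k hx hy hxk hyk
  simp only [Pi.sub_apply, add_zero, sub_zero, Real.norm_eq_abs]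
  rwa [sub_sub_sub_comm, mul_assoc, mul_comm |x - y|]

theorem abs_taylor_le (hf : C11On f n a b) (hd : Differentiable ℝ f) {x y : ℝ}
    (hx : x ∈ Ioo a b) (hy : y ∈ Ioo a b) :
    |f y - f x - (y - x) * deriv f x| ≤ n * (y - x) ^ 2 :=
  _root_.abs_taylor_le (convex_Ioo a b) (fun u _ ↦ (hd u).hasDerivAt)
    (fun _ hu ↦ hf.abs_deriv_sub_le hd hu hx) hx hy

theorem of_deriv (hd : Differentiable ℝ f)
    (h0 : ∀ y ∈ Ioo a b, |f y| ≤ n) (h1 : ∀ y ∈ Ioo a b, |deriv f y| ≤ n)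
    (h2 : ∀ y ∈ Ioo a b, ∀ z ∈ Ioo a b, |deriv f y - deriv f z| ≤ n * |y - z|) :
    C11On f n a b := by
  refine ⟨h0, fun y hy z hz ↦ ?_, fun y z k hy hz hyk hzk ↦ ?_⟩
  · exact (convex_Ioo a b).norm_image_sub_le_of_norm_deriv_le (fun x _ ↦ hd x) h1 hz hy
  · have hconn : OrdConnected (Ioo a b) := ordConnected_Ioo
    have hshift : ∀ x ∈ uIcc z y, x + k ∈ uIcc (z + k) (y + k) := fun x hx ↦ by
      rw [← image_add_const_uIcc]; exact mem_image_of_mem _ hx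
    have hmean := (convex_uIcc z y).norm_image_sub_le_of_norm_hasDerivWithin_le
      (f := fun u ↦ f (u + k) - f u) (f' := fun u ↦ deriv f (u + k) - deriv f u) (C := n * |k|)
      (fun x _ ↦ (((hd (x + k)).hasDerivAt.comp_add_const x k).sub
        (hd x).hasDerivAt).hasDerivWithinAt)
      (fun x hx ↦ by
        simpa using h2 (x + k) (hconn.uIcc_subset hzk hyk (hshift x hx)) x
          (hconn.uIcc_subset hz hy hx))
      left_mem_uIcc right_mem_uIcc
    rwa [← mul_assoc]

theorem exists_of_contDiff (hf : ContDiff ℝ 2 f) (a b : ℝ) : ∃ n, C11On f n a b := by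
  have hd : Differentiable ℝ f := hf.differentiable (by norm_num)
  have hf1 : ContDiff ℝ 1 (deriv f) := hf.deriv'
  have hd1 : Differentiable ℝ (deriv f) := hf1.differentiable (by norm_num)
  have hbdd {g : ℝ → ℝ} (hg : Continuous g) : ∃ A, ∀ y ∈ Ioo a b, |g y| ≤ A :=
    (isCompact_Icc.exists_bound_of_continuousOn (s := Icc a b) hg.continuousOn).imp
      fun A hA y hy ↦ hA y (Ioo_subset_Icc_self hy)
  obtain ⟨A, hA⟩ := hbdd hd.continuous
  obtain ⟨B, hB⟩ := hbdd hd1.continuous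
  obtain ⟨C, hC⟩ := hbdd (hf1.continuous_deriv le_rfl)
  refine ⟨max A (max B C), of_deriv hd (fun y hy ↦ (hA y hy).trans (by simp))
    (fun y hy ↦ (hB y hy).trans (by simp)) fun y hy z hz ↦ ?_⟩
  exact (convex_Ioo a b).norm_image_sub_le_of_norm_deriv_le (fun x _ ↦ hd1 x)
    (fun x hx ↦ (hC x hx).trans (by simp)) hz hy

theorem neg (hf : C11On f n a b) : C11On (fun x ↦ -f x) n a b := by
  refine ⟨fun y hy ↦ by simpa using hf.abs_le y hy, fun y hy z hz ↦ ?_,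
    fun y z k hy hz hyk hzk ↦ ?_⟩
  · rw [neg_sub_neg, abs_sub_comm]; exact hf.abs_sub_le y hy z hz
  · rw [← abs_neg]
    convert hf.abs_sub_sub_le y z k hy hz hyk hzk using 2
    ring

theorem comp_neg (hf : C11On f n a b) : C11On (fun x ↦ f (-x)) n (-b) (-a) := by
  have hneg : ∀ y ∈ Ioo (-b) (-a), -y ∈ Ioo a b := fun y hy ↦ neg_mem_Ioo_iff.2 hy
  refine ⟨fun y hy ↦ hf.abs_le _ (hneg y hy), fun y hy z hz ↦ ?_, fun y z k hy hz hyk hzk ↦ ?_⟩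
  · rw [← abs_neg (y - z), neg_sub']
    exact hf.abs_sub_le _ (hneg y hy) _ (hneg z hz)
  · rw [← abs_neg k, ← abs_neg (y - z), neg_sub', neg_add, neg_add]
    exact hf.abs_sub_sub_le _ _ _ (hneg y hy) (hneg z hz) (neg_add y k ▸ hneg _ hyk)
      (neg_add z k ▸ hneg _ hzk)

theorem of_frequently {ι : Type*} {l : Filter ι} {F : ι → ℝ → ℝ} {A B : ι → ℝ}
    (hF : ∀ y, Tendsto (fun i ↦ F i y) l (𝓝 (f y))) (hA : Tendsto A l (𝓝 a))
    (hB : Tendsto B l (𝓝 b)) (h : ∃ᶠ i in l, C11On (F i) n (A i) (B i)) : C11On f n a b := by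
  have hmem {y : ℝ} (hy : y ∈ Ioo a b) : ∀ᶠ i in l, y ∈ Ioo (A i) (B i) :=
    (hA.eventually_lt_const hy.1).and (hB.eventually_const_lt hy.2)
  refine ⟨fun y hy ↦ ?_, fun y hy z hz ↦ ?_, fun y z k hy hz hyk hzk ↦ ?_⟩
  · exact le_of_tendsto_of_frequently (hF y).abs
      ((h.and_eventually (hmem hy)).mono fun i hi ↦ hi.1.abs_le y hi.2)
  · exact le_of_tendsto_of_frequently ((hF y).sub (hF z)).abs
      ((h.and_eventually ((hmem hy).and (hmem hz))).mono
        fun i hi ↦ hi.1.abs_sub_le y hi.2.1 z hi.2.2)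
  · exact le_of_tendsto_of_frequently (((hF _).sub (hF _)).sub ((hF _).sub (hF _))).abs
      ((h.and_eventually (((hmem hy).and (hmem hz)).and ((hmem hyk).and (hmem hzk)))).mono
        fun i hi ↦ hi.1.abs_sub_sub_le y z k hi.2.1.1 hi.2.1.2 hi.2.2.1 hi.2.2.2)

end C11On

theorem hasDerivAt_of_implicit {f W : ℝ → ℝ} {W' τ x : ℝ} (hf : DifferentiableAt ℝ f x)
    (hW : HasDerivAt W W' (x + τ * f x)) (h : f =ᶠ[𝓝 x] fun y ↦ W (y + τ * f y))
    (hτ : 1 - τ * W' ≠ 0) : HasDerivAt f (W' * (1 - τ * W')⁻¹) x := by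
  have hchain : HasDerivAt f (W' * (1 + τ * deriv f x)) x :=
    (hW.comp x ((hasDerivAt_id x).add (hf.hasDerivAt.const_mul τ))).congr_of_eventuallyEq h
  refine hf.hasDerivAt.congr_deriv ?_
  rw [← div_eq_mul_inv, eq_div_iff hτ]
  linear_combination hchain.deriv

theorem half_le_one_sub_mul {τ u n : ℝ} (hτ : 0 ≤ τ) (hu : |u| ≤ n) (hnτ : n * τ ≤ 1 / 2) :
    1 / 2 ≤ 1 - τ * u := by
  nlinarith [mul_le_mul_of_nonneg_left ((le_abs_self u).trans hu) hτ]

theorem abs_inv_one_sub_mul_le {τ u n : ℝ} (hτ : 0 ≤ τ) (hu : |u| ≤ n) (hnτ : n * τ ≤ 1 / 2) :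
    |(1 - τ * u)⁻¹| ≤ 2 := by
  have h := half_le_one_sub_mul hτ hu hnτ
  rw [abs_inv, abs_of_pos (by linarith)]
  exact inv_le_of_inv_le₀ two_pos (by linarith)

theorem abs_mul_inv_one_sub_mul_sub_le {τ u v n : ℝ} (hτ : 0 ≤ τ) (hu : |u| ≤ n) (hv : |v| ≤ n)
    (hnτ : n * τ ≤ 1 / 2) :
    |u * (1 - τ * u)⁻¹ - v * (1 - τ * v)⁻¹| ≤ 4 * |u - v| := by
  have hu' : (1 - τ * u)⁻¹ * (1 - τ * u) = 1 :=
    inv_mul_cancel₀ (by linarith [half_le_one_sub_mul hτ hu hnτ])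
  have hv' : (1 - τ * v)⁻¹ * (1 - τ * v) = 1 :=
    inv_mul_cancel₀ (by linarith [half_le_one_sub_mul hτ hv hnτ])
  have : u * (1 - τ * u)⁻¹ - v * (1 - τ * v)⁻¹ = (1 - τ * u)⁻¹ * ((1 - τ * v)⁻¹ * (u - v)) := by
    linear_combination (v * (1 - τ * v)⁻¹) * hu' - (u * (1 - τ * u)⁻¹) * hv'
  rw [this, abs_mul, abs_mul]
  calc _ ≤ 2 * (2 * |u - v|) := by
        gcongr
        exacts [abs_inv_one_sub_mul_le hτ hu hnτ, abs_inv_one_sub_mul_le hτ hv hnτ]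
    _ = 4 * |u - v| := by ring

theorem C11On.of_implicit {f W : ℝ → ℝ} {n τ l r l' r' : ℝ} (hf : Differentiable ℝ f)
    (hW : Differentiable ℝ W) (hτ : 0 ≤ τ) (hnτ : n * τ ≤ 1 / 2) (hn : 0 ≤ n)
    (hWn : C11On W n l' r') (hmem : ∀ x ∈ Ioo l r, x + τ * f x ∈ Ioo l' r')
    (h : ∀ x ∈ Ioo l r, f x = W (x + τ * f x)) : C11On f (8 * n) l r := by
  set p : ℝ → ℝ := fun x ↦ x + τ * f x
  have hW' : ∀ x ∈ Ioo l r, |deriv W (p x)| ≤ n := fun x hx ↦ hWn.abs_deriv_le hW (hmem x hx)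
  have hf' : ∀ x ∈ Ioo l r, deriv f x = deriv W (p x) * (1 - τ * deriv W (p x))⁻¹ := by
    intro x hx
    refine (hasDerivAt_of_implicit (hf x) (hW _).hasDerivAt ?_ ?_).deriv
    · filter_upwards [Ioo_mem_nhds hx.1 hx.2] with y hy using h y hy
    · linarith [half_le_one_sub_mul hτ (hW' x hx) hnτ]
  have hbound : ∀ x ∈ Ioo l r, |deriv f x| ≤ 2 * n := fun x hx ↦ by
    rw [hf' x hx, abs_mul, mul_comm 2]
    exact mul_le_mul (hW' x hx) (abs_inv_one_sub_mul_le hτ (hW' x hx) hnτ) (abs_nonneg _) hn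
  have hp : ∀ x ∈ Ioo l r, ∀ y ∈ Ioo l r, |p x - p y| ≤ 2 * |x - y| := fun x hx y hy ↦ by
    have hlip : |f x - f y| ≤ 2 * n * |x - y| :=
      (convex_Ioo l r).norm_image_sub_le_of_norm_deriv_le (fun x _ ↦ hf x) hbound hy hx
    calc |p x - p y| = |(x - y) + τ * (f x - f y)| := by congr 1; ring
      _ ≤ |x - y| + τ * |f x - f y| := by grw [abs_add_le, abs_mul, abs_of_nonneg hτ]
      _ ≤ |x - y| + τ * (2 * n * |x - y|) := by gcongr
      _ ≤ 2 * |x - y| := by nlinarith [abs_nonneg (x - y)]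
  refine .of_deriv hf (fun x hx ↦ ?_) (fun x hx ↦ (hbound x hx).trans (by linarith))
    fun x hx y hy ↦ ?_
  · rw [h x hx]
    exact (hWn.abs_le _ (hmem x hx)).trans (by linarith)
  · calc |deriv f x - deriv f y| ≤ 4 * |deriv W (p x) - deriv W (p y)| := by
          rw [hf' x hx, hf' y hy]
          exact abs_mul_inv_one_sub_mul_sub_le hτ (hW' x hx) (hW' y hy) hnτ
      _ ≤ 4 * (n * |p x - p y|) := by
          gcongr; exact hWn.abs_deriv_sub_le hW (hmem x hx) (hmem y hy)
      _ ≤ 4 * (n * (2 * |x - y|)) := by gcongr; exact hp x hx y hy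
      _ = 8 * n * |x - y| := by ring

/-! ### Characteristics of separately differentiable solutions -/

theorem isLittleO_sq_sub_nhdsWithin (s : Set ℝ) (t : ℝ) :
    (fun u ↦ (u - t) ^ 2) =o[𝓝[s] t] fun u ↦ u - t := by
  refine ((Asymptotics.isLittleO_pow_sub_sub t one_lt_two).mono nhdsWithin_le_nhds).congr_left ?_
  exact fun u ↦ by rw [Real.norm_eq_abs, sq_abs]

/-- `w` solves the inviscid Burgers equation `∂ₜw = w ∂ₓw` pointwise on `ℝ × [a, b]`. No joint
regularity is required: `w` is `C²` in space at each time and differentiable in time at each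
point. -/
structure IsSliceBurgers (w : ℝ → ℝ → ℝ) (a b : ℝ) : Prop where
  contDiff : ∀ t ∈ Icc a b, ContDiff ℝ 2 fun x ↦ w x t
  hasDeriv : ∀ x, ∀ t ∈ Icc a b,
    HasDerivWithinAt (fun s ↦ w x s) (w x t * deriv (fun y ↦ w y t) x) (Icc a b) t

/-- The spatial slices of `w` at times in `[a, b]` are uniformly `C^{1,1}` near `(x, t)`. -/
def UniformC11At (w : ℝ → ℝ → ℝ) (a b x t : ℝ) : Prop :=
  ∃ r > 0, ∃ n, ∀ s ∈ Icc a b, |s - t| < r → C11On (fun y ↦ w y s) n (x - r) (x + r)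

namespace UniformC11At

variable {w : ℝ → ℝ → ℝ} {a b x t : ℝ}

theorem neg_comp_neg (h : UniformC11At w a b x t) :
    UniformC11At (fun x t ↦ -w (-x) t) a b (-x) t := by
  obtain ⟨r, hr, n, hn⟩ := h
  exact ⟨r, hr, n, fun s hs hst ↦ (hn s hs hst).comp_neg.neg.mono le_rfl (by linarith)
    (by linarith)⟩

theorem comp_neg_neg (h : UniformC11At w a b x t) :
    UniformC11At (fun x t ↦ w (-x) (-t)) (-b) (-a) (-x) (-t) := by
  obtain ⟨r, hr, n, hn⟩ := h
  refine ⟨r, hr, n, fun s hs hst ↦ ?_⟩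
  have hst' : |-s - t| < r := by rwa [← abs_neg, neg_sub', neg_neg]
  exact (hn (-s) (neg_mem_Icc_iff.2 hs) hst').comp_neg.mono le_rfl (by linarith) (by linarith)

theorem isOpen_setOf (w : ℝ → ℝ → ℝ) (a b : ℝ) :
    IsOpen {p : ℝ × ℝ | UniformC11At w a b p.1 p.2} := by
  rw [Metric.isOpen_iff]
  rintro ⟨x, t⟩ ⟨r, hr, n, hn⟩
  refine ⟨r / 2, by positivity, fun ⟨y, s⟩ hys ↦ ⟨r / 2, by positivity, n, fun u hu hus ↦ ?_⟩⟩
  rw [Metric.mem_ball, Prod.dist_eq, max_lt_iff, Real.dist_eq, Real.dist_eq] at hys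
  obtain ⟨hyx, hst⟩ := hys
  dsimp only at hyx hst hus ⊢
  rw [abs_lt] at hyx hst hus
  exact (hn u hu (abs_lt.2 ⟨by linarith, by linarith⟩)).mono le_rfl (by linarith) (by linarith)

end UniformC11At

namespace IsSliceBurgers

variable {w : ℝ → ℝ → ℝ} {a b : ℝ}

theorem differentiable (hw : IsSliceBurgers w a b) {t : ℝ} (ht : t ∈ Icc a b) :
    Differentiable ℝ fun x ↦ w x t :=
  (hw.contDiff t ht).differentiable (by norm_num)

theorem continuousOn (hw : IsSliceBurgers w a b) (x : ℝ) :
    ContinuousOn (fun s ↦ w x s) (Icc a b) :=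
  fun t ht ↦ (hw.hasDeriv x t ht).continuousWithinAt

theorem neg_comp_neg (hw : IsSliceBurgers w a b) :
    IsSliceBurgers (fun x t ↦ -w (-x) t) a b := by
  refine ⟨fun t ht ↦ ((hw.contDiff t ht).comp contDiff_neg).neg, fun x t ht ↦ ?_⟩
  refine (hw.hasDeriv (-x) t ht).neg.congr_deriv ?_
  rw [deriv.fun_neg, deriv_comp_neg fun y ↦ w y t, neg_neg, neg_mul]

theorem comp_neg_neg (hw : IsSliceBurgers w a b) :
    IsSliceBurgers (fun x t ↦ w (-x) (-t)) (-b) (-a) := by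
  have hneg : MapsTo Neg.neg (Icc (-b) (-a)) (Icc a b) := fun t ht ↦ neg_mem_Icc_iff.2 ht
  refine ⟨fun t ht ↦ (hw.contDiff _ (hneg ht)).comp contDiff_neg, fun x t ht ↦ ?_⟩
  refine ((hw.hasDeriv (-x) (-t) (hneg ht)).scomp t (hasDerivAt_neg t).hasDerivWithinAt
    hneg).congr_deriv ?_
  rw [deriv_comp_neg fun y ↦ w y (-t), smul_eq_mul, neg_one_mul, mul_neg]

theorem continuousWithinAt_deriv {x t : ℝ} (hw : IsSliceBurgers w a b) (ht : t ∈ Icc a b)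
    (hg : UniformC11At w a b x t) :
    ContinuousWithinAt (fun s ↦ deriv (fun y ↦ w y s) x) (Icc a b) t := by
  obtain ⟨r, hr, n, hn⟩ := hg
  have hx : x ∈ Ioo (x - r) (x + r) := ⟨by linarith, by linarith⟩
  refine continuousWithinAt_of_locally_uniform_approx_of_continuousWithinAt ht fun U hU ↦ ?_
  obtain ⟨ε, hε, hεU⟩ := Metric.mem_uniformity_dist.1 hU
  obtain ⟨k, ⟨hnk, hkr⟩, hk⟩ : ∃ k : ℝ, (n * k < ε ∧ k < r) ∧ 0 < k := by
    have hlim : Tendsto (fun k ↦ n * k) (𝓝[>] 0) (𝓝 0) :=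
      ((continuous_const_mul n).tendsto' 0 0 (mul_zero n)).mono_left nhdsWithin_le_nhds
    exact (((hlim.eventually_lt_const hε).and
      ((eventually_lt_nhds hr).filter_mono nhdsWithin_le_nhds)).and self_mem_nhdsWithin).exists
  have hxk : x + k ∈ Ioo (x - r) (x + r) := ⟨by linarith, by linarith⟩
  refine ⟨Icc a b ∩ Metric.ball t r, inter_mem self_mem_nhdsWithin
    (mem_nhdsWithin_of_mem_nhds (Metric.ball_mem_nhds t hr)), fun s ↦ (w (x + k) s - w x s) / k,
    ((hw.continuousOn (x + k) t ht).sub (hw.continuousOn x t ht)).div_const k,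
    fun s ⟨hs, hst⟩ ↦ hεU ?_⟩
  have htaylor := (hn s hs hst).abs_taylor_le (hw.differentiable hs) hx hxk
  rw [Real.dist_eq, abs_sub_comm]
  refine lt_of_mul_lt_mul_right ?_ hk.le
  calc |(w (x + k) s - w x s) / k - deriv (fun y ↦ w y s) x| * k
      = |w (x + k) s - w x s - (x + k - x) * deriv (fun y ↦ w y s) x| := by
        rw [← abs_of_pos hk, ← abs_mul, abs_of_pos hk]
        congr 1
        field_simp
        ring
    _ ≤ n * (x + k - x) ^ 2 := htaylor
    _ = n * k * k := by ring
    _ < ε * k := by gcongr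

theorem hasDerivWithinAt_line {x t : ℝ} (hw : IsSliceBurgers w a b) (ht : t ∈ Icc a b)
    (hg : UniformC11At w a b x t) (c : ℝ) :
    HasDerivWithinAt (fun s ↦ w (x - c * (s - t)) s)
      ((w x t - c) * deriv (fun y ↦ w y t) x) (Icc a b) t := by
  set D : ℝ → ℝ := fun s ↦ deriv (fun y ↦ w y s) x
  have hD : ContinuousWithinAt D (Icc a b) t := hw.continuousWithinAt_deriv ht hg
  obtain ⟨r, hr, n, hn⟩ := hg
  have htaylor : (fun s ↦ w (x - c * (s - t)) s - w x s + c * (s - t) * D s)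
      =o[𝓝[Icc a b] t] fun s ↦ s - t := by
    refine (Asymptotics.IsBigO.of_bound (n * c ^ 2) ?_).trans_isLittleO
      (isLittleO_sq_sub_nhdsWithin (Icc a b) t)
    have hline : Tendsto (fun s ↦ x - c * (s - t)) (𝓝 t) (𝓝 x) :=
      (by fun_prop : Continuous fun s ↦ x - c * (s - t)).tendsto' t x (by simp)
    filter_upwards [self_mem_nhdsWithin,
      mem_nhdsWithin_of_mem_nhds (Metric.ball_mem_nhds t hr), mem_nhdsWithin_of_mem_nhds
        (hline (Ioo_mem_nhds (sub_lt_self x hr) (lt_add_of_pos_right x hr)))] with s hs hst hline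
    have := (hn s hs hst).abs_taylor_le (hw.differentiable hs) (x := x)
      ⟨by linarith, by linarith⟩ hline
    rw [sub_sub_cancel_left, neg_mul, sub_neg_eq_add, neg_sq, mul_pow, ← mul_assoc] at this
    simpa only [Real.norm_eq_abs, abs_pow, sq_abs] using this
  have hvar : (fun s ↦ c * (s - t) * (D s - D t)) =o[𝓝[Icc a b] t] fun s ↦ s - t := by
    have hD0 : (fun s ↦ D s - D t) =o[𝓝[Icc a b] t] fun _ ↦ (1 : ℝ) :=
      (Asymptotics.isLittleO_one_iff ℝ).2 (tendsto_sub_nhds_zero_iff.2 hD)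
    simpa using ((Asymptotics.isBigO_refl (fun s ↦ s - t) (𝓝[Icc a b] t)).const_mul_left
      c).mul_isLittleO hD0
  have hspace : HasDerivWithinAt (fun s ↦ w (x - c * (s - t)) s - w x s) (-c * D t)
      (Icc a b) t := by
    rw [hasDerivWithinAt_iff_isLittleO]
    refine (htaylor.sub hvar).congr_left fun s ↦ ?_
    simp only [sub_self, mul_zero, sub_zero, smul_eq_mul]
    ring
  have hsum := (hw.hasDeriv x t ht).fun_add hspace
  simp only [add_sub_cancel] at hsum
  exact hsum.congr_deriv (by ring)

theorem exists_abs_deriv_le_of_isCompact (hw : IsSliceBurgers w a b) {S : Set ℝ}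
    (hS : IsCompact S) (hSab : S ⊆ Icc a b) {γ : ℝ → ℝ} (hγ : Continuous γ)
    (hg : ∀ u ∈ S, UniformC11At w a b (γ u) u) :
    ∃ K, ∀ u ∈ S, |deriv (fun y ↦ w y u) (γ u)| ≤ K := by
  suffices ∃ K, ∀ u ∈ S, u ∈ S → |deriv (fun y ↦ w y u) (γ u)| ≤ K from
    this.imp fun K h u hu ↦ h u hu hu
  refine hS.induction_on
    (p := fun T ↦ ∃ K, ∀ u ∈ T, u ∈ S → |deriv (fun y ↦ w y u) (γ u)| ≤ K) ⟨0, by simp⟩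
    (fun T T' hT ⟨K, h⟩ ↦ ⟨K, fun u hu ↦ h u (hT hu)⟩)
    (fun T T' ⟨K, h⟩ ⟨K', h'⟩ ↦ ⟨max K K', fun u hu huS ↦ hu.elim
      (fun hu ↦ (h u hu huS).trans (le_max_left _ _))
      (fun hu ↦ (h' u hu huS).trans (le_max_right _ _))⟩) fun u hu ↦ ?_
  obtain ⟨r, hr, n, hn⟩ := hg u hu
  refine ⟨_, mem_nhdsWithin_of_mem_nhds (inter_mem (hγ.continuousAt (Ioo_mem_nhds
    (sub_lt_self (γ u) hr) (lt_add_of_pos_right (γ u) hr))) (Metric.ball_mem_nhds u hr)), n, ?_⟩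
  rintro v ⟨hγv, hvu⟩ hv
  exact (hn v (hSab hv) hvu).abs_deriv_le (hw.differentiable (hSab hv)) hγv

section UniformRectangle

variable {l r : ℝ} {J : Set ℝ}

theorem eq_on_line (hw : IsSliceBurgers w a b) (hJ : J.OrdConnected) (hJab : J ⊆ Icc a b)
    (hg : ∀ y ∈ Icc l r, ∀ u ∈ J, UniformC11At w a b y u) {x s t : ℝ} (ht : t ∈ J) (hs : s ∈ J)
    (hx : x ∈ Icc l r) (hy : x - w x t * (s - t) ∈ Icc l r) :
    w (x - w x t * (s - t)) s = w x t := by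
  set c := w x t with hc
  have hts : uIcc t s ⊆ J := hJ.uIcc_subset ht hs
  have hline : ∀ u ∈ uIcc t s, UniformC11At w a b (x - c * (u - t)) u := fun u hu ↦
    hg _ (line_mem_of_mem_uIcc (convex_Icc l r) hx hy hu) u (hts hu)
  have hderiv : ∀ u ∈ uIcc t s, HasDerivWithinAt (fun u ↦ w (x - c * (u - t)) u - c)
      ((w (x - c * (u - t)) u - c) * deriv (fun y ↦ w y u) (x - c * (u - t))) (uIcc t s) u := by
    intro u hu
    have hshift (v : ℝ) : x - c * (u - t) - c * (v - u) = x - c * (v - t) := by ring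
    simpa only [hshift] using ((hw.hasDerivWithinAt_line (hJab (hts hu)) (hline u hu) c).mono
      (hts.trans hJab)).sub_const c
  obtain ⟨K, hK⟩ := hw.exists_abs_deriv_le_of_isCompact isCompact_uIcc (hts.trans hJab)
    (γ := fun u ↦ x - c * (u - t)) (by fun_prop) hline
  refine sub_eq_zero.1 (eq_zero_of_abs_hasDerivWithinAt_le (K := K)
    (g := fun u ↦ w (x - c * (u - t)) u - c) hderiv (fun u hu ↦ ?_) ?_)
  · rw [abs_mul, mul_comm]
    exact mul_le_mul_of_nonneg_right (hK u hu) (abs_nonneg _)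
  · simp [hc]

theorem eq_of_lines_cross (hw : IsSliceBurgers w a b) (hJ : J.OrdConnected) (hJab : J ⊆ Icc a b)
    (hg : ∀ y ∈ Icc l r, ∀ u ∈ J, UniformC11At w a b y u) {x z s t u : ℝ} (hs : s ∈ J)
    (ht : t ∈ J) (hu : u ∈ J) (hx : x ∈ Icc l r) (hz : z ∈ Icc l r)
    (hy : z - w z t * (u - t) ∈ Icc l r)
    (hcross : x - w x s * (u - s) = z - w z t * (u - t)) : w x s = w z t := by
  rw [← hw.eq_on_line hJ hJab hg ht hu hz hy, ← hcross,
    hw.eq_on_line hJ hJab hg hs hu hx (hcross ▸ hy)]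

end UniformRectangle

end IsSliceBurgers

theorem exists_crossing_time {g : ℝ → ℝ} {m c δ s₁ t : ℝ} (hg : Tendsto g (𝓝[>] s₁) (𝓝 m))
    (hmc : m < c) (hδ : 0 < δ) (hδt : δ < (c - m) * (t - s₁)) :
    ∃ s ∈ Ioc s₁ t, g s < c ∧ ∃ σ ∈ Ioc s₁ t, g s * (σ - s) + δ = c * (σ - s₁) := by
  have hcm : 0 < c - m := sub_pos.2 hmc
  have hst : s₁ < t := sub_pos.1 (pos_of_mul_pos_right (hδ.trans hδt) hcm.le)
  have hid : Tendsto (fun s ↦ s - s₁) (𝓝[>] s₁) (𝓝 0) :=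
    ((continuous_sub_right s₁).tendsto' s₁ 0 (sub_self s₁)).mono_left nhdsWithin_le_nhds
  have hφ : Tendsto (fun s ↦ (δ - g s * (s - s₁)) / (c - g s)) (𝓝[>] s₁) (𝓝 (δ / (c - m))) := by
    have hnum := (tendsto_const_nhds (x := δ)).sub (hg.mul hid)
    rw [mul_zero, sub_zero] at hnum
    exact hnum.div (tendsto_const_nhds.sub hg) hcm.ne'
  obtain ⟨s, hgs, hs, hφ0, hφt⟩ := ((hg.eventually_lt_const hmc).and
    ((eventually_mem_set.2 (Ioc_mem_nhdsGT hst)).and ((hφ.eventually_const_lt (div_pos hδ hcm)).and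
      (hφ.eventually_lt_const ((div_lt_iff₀' hcm).2 hδt))))).exists
  refine ⟨s, hs, hgs, s₁ + (δ - g s * (s - s₁)) / (c - g s), ⟨by linarith, by linarith⟩, ?_⟩
  have : c - g s ≠ 0 := (sub_pos.2 hgs).ne'
  field_simp
  ring

theorem exists_last_time_notMem {G : Set (ℝ × ℝ)} (hG : IsOpen G) {l r q t : ℝ} (hqt : q ≤ t) :
    ∃ s ∈ Icc q t, (s = q ∨ ∃ x ∈ Icc l r, (x, s) ∉ G) ∧
      ∀ y ∈ Icc l r, ∀ u ∈ Ioc s t, (y, u) ∈ G := by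
  set T : Set ℝ := insert q (Prod.snd '' ((Icc l r ×ˢ Icc q t) ∩ Gᶜ)) with hT
  have hTc : IsCompact T := (((isCompact_Icc.prod isCompact_Icc).inter_right
    hG.isClosed_compl).image continuous_snd).insert q
  obtain ⟨s, hsT, hs⟩ := hTc.exists_isGreatest ⟨q, mem_insert _ _⟩
  have hqs : q ≤ s := hs (mem_insert _ _)
  refine ⟨s, ?_, ?_, fun y hy u hu ↦ ?_⟩
  · rcases hsT with rfl | ⟨p, hp, rfl⟩
    exacts [⟨le_rfl, hqt⟩, hp.1.2]
  · exact hsT.imp_right fun ⟨p, hp, hps⟩ ↦ ⟨p.1, hp.1.1, hps ▸ hp.2⟩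
  · by_contra hyu
    exact hu.1.not_ge (hs (Or.inr ⟨(y, u), ⟨⟨hy, hqs.trans hu.1.le, hu.2⟩, hyu⟩, rfl⟩))

namespace IsSliceBurgers

variable {w : ℝ → ℝ → ℝ} {a b : ℝ}

section Foot

variable {l r s₁ t : ℝ}

theorem le_apply_foot (hw : IsSliceBurgers w a b) (hs₁ : a ≤ s₁) (ht : t ≤ b) (hst : s₁ < t)
    (hg : ∀ y ∈ Icc l r, ∀ u ∈ Ioc s₁ t, UniformC11At w a b y u) {z : ℝ} (hz : z ∈ Icc l r)
    (hl : l < z + (t - s₁) * w z t) (hr : z + (t - s₁) * w z t ≤ r) :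
    w z t ≤ w (z + (t - s₁) * w z t) s₁ := by
  set c := w z t
  set x₀ := z + (t - s₁) * c with hx₀
  by_contra! hlt
  have hs₁m : s₁ ∈ Icc a b := ⟨hs₁, hst.le.trans ht⟩
  have hJ : Ioc s₁ t ⊆ Icc a b := fun u hu ↦ ⟨hs₁.trans hu.1.le, hu.2.trans ht⟩
  have hcont : Tendsto (fun x ↦ w x s₁) (𝓝 x₀) (𝓝 (w x₀ s₁)) :=
    (hw.differentiable hs₁m).continuous.tendsto x₀
  have hgap : Tendsto (fun x ↦ x₀ - x - (c - w x s₁) * (t - s₁)) (𝓝 x₀)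
      (𝓝 (x₀ - x₀ - (c - w x₀ s₁) * (t - s₁))) :=
    (tendsto_const_nhds.sub tendsto_id).sub ((tendsto_const_nhds.sub hcont).mul_const _)
  obtain ⟨x₁, ⟨hlx₁, hx₁c, hx₁t⟩, hx₁x₀ : x₁ < x₀⟩ :=
    ((((eventually_gt_nhds hl).and ((hcont.eventually_lt_const hlt).and
      (hgap.eventually_lt_const (by nlinarith : _ < (0 : ℝ))))).filter_mono
        (nhdsWithin_le_nhds (s := Iio x₀))).and self_mem_nhdsWithin).exists
  have hlim : Tendsto (fun s ↦ w x₁ s) (𝓝[>] s₁) (𝓝 (w x₁ s₁)) :=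
    (hw.continuousOn x₁ s₁ hs₁m).tendsto.mono_left
      (nhdsWithin_le_of_mem (mem_of_superset (Ioc_mem_nhdsGT hst) hJ))
  obtain ⟨s, hs, hsc, σ, hσ, hcross⟩ :=
    exists_crossing_time (t := t) hlim hx₁c (sub_pos.2 hx₁x₀) (by linarith)
  have hσm : z - c * (σ - t) ∈ Icc l r := by
    refine line_mem_of_mem_uIcc (convex_Icc l r) hz (s := s₁) ?_ ?_
    · rw [show z - c * (s₁ - t) = x₀ by rw [hx₀]; ring]
      exact ⟨hl.le, hr⟩
    · rw [uIcc_of_ge hst.le]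
      exact Ioc_subset_Icc_self hσ
  exact hsc.ne (hw.eq_of_lines_cross ordConnected_Ioc hJ hg hs ⟨hst, le_rfl⟩ hσ
    ⟨hlx₁.le, hx₁x₀.le.trans hr⟩ hz hσm (by linarith))

theorem uniformC11At_neg_comp_neg
    (hg : ∀ y ∈ Icc l r, ∀ u ∈ Ioc s₁ t, UniformC11At w a b y u) :
    ∀ y ∈ Icc (-r) (-l), ∀ u ∈ Ioc s₁ t, UniformC11At (fun x t ↦ -w (-x) t) a b y u :=
  fun y hy u hu ↦ by simpa using (hg (-y) (neg_mem_Icc_iff.2 hy) u hu).neg_comp_neg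

theorem apply_foot_le (hw : IsSliceBurgers w a b) (hs₁ : a ≤ s₁) (ht : t ≤ b) (hst : s₁ < t)
    (hg : ∀ y ∈ Icc l r, ∀ u ∈ Ioc s₁ t, UniformC11At w a b y u) {z : ℝ} (hz : z ∈ Icc l r)
    (hl : l ≤ z + (t - s₁) * w z t) (hr : z + (t - s₁) * w z t < r) :
    w (z + (t - s₁) * w z t) s₁ ≤ w z t := by
  have h := hw.neg_comp_neg.le_apply_foot hs₁ ht hst (uniformC11At_neg_comp_neg hg) (z := -z)
    (neg_mem_Icc_iff.2 (by simpa using hz))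
  simp only [neg_neg, mul_neg, neg_add_rev] at h
  rw [← neg_le_neg_iff, add_comm z]
  exact h (by linarith) (by linarith)

theorem le_of_boundary_le (hw : IsSliceBurgers w a b) (hs₁ : a ≤ s₁) (ht : t ≤ b)
    (hg : ∀ y ∈ Icc l r, ∀ u ∈ Ioc s₁ t, UniformC11At w a b y u) {K : ℝ} (hK : 0 ≤ K)
    (hr : ∀ u ∈ Icc s₁ t, w r u ≤ K) (h0 : ∀ y ∈ Icc l r, w y s₁ ≤ K) :
    ∀ y ∈ Icc l r, ∀ u ∈ Ioc s₁ t, w y u ≤ K := by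
  intro x hx u hu
  by_contra! hlt
  set c := w x u
  have hc : 0 < c := hK.trans_lt hlt
  have hcu : 0 < (u - s₁) * c := mul_pos (sub_pos.2 hu.1) hc
  rcases le_or_gt (x + (u - s₁) * c) r with hfoot | hfoot
  · -- the characteristic through `(x, u)` reaches the initial time inside the rectangle
    have := hw.le_apply_foot hs₁ (hu.2.trans ht) hu.1
      (fun y hy v hv ↦ hg y hy v ⟨hv.1, hv.2.trans hu.2⟩) hx (by linarith [hx.1]) hfoot
    linarith [h0 _ ⟨by linarith [hx.1], hfoot⟩]
  · -- the characteristic through `(x, u)` leaves the rectangle through the side `{r} × (s₁, u]`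
    have hv : u - (r - x) / c ∈ Ioc s₁ t := by
      have hexit : (r - x) / c < u - s₁ := by rw [div_lt_iff₀ hc]; linarith
      have : 0 ≤ (r - x) / c := div_nonneg (sub_nonneg.2 hx.2) hc.le
      exact ⟨by linarith, by linarith [hu.2]⟩
    have hxr : x - c * (u - (r - x) / c - u) = r := by field_simp; ring
    have := hw.eq_on_line ordConnected_Ioc (fun z hz ↦ ⟨hs₁.trans hz.1.le, hz.2.trans ht⟩) hg hu
      hv hx (by rw [hxr]; exact ⟨hx.1.trans hx.2, le_rfl⟩)
    rw [hxr] at this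
    linarith [hr _ (Ioc_subset_Icc_self hv)]

theorem abs_le_of_boundary (hw : IsSliceBurgers w a b) (hs₁ : a ≤ s₁) (ht : t ≤ b)
    (hg : ∀ y ∈ Icc l r, ∀ u ∈ Ioc s₁ t, UniformC11At w a b y u) {K : ℝ} (hK : 0 ≤ K)
    (hside : ∀ u ∈ Icc s₁ t, |w l u| ≤ K ∧ |w r u| ≤ K) (h0 : ∀ y ∈ Icc l r, |w y s₁| ≤ K) :
    ∀ y ∈ Icc l r, ∀ u ∈ Ioc s₁ t, |w y u| ≤ K := by
  intro y hy u hu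
  refine abs_le'.2 ⟨hw.le_of_boundary_le hs₁ ht hg hK
    (fun u hu ↦ (le_abs_self _).trans (hside u hu).2)
    (fun y hy ↦ (le_abs_self _).trans (h0 y hy)) y hy u hu, ?_⟩
  simpa using hw.neg_comp_neg.le_of_boundary_le hs₁ ht (uniformC11At_neg_comp_neg hg) hK
    (fun u hu ↦ by simpa using (neg_le_abs _).trans (hside u hu).1)
    (fun y hy ↦ (neg_le_abs _).trans (h0 (-y) (neg_mem_Icc_iff.2 hy))) (-y)
    (neg_mem_Icc_iff.2 (by simpa using hy)) u hu

theorem c11On_of_uniformC11At (hw : IsSliceBurgers w a b) (hs₁ : a ≤ s₁) (ht : t ≤ b)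
    (hst : s₁ < t) (hg : ∀ y ∈ Icc l r, ∀ u ∈ Ioc s₁ t, UniformC11At w a b y u)
    {l₀ r₀ n K η : ℝ} (hn : 0 ≤ n) (hnK : n ≤ K)
    (hK : ∀ u ∈ Icc a b, |w l u| ≤ K ∧ |w r u| ≤ K) (hl : l₀ < l) (hr : r < r₀)
    (hW : C11On (fun x ↦ w x s₁) n l₀ r₀) (hη : K * (t - s₁) < η) (hnt : n * (t - s₁) ≤ 1 / 2) :
    C11On (fun x ↦ w x t) (8 * n) (l + η) (r - η) := by
  have htm : t ∈ Icc a b := ⟨hs₁.trans hst.le, ht⟩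
  have hs₁m : s₁ ∈ Icc a b := ⟨hs₁, hst.le.trans ht⟩
  have hη0 : 0 < η := (mul_nonneg (hn.trans hnK) (sub_nonneg.2 hst.le)).trans_lt hη
  have hbound := hw.abs_le_of_boundary hs₁ ht hg (hn.trans hnK)
    (fun u hu ↦ hK u ⟨hs₁.trans hu.1, hu.2.trans ht⟩)
    (fun y hy ↦ (hW.abs_le y ⟨by linarith [hy.1], by linarith [hy.2]⟩).trans hnK)
  have hmem : ∀ x ∈ Ioo (l + η) (r - η), x ∈ Icc l r := fun x hx ↦
    ⟨by linarith [hx.1], by linarith [hx.2]⟩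
  have hfoot : ∀ x ∈ Ioo (l + η) (r - η), x + (t - s₁) * w x t ∈ Ioo l r := fun x hx ↦ by
    have hshift : |(t - s₁) * w x t| < η := by
      rw [abs_mul, abs_of_pos (sub_pos.2 hst), mul_comm]
      exact (mul_le_mul_of_nonneg_right (hbound x (hmem x hx) t ⟨hst, le_rfl⟩)
        (sub_nonneg.2 hst.le)).trans_lt hη
    obtain ⟨h1, h2⟩ := abs_lt.1 hshift
    exact ⟨by linarith [hx.1], by linarith [hx.2]⟩
  refine .of_implicit (hw.differentiable htm) (hw.differentiable hs₁m) (sub_nonneg.2 hst.le) hnt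
    hn hW (fun x hx ↦ Ioo_subset_Ioo hl.le hr.le (hfoot x hx)) fun x hx ↦ le_antisymm ?_ ?_
  · exact hw.le_apply_foot hs₁ ht hst hg (hmem x hx) (hfoot x hx).1 (hfoot x hx).2.le
  · exact hw.apply_foot_le hs₁ ht hst hg (hmem x hx) (hfoot x hx).1.le (hfoot x hx).2

end Foot

theorem exists_sides_bound (hw : IsSliceBurgers w a b) (l r n : ℝ) :
    ∃ K, n ≤ K ∧ ∀ u ∈ Icc a b, |w l u| ≤ K ∧ |w r u| ≤ K := by
  obtain ⟨K, hK⟩ := isCompact_Icc.exists_bound_of_continuousOn (hw.continuousOn l)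
  obtain ⟨K', hK'⟩ := isCompact_Icc.exists_bound_of_continuousOn (hw.continuousOn r)
  exact ⟨max n (max K K'), le_max_left _ _, fun u hu ↦
    ⟨(hK u hu).trans (by simp), (hK' u hu).trans (by simp)⟩⟩

theorem exists_c11On_forward (hw : IsSliceBurgers w a b) {l r l₀ r₀ q d n η : ℝ}
    (hq : q ∈ Icc a b) (hd : 0 < d) (hn : 0 ≤ n) (hl : l₀ < l) (hr : r < r₀) (hη : 0 < η)
    (hqn : C11On (fun x ↦ w x q) n l₀ r₀)
    (hbad : ∀ t ∈ Icc a b, t ∈ Icc q (q + d) → ∀ x ∈ Icc l r, ¬UniformC11At w a b x t →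
      C11On (fun x ↦ w x t) n l₀ r₀) :
    ∃ δ > 0, ∃ n', ∀ t ∈ Icc a b, t ∈ Icc q (q + δ) →
      C11On (fun x ↦ w x t) n' (l + η) (r - η) := by
  obtain ⟨K, hnK, hK⟩ := hw.exists_sides_bound l r n
  obtain ⟨δ, ⟨hδd, hδη, hδn⟩, hδ⟩ : ∃ δ : ℝ, (δ < d ∧ K * δ < η ∧ n * δ < 1 / 2) ∧ 0 < δ := by
    have hlim (k : ℝ) : Tendsto (fun δ ↦ k * δ) (𝓝 0) (𝓝 0) :=
      (continuous_const_mul k).tendsto' 0 0 (mul_zero k)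
    exact ((((eventually_lt_nhds hd).and (((hlim K).eventually_lt_const hη).and
      ((hlim n).eventually_lt_const one_half_pos))).filter_mono
        (nhdsWithin_le_nhds (s := Ioi 0))).and self_mem_nhdsWithin).exists
  refine ⟨δ, hδ, 8 * n, fun t ht htq ↦ ?_⟩
  obtain ⟨s₁, hs₁, hs₁bad, hgood⟩ :=
    exists_last_time_notMem (UniformC11At.isOpen_setOf w a b) (l := l) (r := r) htq.1
  have hW : C11On (fun x ↦ w x s₁) n l₀ r₀ := by
    rcases hs₁bad with rfl | ⟨x, hx, hxs⟩
    · exact hqn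
    · exact hbad s₁ ⟨hq.1.trans hs₁.1, hs₁.2.trans ht.2⟩
        ⟨hs₁.1, by linarith [hs₁.2, htq.2]⟩ x hx hxs
  rcases hs₁.2.eq_or_lt with rfl | hst
  · exact hW.mono (by linarith) (by linarith) (by linarith)
  have hle {k : ℝ} (hk : 0 ≤ k) : k * (t - s₁) ≤ k * δ :=
    mul_le_mul_of_nonneg_left (by linarith [htq.2, hs₁.1]) hk
  exact hw.c11On_of_uniformC11At (hq.1.trans hs₁.1) ht.2 hst hgood hn hnK hK hl hr hW
    ((hle (hn.trans hnK)).trans_lt hδη) ((hle hn).trans hδn.le)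

theorem exists_c11On_backward (hw : IsSliceBurgers w a b) {l r l₀ r₀ q d n η : ℝ}
    (hq : q ∈ Icc a b) (hd : 0 < d) (hn : 0 ≤ n) (hl : l₀ < l) (hr : r < r₀) (hη : 0 < η)
    (hqn : C11On (fun x ↦ w x q) n l₀ r₀)
    (hbad : ∀ t ∈ Icc a b, t ∈ Icc (q - d) q → ∀ x ∈ Icc l r, ¬UniformC11At w a b x t →
      C11On (fun x ↦ w x t) n l₀ r₀) :
    ∃ δ > 0, ∃ n', ∀ t ∈ Icc a b, t ∈ Icc (q - δ) q →
      C11On (fun x ↦ w x t) n' (l + η) (r - η) := by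
  have hIcc {c t : ℝ} (ht : t ∈ Icc (-q) (-q + c)) : -t ∈ Icc (q - c) q :=
    ⟨by linarith [ht.2], by linarith [ht.1]⟩
  obtain ⟨δ, hδ, n', hn'⟩ := hw.comp_neg_neg.exists_c11On_forward (q := -q) (l := -r) (r := -l)
    (neg_mem_Icc_iff.2 (by simpa using hq)) hd hn (neg_lt_neg hr) (neg_lt_neg hl) hη
    (by simpa using hqn.comp_neg) fun t ht htq x hx hxt ↦
      (hbad (-t) (neg_mem_Icc_iff.2 ht) (hIcc htq) (-x) (neg_mem_Icc_iff.2 hx) fun h ↦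
        hxt (by simpa using h.comp_neg_neg)).comp_neg
  refine ⟨δ, hδ, n', fun t ht htq ↦ ?_⟩
  have := (hn' (-t) (neg_mem_Icc_iff.2 (by simpa using ht))
    ⟨by linarith [htq.2], by linarith [htq.1]⟩).comp_neg
  simp only [neg_neg] at this
  exact this.mono le_rfl (by linarith) (by linarith)

end IsSliceBurgers

namespace IsSliceBurgers

variable {w : ℝ → ℝ → ℝ} {a b : ℝ}

theorem uniformC11At_of_forall_not (hw : IsSliceBurgers w a b) {x₀ q n ρ : ℝ} (hq : q ∈ Icc a b)
    (hρ : 0 < ρ) (hn : 0 ≤ n)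
    (h : ∀ t ∈ Icc a b, |t - q| < ρ → ∀ x, |x - x₀| < ρ → ¬UniformC11At w a b x t →
      C11On (fun x ↦ w x t) n (x - ρ) (x + ρ)) : UniformC11At w a b x₀ q := by
  by_contra hbad
  have hσ : 0 < ρ / 4 := by positivity
  have hbox : ∀ t ∈ Icc a b, |t - q| ≤ ρ / 4 → ∀ x ∈ Icc (x₀ - ρ / 4) (x₀ + ρ / 4),
      ¬UniformC11At w a b x t → C11On (fun x ↦ w x t) n (x₀ - ρ / 2) (x₀ + ρ / 2) :=
    fun t ht htq x hx hxt ↦ (h t ht (htq.trans_lt (by linarith)) x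
      (abs_lt.2 ⟨by linarith [hx.1], by linarith [hx.2]⟩) hxt).mono le_rfl
        (by linarith [hx.2]) (by linarith [hx.1])
  have hqn := hbox q hq (by simpa using hσ.le) x₀ ⟨by linarith, by linarith⟩ hbad
  obtain ⟨δ₁, hδ₁, n₁, h₁⟩ := hw.exists_c11On_forward (l := x₀ - ρ / 4) (r := x₀ + ρ / 4)
    (η := ρ / 8) hq hσ hn (by linarith) (by linarith) (by positivity) hqn fun t ht htq ↦
      hbox t ht (abs_le.2 ⟨by linarith [htq.1], by linarith [htq.2]⟩)
  obtain ⟨δ₂, hδ₂, n₂, h₂⟩ := hw.exists_c11On_backward (l := x₀ - ρ / 4) (r := x₀ + ρ / 4)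
    (η := ρ / 8) hq hσ hn (by linarith) (by linarith) (by positivity) hqn fun t ht htq ↦
      hbox t ht (abs_le.2 ⟨by linarith [htq.1], by linarith [htq.2]⟩)
  refine hbad ⟨min (min δ₁ δ₂) (ρ / 8), by positivity, max n₁ n₂, fun s hs hsq ↦ ?_⟩
  obtain ⟨⟨hsδ₁, hsδ₂⟩, -⟩ : (|s - q| < δ₁ ∧ |s - q| < δ₂) ∧ |s - q| < ρ / 8 := by
    simpa only [lt_min_iff] using hsq
  have hρ8 : min (min δ₁ δ₂) (ρ / 8) ≤ ρ / 8 := min_le_right _ _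
  rcases le_total q s with hqs | hqs
  · exact (h₁ s hs ⟨hqs, by linarith [le_abs_self (s - q)]⟩).mono (le_max_left _ _)
      (by linarith) (by linarith)
  · exact (h₂ s hs ⟨by linarith [neg_abs_le (s - q)], hqs⟩).mono (le_max_right _ _)
      (by linarith) (by linarith)

theorem isClosed_setOf_c11On (hw : IsSliceBurgers w a b) {B : Set (ℝ × ℝ)}
    (hB : ∀ p ∈ B, p.2 ∈ Icc a b) (n r : ℝ) :
    IsClosed {p : B | C11On (fun x ↦ w x p.1.2) n (p.1.1 - r) (p.1.1 + r)} := by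
  have hc (y : ℝ) : Continuous fun p : B ↦ w y p.1.2 :=
    (hw.continuousOn y).comp_continuous (by fun_prop) fun p ↦ hB p.1 p.2
  exact isClosed_iff_frequently.2 fun p hp ↦ C11On.of_frequently (fun y ↦ (hc y).tendsto p)
    ((by fun_prop : Continuous fun p : B ↦ p.1.1 - r).tendsto p)
    ((by fun_prop : Continuous fun p : B ↦ p.1.1 + r).tendsto p) hp

-- By Baire, the closed set of points at which the conclusion fails carries a uniform bound near
-- one of its points `p`; the characteristics spread this bound to a full neighbourhood of `p`.
theorem uniformC11At (hw : IsSliceBurgers w a b) (x : ℝ) {t : ℝ} (ht : t ∈ Icc a b) :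
    UniformC11At w a b x t := by
  by_contra hxt
  set B : Set (ℝ × ℝ) := {p | p.2 ∈ Icc a b} ∩ {p | UniformC11At w a b p.1 p.2}ᶜ
  have hBc : IsClosed B := (isClosed_Icc.preimage continuous_snd).inter
    (UniformC11At.isOpen_setOf w a b).isClosed_compl
  have : CompleteSpace B := hBc.completeSpace_coe
  have : Nonempty B := ⟨⟨(x, t), ht, hxt⟩⟩
  have hB : ∀ p ∈ B, p.2 ∈ Icc a b := fun p hp ↦ hp.1
  have hcover : ⋃ m : ℕ, {p : B | C11On (fun x ↦ w x p.1.2) m (p.1.1 - 1 / (m + 1))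
      (p.1.1 + 1 / (m + 1))} = univ := eq_univ_of_forall fun p ↦ mem_iUnion.2 <| by
    obtain ⟨n, hn⟩ := C11On.exists_of_contDiff (hw.contDiff _ (hB p.1 p.2)) (p.1.1 - 1) (p.1.1 + 1)
    obtain ⟨m, hm⟩ := exists_nat_ge n
    have : 1 / ((m : ℝ) + 1) ≤ 1 := (div_le_one (by positivity)).2 (by simp)
    exact ⟨m, hn.mono hm (by linarith) (by linarith)⟩
  obtain ⟨m, ⟨⟨x₀, q⟩, hq, hbad⟩, hp⟩ := nonempty_interior_of_iUnion_of_closed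
    (fun m : ℕ ↦ hw.isClosed_setOf_c11On hB m (1 / (m + 1))) hcover
  obtain ⟨ρ, hρ, hball⟩ := Metric.mem_nhds_iff.1 (mem_interior_iff_mem_nhds.1 hp)
  refine hbad (hw.uniformC11At_of_forall_not (n := m) (ρ := min ρ (1 / (m + 1))) hq
    (by positivity) m.cast_nonneg fun s hs hsq y hy hys ↦ ?_)
  have hmem : (⟨(y, s), hs, hys⟩ : B) ∈ Metric.ball (⟨(x₀, q), hq, hbad⟩ : B) ρ := by
    rw [Metric.mem_ball, Subtype.dist_eq, Prod.dist_eq, max_lt_iff]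
    exact ⟨hy.trans_le (min_le_left _ _), hsq.trans_le (min_le_left _ _)⟩
  have hρm : min ρ (1 / ((m : ℝ) + 1)) ≤ 1 / (m + 1) := min_le_right _ _
  exact C11On.mono (hball hmem) le_rfl (by linarith) (by linarith)

theorem eq_apply_foot (hw : IsSliceBurgers w a b) (x : ℝ) {s t : ℝ} (hs : s ∈ Icc a b)
    (ht : t ∈ Icc a b) : w x t = w (x + (t - s) * w x t) s := by
  have h := hw.eq_on_line ordConnected_Icc Subset.rfl (fun y _ u hu ↦ hw.uniformC11At y hu)
    (l := min x (x - w x t * (s - t))) (r := max x (x - w x t * (s - t))) ht hs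
    ⟨min_le_left _ _, le_max_left _ _⟩ ⟨min_le_right _ _, le_max_right _ _⟩
  rw [← h]
  congr 1
  rw [h]
  ring

end IsSliceBurgers

/-- `f` is a `C³` function whose `C³` norm is at most `M`. -/
structure C3Bound (f : ℝ → ℝ) (M : ℝ) : Prop where
  contDiff : ContDiff ℝ 3 f
  abs_le : ∀ x, |f x| ≤ M
  abs_deriv_le : ∀ x, |deriv f x| ≤ M
  abs_deriv_deriv_le : ∀ x, |deriv (deriv f) x| ≤ M
  abs_deriv_deriv_deriv_le : ∀ x, |deriv (deriv (deriv f)) x| ≤ M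

namespace C3Bound

variable {f W : ℝ → ℝ} {M N τ : ℝ}

theorem of_iteratedDeriv (hf : ContDiff ℝ 3 f) (h : ∀ j ≤ 3, ∀ x, |iteratedDeriv j f x| ≤ M) :
    C3Bound f M where
  contDiff := hf
  abs_le x := by simpa using h 0 (by norm_num) x
  abs_deriv_le x := by simpa [iteratedDeriv_one] using h 1 (by norm_num) x
  abs_deriv_deriv_le x := by
    simpa [iteratedDeriv_succ, iteratedDeriv_one] using h 2 (by norm_num) x
  abs_deriv_deriv_deriv_le x := by
    simpa [iteratedDeriv_succ, iteratedDeriv_one] using h 3 le_rfl x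

theorem nonneg (hf : C3Bound f M) : 0 ≤ M :=
  (abs_nonneg _).trans (hf.abs_le 0)

theorem mono (hf : C3Bound f M) (hMN : M ≤ N) : C3Bound f N :=
  ⟨hf.contDiff, fun x ↦ (hf.abs_le x).trans hMN, fun x ↦ (hf.abs_deriv_le x).trans hMN,
    fun x ↦ (hf.abs_deriv_deriv_le x).trans hMN, fun x ↦ (hf.abs_deriv_deriv_deriv_le x).trans hMN⟩

theorem contDiff_deriv (hf : C3Bound f M) : ContDiff ℝ 2 (deriv f) :=
  hf.contDiff.deriv' (n := 2)

theorem contDiff_deriv_deriv (hf : C3Bound f M) : ContDiff ℝ 1 (deriv (deriv f)) :=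
  hf.contDiff_deriv.deriv' (n := 1)

theorem hasDerivAt (hf : C3Bound f M) (x : ℝ) : HasDerivAt f (deriv f x) x :=
  (hf.contDiff.differentiable (by norm_num) x).hasDerivAt

theorem hasDerivAt_deriv (hf : C3Bound f M) (x : ℝ) :
    HasDerivAt (deriv f) (deriv (deriv f) x) x :=
  (hf.contDiff_deriv.differentiable (by norm_num) x).hasDerivAt

theorem hasDerivAt_deriv_deriv (hf : C3Bound f M) (x : ℝ) :
    HasDerivAt (deriv (deriv f)) (deriv (deriv (deriv f)) x) x :=
  (hf.contDiff_deriv_deriv.differentiable (by norm_num) x).hasDerivAt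

theorem of_hasDerivAt {f₁ f₂ f₃ : ℝ → ℝ} (h₁ : ∀ x, HasDerivAt f (f₁ x) x)
    (h₂ : ∀ x, HasDerivAt f₁ (f₂ x) x) (h₃ : ∀ x, HasDerivAt f₂ (f₃ x) x) (hc : Continuous f₃)
    (b₀ : ∀ x, |f x| ≤ M) (b₁ : ∀ x, |f₁ x| ≤ M) (b₂ : ∀ x, |f₂ x| ≤ M) (b₃ : ∀ x, |f₃ x| ≤ M) :
    C3Bound f M := by
  obtain rfl : f₁ = deriv f := funext fun x ↦ (h₁ x).deriv.symm
  obtain rfl : f₂ = deriv (deriv f) := funext fun x ↦ (h₂ x).deriv.symm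
  obtain rfl : f₃ = deriv (deriv (deriv f)) := funext fun x ↦ (h₃ x).deriv.symm
  have c₂ : ContDiff ℝ 1 (deriv (deriv f)) :=
    contDiff_one_iff_deriv.2 ⟨fun x ↦ (h₃ x).differentiableAt, hc⟩
  have c₁ : ContDiff ℝ 2 (deriv f) :=
    (contDiff_succ_iff_deriv (n := 1)).2 ⟨fun x ↦ (h₂ x).differentiableAt, by simp, c₂⟩
  exact ⟨(contDiff_succ_iff_deriv (n := 2)).2 ⟨fun x ↦ (h₁ x).differentiableAt, by simp, c₁⟩,
    b₀, b₁, b₂, b₃⟩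

-- With `r = (1 - τ W'(p))⁻¹` and `p x = x + τ f x` one has `p' = r` and `r' = τ W''(p) r³`, so all
-- derivatives of `f` are polynomials in `r` and the derivatives of `W` at `p`.
theorem exists_hasDerivAt_of_implicit (hf : Differentiable ℝ f) (hW : C3Bound W N) (hτ : 0 ≤ τ)
    (hNτ : N * τ ≤ 1 / 2) (h : ∀ x, f x = W (x + τ * f x)) :
    ∃ p r : ℝ → ℝ, Continuous p ∧ Continuous r ∧ (∀ x, |r x| ≤ 2) ∧
      (∀ x, HasDerivAt f (deriv W (p x) * r x) x) ∧
      (∀ x, HasDerivAt (fun x ↦ deriv W (p x) * r x) (deriv (deriv W) (p x) * r x ^ 3) x) ∧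
      ∀ x, HasDerivAt (fun x ↦ deriv (deriv W) (p x) * r x ^ 3)
        (deriv (deriv (deriv W)) (p x) * r x ^ 4 +
          3 * τ * deriv (deriv W) (p x) ^ 2 * r x ^ 5) x := by
  set p : ℝ → ℝ := fun x ↦ x + τ * f x
  set r : ℝ → ℝ := fun x ↦ (1 - τ * deriv W (p x))⁻¹
  have hr0 (x : ℝ) : 1 - τ * deriv W (p x) ≠ 0 :=
    (one_half_pos.trans_le (half_le_one_sub_mul hτ (hW.abs_deriv_le _) hNτ)).ne'
  have hrr (x : ℝ) : (1 - τ * deriv W (p x)) * r x = 1 := mul_inv_cancel₀ (hr0 x)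
  have hf₁ (x : ℝ) : HasDerivAt f (deriv W (p x) * r x) x :=
    hasDerivAt_of_implicit (hf x) (hW.hasDerivAt _) (.of_forall h) (hr0 x)
  have hp (x : ℝ) : HasDerivAt p (r x) x :=
    ((hasDerivAt_id x).add ((hf₁ x).const_mul τ)).congr_deriv (by linear_combination -hrr x)
  have hr (x : ℝ) : HasDerivAt r (τ * deriv (deriv W) (p x) * r x ^ 3) x := by
    refine ((((hW.hasDerivAt_deriv (p x)).comp x (hp x)).const_mul τ).const_sub 1).fun_inv
      (hr0 x) |>.congr_deriv ?_
    simp only [Function.comp_apply, r, div_eq_mul_inv, ← inv_pow]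
    ring
  refine ⟨p, r, continuous_iff_continuousAt.2 fun x ↦ (hp x).continuousAt,
    continuous_iff_continuousAt.2 fun x ↦ (hr x).continuousAt,
    fun x ↦ abs_inv_one_sub_mul_le hτ (hW.abs_deriv_le _) hNτ, hf₁, fun x ↦ ?_, fun x ↦ ?_⟩
  · refine (((hW.hasDerivAt_deriv (p x)).comp x (hp x)).fun_mul (hr x)).congr_deriv ?_
    simp only [Function.comp_apply]
    linear_combination (-deriv (deriv W) (p x) * r x ^ 2) * hrr x
  · refine (((hW.hasDerivAt_deriv_deriv (p x)).comp x (hp x)).fun_mul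
      ((hr x).fun_pow 3)).congr_deriv ?_
    simp only [Function.comp_apply]
    ring

theorem of_implicit (hf : Differentiable ℝ f) (hW : C3Bound W N) (hτ : 0 ≤ τ)
    (hNτ : N * τ ≤ 1 / 2) (h : ∀ x, f x = W (x + τ * f x)) : C3Bound f (64 * N) := by
  obtain ⟨p, r, hp, hr, hr2, hf₁, hf₂, hf₃⟩ := exists_hasDerivAt_of_implicit hf hW hτ hNτ h
  have hN := hW.nonneg
  have hmul {u : ℝ} (k : ℕ) (x : ℝ) (hu : |u| ≤ N) : |u * r x ^ k| ≤ N * 2 ^ k := by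
    rw [abs_mul, abs_pow]
    gcongr
    exact hr2 x
  have hc₂ := hW.contDiff_deriv_deriv.continuous
  have hc₃ := hW.contDiff_deriv_deriv.continuous_deriv le_rfl
  refine of_hasDerivAt hf₁ hf₂ hf₃ (by fun_prop) (fun x ↦ ?_) (fun x ↦ ?_) (fun x ↦ ?_)
    fun x ↦ ?_
  · rw [h x]
    linarith [hW.abs_le (x + τ * f x)]
  · linarith [pow_one (r x) ▸ hmul 1 x (hW.abs_deriv_le (p x))]
  · linarith [hmul 3 x (hW.abs_deriv_deriv_le (p x))]
  · have hsq : |3 * τ * deriv (deriv W) (p x) ^ 2 * r x ^ 5| ≤ 3 * (N * τ) * (N * 2 ^ 5) :=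
      calc _ = 3 * (|deriv (deriv W) (p x)| * τ) * |deriv (deriv W) (p x) * r x ^ 5| := by
            rw [abs_mul, abs_mul, abs_mul, abs_mul, abs_of_nonneg hτ, abs_pow, abs_pow,
              abs_of_pos three_pos]
            ring
        _ ≤ _ := by
            gcongr
            exacts [hW.abs_deriv_deriv_le _, hmul 5 x (hW.abs_deriv_deriv_le _)]
    refine (abs_add_le _ _).trans ?_
    nlinarith [hmul 4 x (hW.abs_deriv_deriv_deriv_le (p x))]

end C3Bound

theorem periodic_of_implicit {f W : ℝ → ℝ} {N τ c : ℝ} (hW : Differentiable ℝ W)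
    (hN : ∀ x, |deriv W x| ≤ N) (hτ : 0 ≤ τ) (hNτ : N * τ ≤ 1 / 2)
    (h : ∀ x, f x = W (x + τ * f x)) (hc : Function.Periodic W c) : Function.Periodic f c := by
  intro x
  have hfc : f (x + c) = W (x + τ * f (x + c)) := by
    rw [← hc]
    conv_lhs => rw [h]
    congr 1
    ring
  have hle := abs_sub_le_of_hasDerivAt (fun y ↦ (hW y).hasDerivAt) hN (x + τ * f (x + c))
    (x + τ * f x)
  rw [← hfc, ← h x, add_sub_add_left_eq_sub, ← mul_sub, abs_mul, abs_of_nonneg hτ,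
    ← mul_assoc] at hle
  have : |f (x + c) - f x| = 0 := le_antisymm
    (by linarith [mul_le_mul_of_nonneg_right hNτ (abs_nonneg (f (x + c) - f x))]) (abs_nonneg _)
  exact sub_eq_zero.1 (abs_eq_zero.1 this)

namespace IsSliceBurgers

variable {w : ℝ → ℝ → ℝ} {a b N s t : ℝ}

theorem abs_sub_le (hw : IsSliceBurgers w a b) (hb : ∀ t ∈ Icc a b, C3Bound (fun x ↦ w x t) N)
    (hs : s ∈ Icc a b) (ht : t ∈ Icc a b) (x : ℝ) : |w x t - w x s| ≤ N ^ 2 * |t - s| := by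
  refine (convex_Icc a b).norm_image_sub_le_of_norm_hasDerivWithin_le
    (fun u hu ↦ hw.hasDeriv x u hu) (fun u hu ↦ ?_) hs ht
  rw [Real.norm_eq_abs, abs_mul, sq]
  exact mul_le_mul ((hb u hu).abs_le x) ((hb u hu).abs_deriv_le x) (abs_nonneg _) (hb u hu).nonneg

-- Interpolation: compare the derivatives with difference quotients of step `√|t - s|`.
theorem abs_deriv_sub_le (hw : IsSliceBurgers w a b)
    (hb : ∀ t ∈ Icc a b, C3Bound (fun x ↦ w x t) N) (hs : s ∈ Icc a b) (ht : t ∈ Icc a b) (x : ℝ) :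
    |deriv (fun y ↦ w y t) x - deriv (fun y ↦ w y s) x| ≤ (2 * N ^ 2 + 2 * N) * √|t - s| := by
  rcases eq_or_ne t s with rfl | hne
  · simp
  have hpos : 0 < |t - s| := abs_pos.2 (sub_ne_zero.2 hne)
  set σ := √|t - s|
  have hσpos : 0 < σ := Real.sqrt_pos.2 hpos
  have hσ2 : σ ^ 2 = |t - s| := Real.sq_sqrt hpos.le
  have htaylor : ∀ u ∈ Icc a b,
      |w (x + σ) u - w x u - σ * deriv (fun y ↦ w y u) x| ≤ N * σ ^ 2 := fun u hu ↦ by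
    simpa using abs_taylor_le convex_univ (fun y _ ↦ (hb u hu).hasDerivAt y) (fun y _ ↦
      abs_sub_le_of_hasDerivAt (hb u hu).hasDerivAt_deriv (hb u hu).abs_deriv_deriv_le y x)
      (mem_univ x) (mem_univ (x + σ))
  have ht₁ := abs_le.1 (htaylor t ht)
  have hs₁ := abs_le.1 (htaylor s hs)
  have hσx := abs_le.1 (hσ2 ▸ hw.abs_sub_le hb hs ht (x + σ))
  have hx := abs_le.1 (hσ2 ▸ hw.abs_sub_le hb hs ht x)
  set A := deriv (fun y ↦ w y t) x
  set B := deriv (fun y ↦ w y s) x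
  have hAB : σ * |A - B| ≤ σ * ((2 * N ^ 2 + 2 * N) * σ) := by
    rw [← abs_of_pos hσpos, ← abs_mul, abs_of_pos hσpos, abs_le]
    constructor <;> nlinarith
  exact le_of_mul_le_mul_left hAB hσpos

end IsSliceBurgers

/-! ### Maximum principle for nonlocal transport equations -/

theorem hasDerivWithinAt_nonneg_of_isMaxOn {f : ℝ → ℝ} {f' a b t : ℝ}
    (hf : HasDerivWithinAt f f' (Icc a b) t) (ht : t ∈ Ioc a b) (hmax : IsMaxOn f (Icc a b) t) :
    0 ≤ f' := by
  have hcone : a - t ∈ posTangentConeAt (Icc a b) t :=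
    sub_mem_posTangentConeAt_of_segment_subset ((convex_Icc a b).segment_subset
      ⟨ht.1.le, ht.2⟩ ⟨le_rfl, ht.1.le.trans ht.2⟩)
  have h := hmax.localize.hasFDerivWithinAt_nonpos hf.hasFDerivWithinAt hcone
  rw [ContinuousLinearMap.toSpanSingleton_apply, smul_eq_mul] at h
  exact nonneg_of_mul_nonpos_right h (sub_neg.2 ht.1)

theorem nonpos_of_isMaxOn {X : Type*} [TopologicalSpace X] {S : Set X} (hS : IsCompact S)
    {Z : X → ℝ → ℝ} {h : ℝ} (hZ : ContinuousOn (fun p : X × ℝ ↦ Z p.1 p.2) (S ×ˢ Icc 0 h))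
    (h0 : ∀ p ∈ S, Z p 0 ≤ 0)
    (hmax : ∀ t ∈ Ioc 0 h, ∀ p ∈ S, 0 < Z p t → IsMaxOn (fun q ↦ Z q t) S p →
      ∃ Z' ≤ 0, HasDerivWithinAt (Z p) Z' (Icc 0 h) t) :
    ∀ p ∈ S, ∀ t ∈ Icc 0 h, Z p t ≤ 0 := by
  intro p₁ hp₁ t₁ ht₁
  by_contra! hpos
  obtain ⟨δ, hδ, hδt⟩ : ∃ δ > 0, δ * t₁ < Z p₁ t₁ :=
    ⟨Z p₁ t₁ / (t₁ + 1), by have := ht₁.1; positivity, by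
      rw [div_mul_eq_mul_div, div_lt_iff₀ (by linarith [ht₁.1])]
      linarith⟩
  obtain ⟨⟨p, t⟩, ⟨hp, ht⟩, hpt⟩ := (hS.prod isCompact_Icc).exists_isMaxOn ⟨(p₁, t₁), hp₁, ht₁⟩
    (f := fun q ↦ Z q.1 q.2 - δ * q.2) (hZ.sub (by fun_prop))
  have hpt (q : X) (hq : q ∈ S) (s : ℝ) (hs : s ∈ Icc 0 h) : Z q s - δ * s ≤ Z p t - δ * t :=
    isMaxOn_iff.1 hpt (q, s) ⟨hq, hs⟩
  have hpos' : δ * t < Z p t := by linarith [hpt p₁ hp₁ t₁ ht₁]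
  have ht0 : t ∈ Ioc 0 h := by
    refine ⟨ht.1.lt_of_ne ?_, ht.2⟩
    rintro rfl
    linarith [h0 p hp]
  obtain ⟨Z', hZ', hderiv⟩ := hmax t ht0 p hp ((mul_pos hδ ht0.1).trans hpos') fun q hq ↦
    (sub_le_sub_iff_right _).1 (hpt q hq t ht)
  have := hasDerivWithinAt_nonneg_of_isMaxOn (t := t)
    (hderiv.sub ((hasDerivAt_id t).const_mul δ).hasDerivWithinAt) ht0 fun s hs ↦ hpt p hp s hs
  linarith

theorem transport_sub_le {a₀ a₁ b₀ b₁ g₀ g₁ d₀ d₁ I₀ I₁ A C G K N P k : ℝ} (hP : 0 ≤ P)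
    (hd : d₀ ≤ d₁) (hA : |d₀| ≤ A) (ha : |a₁ - a₀| ≤ N * k) (hb : |b₁| ≤ K)
    (hbl : |b₁ - b₀| ≤ C * k) (hgl : |g₁ - g₀| ≤ G * k) (hI : I₁ ≤ I₀) :
    a₁ * P + b₁ * d₁ + I₁ + g₁ - (a₀ * P + b₀ * d₀ + I₀ + g₀) ≤
      N * k * P + K * (d₁ - d₀) + (C * A + G) * k := by
  have haP : (a₁ - a₀) * P ≤ N * k * P := mul_le_mul_of_nonneg_right (abs_le.1 ha).2 hP
  have hbd : b₁ * (d₁ - d₀) ≤ K * (d₁ - d₀) :=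
    mul_le_mul_of_nonneg_right (abs_le.1 hb).2 (sub_nonneg.2 hd)
  have hbld : (b₁ - b₀) * d₀ ≤ C * k * A := by
    refine (le_abs_self _).trans ?_
    rw [abs_mul]
    exact mul_le_mul hbl hA (abs_nonneg _) ((abs_nonneg _).trans hbl)
  linarith [(abs_le.1 hgl).2]

/-- `d` is a periodic solution of `∂ₜ d = a ∂ₓ d + b d + ∫ (d(x+y) - d(x)) dν(y) + g` on `[0, h]`
with vanishing initial data; `dx` is the spatial derivative of `d`. -/
structure NonlocalSol (ν : Measure ℝ) (d dx a b g : ℝ → ℝ → ℝ) (per h : ℝ) : Prop where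
  continuousOn : ContinuousOn (fun p : ℝ × ℝ ↦ d p.1 p.2) (univ ×ˢ Icc 0 h)
  periodic : ∀ t ∈ Icc 0 h, Function.Periodic (fun x ↦ d x t) per
  apply_zero : ∀ x, d x 0 = 0
  hasDerivAt : ∀ t ∈ Icc 0 h, ∀ x, HasDerivAt (fun y ↦ d y t) (dx x t) x
  hasDerivWithinAt : ∀ t ∈ Icc 0 h, ∀ x, HasDerivWithinAt (d x)
    (a x t * dx x t + b x t * d x t + (∫ y, (d (x + y) t - d x t) ∂ν) + g x t) (Icc 0 h) t

namespace NonlocalSol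

variable {ν : Measure ℝ} {d dx a b g : ℝ → ℝ → ℝ} {per h A C G K N : ℝ}

theorem neg (hd : NonlocalSol ν d dx a b g per h) :
    NonlocalSol ν (fun x t ↦ -d x t) (fun x t ↦ -dx x t) a b (fun x t ↦ -g x t) per h where
  continuousOn := hd.continuousOn.neg
  periodic t ht x := congrArg Neg.neg (hd.periodic t ht x)
  apply_zero x := by rw [hd.apply_zero x, neg_zero]
  hasDerivAt t ht x := (hd.hasDerivAt t ht x).neg
  hasDerivWithinAt t ht x := by
    refine (hd.hasDerivWithinAt t ht x).neg.congr_deriv ?_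
    simp only [← neg_sub', integral_neg]
    ring

theorem le (hd : NonlocalSol ν d dx a b g per h) (hper : 0 < per)
    (hb : ∀ t ∈ Icc 0 h, ∀ x, |b x t| ≤ K) (hg : ∀ t ∈ Icc 0 h, ∀ x, g x t ≤ G) (hG : 0 ≤ G)
    {t : ℝ} (ht : t ∈ Icc 0 h) (x : ℝ) : d x t ≤ Real.exp (K * t) * (G * t) := by
  have hK : 0 ≤ K := (abs_nonneg _).trans (hb t ht x)
  have hZ : ∀ y ∈ Icc x (x + per), ∀ t ∈ Icc 0 h, Real.exp (-(K * t)) * d y t - G * t ≤ 0 := by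
    refine nonpos_of_isMaxOn isCompact_Icc ?_ (fun y _ ↦ by simp [hd.apply_zero]) ?_
    · have := hd.continuousOn.mono (prod_mono_left (subset_univ (Icc x (x + per))))
      fun_prop
    intro t ht y _ hpos hmax
    have htI := Ioc_subset_Icc_self ht
    have hdpos : 0 < d y t :=
      pos_of_mul_pos_right (by linarith [mul_nonneg hG ht.1.le]) (Real.exp_pos (-(K * t))).le
    have hdmax (z : ℝ) : d z t ≤ d y t := by
      obtain ⟨z', hz', hzz'⟩ := (hd.periodic t htI).exists_mem_Ico hper z x
      have := hmax (Ico_subset_Icc_self hz')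
      rw [hzz']
      exact le_of_mul_le_mul_left (sub_le_sub_iff_right _ |>.1 this) (Real.exp_pos (-(K * t)))
    have hdx : dx y t = 0 :=
      IsLocalMax.hasDerivAt_eq_zero (.of_forall hdmax) (hd.hasDerivAt t htI y)
    have hjump : ∫ z, (d (y + z) t - d y t) ∂ν ≤ 0 :=
      integral_nonpos fun z ↦ sub_nonpos.2 (hdmax _)
    refine ⟨_, ?_, ((((hasDerivAt_id t).const_mul K).neg.exp.hasDerivWithinAt).mul
        (hd.hasDerivWithinAt t htI y)).sub ((hasDerivAt_id t).const_mul G).hasDerivWithinAt⟩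
    have hexp : Real.exp (-(K * t)) ≤ 1 :=
      Real.exp_le_one_iff.2 (neg_nonpos.2 (mul_nonneg hK ht.1.le))
    have hbd : b y t * d y t ≤ K * d y t :=
      mul_le_mul_of_nonneg_right ((le_abs_self _).trans (hb t htI y)) hdpos.le
    have hrhs : Real.exp (-(K * t)) * (b y t * d y t + ∫ z, (d (y + z) t - d y t) ∂ν + g y t) ≤
        Real.exp (-(K * t)) * (K * d y t) + G := by
      nlinarith [hg t htI y, Real.exp_pos (-(K * t))]
    simp only [hdx, id, Pi.neg_apply, mul_one, mul_zero, zero_add]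
    linarith
  have := hZ x ⟨le_rfl, by linarith⟩ t ht
  rwa [sub_nonpos, Real.exp_neg, inv_mul_le_iff₀ (Real.exp_pos _)] at this

theorem abs_le (hd : NonlocalSol ν d dx a b g per h) (hper : 0 < per)
    (hb : ∀ t ∈ Icc 0 h, ∀ x, |b x t| ≤ K) (hg : ∀ t ∈ Icc 0 h, ∀ x, |g x t| ≤ G)
    {t : ℝ} (ht : t ∈ Icc 0 h) (x : ℝ) : |d x t| ≤ Real.exp (K * t) * (G * t) := by
  have hG : 0 ≤ G := (abs_nonneg _).trans (hg t ht x)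
  exact abs_le'.2 ⟨hd.le hper hb (fun t ht x ↦ (le_abs_self _).trans (hg t ht x)) hG ht x,
    hd.neg.le hper hb (fun t ht x ↦ (neg_le_abs _).trans (hg t ht x)) hG ht x⟩

theorem integrable [IsFiniteMeasure ν] (hd : NonlocalSol ν d dx a b g per h) (hper : 0 < per)
    {t : ℝ} (ht : t ∈ Icc 0 h) (x : ℝ) : Integrable (fun y ↦ d (x + y) t - d x t) ν := by
  have hc : Continuous fun y ↦ d y t :=
    continuous_iff_continuousAt.2 fun y ↦ (hd.hasDerivAt t ht y).continuousAt
  obtain ⟨M, hM⟩ := ((hd.periodic t ht).isBounded_of_continuous hper.ne' hc).exists_norm_le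
  exact .sub (.of_bound (hc.comp (continuous_const_add x)).aestronglyMeasurable M
    (.of_forall fun y ↦ hM _ (mem_range_self _))) (integrable_const _)

theorem deriv_eq_of_max (hd : NonlocalSol ν d dx a b g per h) {t : ℝ} (ht : t ∈ Icc 0 h)
    {e m y k : ℝ} (he : 0 < e) (hk : k ∈ Ioo 0 per)
    (hmax : ∀ z, ∀ l ∈ Icc 0 per,
      e * (d (z + l) t - d z t) - m * l ≤ e * (d (y + k) t - d y t) - m * k) :
    dx (y + k) t = dx y t ∧ e * dx (y + k) t = m := by
  constructor
  · refine sub_eq_zero.1 (IsLocalMax.hasDerivAt_eq_zero (f := fun z ↦ d (z + k) t - d z t)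
      (.of_forall fun z ↦ ?_)
      (((hd.hasDerivAt t ht (y + k)).comp_add_const y k).sub (hd.hasDerivAt t ht y)))
    exact le_of_mul_le_mul_left
      ((sub_le_sub_iff_right _).1 (hmax z k (Ioo_subset_Icc_self hk))) he
  · refine sub_eq_zero.1 (IsLocalMax.hasDerivAt_eq_zero (a := k)
      (f := fun l ↦ e * (d (y + l) t - d y t) - m * l) ?_ ?_)
    · filter_upwards [Ioo_mem_nhds hk.1 hk.2] with l hl
      exact hmax y l (Ioo_subset_Icc_self hl)
    · have := (((hd.hasDerivAt t ht (y + k)).comp_const_add y k).sub_const (d y t)).const_mul e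
      exact (this.sub ((hasDerivAt_id k).const_mul m)).congr_deriv (by rw [mul_one])

theorem integral_sub_le_of_max [IsFiniteMeasure ν] (hd : NonlocalSol ν d dx a b g per h)
    (hper : 0 < per) {t : ℝ} (ht : t ∈ Icc 0 h) {y k : ℝ}
    (hmax : ∀ z, d (z + k) t - d z t ≤ d (y + k) t - d y t) :
    ∫ z, (d (y + k + z) t - d (y + k) t) ∂ν ≤ ∫ z, (d (y + z) t - d y t) ∂ν := by
  refine integral_mono (hd.integrable hper ht _) (hd.integrable hper ht _) fun z ↦ ?_
  have := hmax (y + z)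
  rw [add_right_comm] at this
  linarith

theorem exists_icc_translate_eq (hd : NonlocalSol ν d dx a b g per h) (hper : 0 < per) {t : ℝ}
    (ht : t ∈ Icc 0 h) (x z : ℝ) :
    ∃ y ∈ Icc x (x + per), ∀ l, d (z + l) t = d (y + l) t := by
  obtain ⟨n, hn, -⟩ := existsUnique_add_zsmul_mem_Ico hper z x
  refine ⟨z + n • per, Ico_subset_Icc_self hn, fun l ↦ ?_⟩
  rw [add_right_comm]
  exact ((hd.periodic t ht).zsmul n _).symm

theorem exists_hasDerivWithinAt_nonpos_of_max [IsFiniteMeasure ν]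
    (hd : NonlocalSol ν d dx a b g per h) (hper : 0 < per) {B t : ℝ} (hK : 0 ≤ K) (hN : 0 ≤ N)
    (hB : 0 ≤ B) (hCAG : C * A + G ≤ B) (ht : t ∈ Ioc 0 h) (hb : ∀ x, |b x t| ≤ K)
    (ha : ∀ x k, |a (x + k) t - a x t| ≤ N * |k|) (hbl : ∀ x k, |b (x + k) t - b x t| ≤ C * |k|)
    (hgl : ∀ x k, |g (x + k) t - g x t| ≤ G * |k|) (hA : ∀ x, |d x t| ≤ A) {y k : ℝ}
    (hk : k ∈ Icc 0 per)
    (hpos : 0 < Real.exp (-(K * t)) * (d (y + k) t - d y t) - B * Real.exp (N * t) * t * k)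
    (hmax : ∀ z, ∀ l ∈ Icc 0 per,
      Real.exp (-(K * t)) * (d (z + l) t - d z t) - B * Real.exp (N * t) * t * l ≤
        Real.exp (-(K * t)) * (d (y + k) t - d y t) - B * Real.exp (N * t) * t * k) :
    ∃ Z' ≤ 0, HasDerivWithinAt (fun s ↦ Real.exp (-(K * s)) * (d (y + k) s - d y s) -
      B * Real.exp (N * s) * s * k) Z' (Icc 0 h) t := by
  have htI := Ioc_subset_Icc_self ht
  have hm : 0 ≤ B * Real.exp (N * t) * t := by have := ht.1; positivity
  have he : 0 < Real.exp (-(K * t)) := Real.exp_pos _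
  have he1 : Real.exp (-(K * t)) ≤ 1 :=
    Real.exp_le_one_iff.2 (neg_nonpos.2 (mul_nonneg hK ht.1.le))
  have hk' : k ∈ Ioo 0 per := by
    refine ⟨hk.1.lt_of_ne ?_, hk.2.lt_of_ne ?_⟩ <;> rintro rfl
    · simp at hpos
    · rw [show d (y + k) t = d y t from hd.periodic t htI y, sub_self, mul_zero] at hpos
      linarith [mul_nonneg hm hk.1]
  obtain ⟨hdx, hdm⟩ := hd.deriv_eq_of_max htI he hk' hmax
  have hP : 0 ≤ dx y t := hdx ▸ nonneg_of_mul_nonneg_right (hdm ▸ hm) he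
  have hD : d y t ≤ d (y + k) t :=
    sub_nonneg.1 (nonneg_of_mul_nonneg_right (by linarith [mul_nonneg hm hk.1]) he)
  have hI := hd.integral_sub_le_of_max hper htI fun z ↦
    le_of_mul_le_mul_left ((sub_le_sub_iff_right _).1 (hmax z k hk)) he
  have hR := transport_sub_le hP hD (hA y) (by simpa [abs_of_pos hk'.1] using ha y k)
    (hb (y + k)) (by simpa [abs_of_pos hk'.1] using hbl y k)
    (by simpa [abs_of_pos hk'.1] using hgl y k) hI
  refine ⟨_, ?_, ((((hasDerivAt_id t).const_mul K).neg.exp.hasDerivWithinAt).mul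
      ((hd.hasDerivWithinAt t htI (y + k)).sub (hd.hasDerivWithinAt t htI y))).sub
    (((((hasDerivAt_id t).const_mul N).exp.const_mul B).mul
      (hasDerivAt_id t)).mul_const k).hasDerivWithinAt⟩
  have hBk : Real.exp (-(K * t)) * (B * k) ≤ B * k * Real.exp (N * t) :=
    (mul_le_of_le_one_left (mul_nonneg hB hk.1) he1).trans
      (le_mul_of_one_le_right (mul_nonneg hB hk.1)
        (Real.one_le_exp (mul_nonneg hN ht.1.le)))
  have hNP : Real.exp (-(K * t)) * (N * k * dx y t) =
      N * k * (B * Real.exp (N * t) * t) := by rw [← hdm, hdx]; ring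
  have := mul_le_mul_of_nonneg_left
    (hR.trans (add_le_add_right (mul_le_mul_of_nonneg_right hCAG hk.1) _)) he.le
  simp only [hdx, id, Pi.neg_apply, Pi.sub_apply, mul_one]
  linarith

theorem sub_le [IsFiniteMeasure ν] (hd : NonlocalSol ν d dx a b g per h) (hper : 0 < per)
    (hb : ∀ t ∈ Icc 0 h, ∀ x, |b x t| ≤ K)
    (ha : ∀ t ∈ Icc 0 h, ∀ x k, |a (x + k) t - a x t| ≤ N * |k|)
    (hbl : ∀ t ∈ Icc 0 h, ∀ x k, |b (x + k) t - b x t| ≤ C * |k|)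
    (hgl : ∀ t ∈ Icc 0 h, ∀ x k, |g (x + k) t - g x t| ≤ G * |k|)
    (hA : ∀ t ∈ Icc 0 h, ∀ x, |d x t| ≤ A) {t : ℝ} (ht : t ∈ Icc 0 h) (x : ℝ) {k : ℝ}
    (hk : k ∈ Icc 0 per) :
    d (x + k) t - d x t ≤ Real.exp (K * t) * ((C * A + G) * Real.exp (N * t) * t * k) := by
  have hK : 0 ≤ K := (abs_nonneg _).trans (hb t ht x)
  have hN : 0 ≤ N := by simpa using (abs_nonneg _).trans (ha t ht x 1)
  have hB : 0 ≤ C * A + G := by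
    have hC : 0 ≤ C := by simpa using (abs_nonneg _).trans (hbl t ht x 1)
    have hG : 0 ≤ G := by simpa using (abs_nonneg _).trans (hgl t ht x 1)
    have hA0 : 0 ≤ A := (abs_nonneg _).trans (hA t ht x)
    positivity
  obtain ⟨B, hCAG⟩ : ∃ B, C * A + G = B := ⟨_, rfl⟩
  rw [hCAG] at hB ⊢
  have hZ : ∀ p ∈ Icc x (x + per) ×ˢ Icc 0 per, ∀ t ∈ Icc 0 h, Real.exp (-(K * t)) *
      (d (p.1 + p.2) t - d p.1 t) - B * Real.exp (N * t) * t * p.2 ≤ 0 := by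
    refine nonpos_of_isMaxOn (isCompact_Icc.prod isCompact_Icc) ?_
      (fun p _ ↦ by simp [hd.apply_zero]) ?_
    · have h₁ := hd.continuousOn.comp (f := fun p : (ℝ × ℝ) × ℝ ↦ (p.1.1 + p.1.2, p.2))
        (s := (Icc x (x + per) ×ˢ Icc 0 per) ×ˢ Icc 0 h) (by fun_prop) fun _ hp ↦ ⟨trivial, hp.2⟩
      have h₂ := hd.continuousOn.comp (f := fun p : (ℝ × ℝ) × ℝ ↦ (p.1.1, p.2))
        (s := (Icc x (x + per) ×ˢ Icc 0 per) ×ˢ Icc 0 h) (by fun_prop) fun _ hp ↦ ⟨trivial, hp.2⟩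
      exact .sub (.mul (by fun_prop) (h₁.sub h₂)) (by fun_prop)
    intro t ht ⟨y, l⟩ ⟨_, hl⟩ hpos hmax
    refine hd.exists_hasDerivWithinAt_nonpos_of_max hper hK hN hB hCAG.le ht
      (hb t (Ioc_subset_Icc_self ht))
      (ha t (Ioc_subset_Icc_self ht)) (hbl t (Ioc_subset_Icc_self ht))
      (hgl t (Ioc_subset_Icc_self ht)) (hA t (Ioc_subset_Icc_self ht)) hl hpos fun z l' hl' ↦ ?_
    obtain ⟨z', hz', hzz'⟩ := hd.exists_icc_translate_eq hper (Ioc_subset_Icc_self ht) x z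
    have := isMaxOn_iff.1 hmax (z', l') ⟨hz', hl'⟩
    simpa only [hzz' l', show d z t = d z' t by simpa using hzz' 0] using this
  have := hZ (x, k) ⟨⟨le_rfl, by linarith⟩, hk⟩ t ht
  rwa [sub_nonpos, Real.exp_neg, inv_mul_le_iff₀ (Real.exp_pos _)] at this

theorem abs_sub_le [IsFiniteMeasure ν] (hd : NonlocalSol ν d dx a b g per h) (hper : 0 < per)
    (hb : ∀ t ∈ Icc 0 h, ∀ x, |b x t| ≤ K)
    (ha : ∀ t ∈ Icc 0 h, ∀ x k, |a (x + k) t - a x t| ≤ N * |k|)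
    (hbl : ∀ t ∈ Icc 0 h, ∀ x k, |b (x + k) t - b x t| ≤ C * |k|)
    (hgl : ∀ t ∈ Icc 0 h, ∀ x k, |g (x + k) t - g x t| ≤ G * |k|)
    (hA : ∀ t ∈ Icc 0 h, ∀ x, |d x t| ≤ A) {t : ℝ} (ht : t ∈ Icc 0 h) (x : ℝ) {k : ℝ}
    (hk : k ∈ Icc 0 per) :
    |d (x + k) t - d x t| ≤ Real.exp (K * t) * ((C * A + G) * Real.exp (N * t) * t * k) := by
  refine abs_le'.2 ⟨hd.sub_le hper hb ha hbl hgl hA ht x hk, ?_⟩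
  rw [neg_sub']
  refine hd.neg.sub_le hper hb ha hbl (fun t ht x k ↦ ?_) (by simpa only [abs_neg]) ht x hk
  rw [← neg_sub', abs_neg]
  exact hgl t ht x k

end NonlocalSol

/-! ### Compound Poisson semigroups -/

/-- Bounded endomorphisms of a real normed space. Spelling `E →L[ℝ] E` for an abstract `E` makes
its module structure the one underlying the norm, as the operator-algebra instances require. -/
abbrev NormedEnd (E : Type*) [NormedAddCommGroup E] [NormedSpace ℝ E] : Type _ := E →L[ℝ] E

section JumpSemigroup

variable (ν : Measure ℝ) [IsFiniteMeasure ν]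

theorem integrable_comp_add (f : ℝ →ᵇ ℝ) (x : ℝ) : Integrable (fun y ↦ f (x + y)) ν :=
  .of_bound (by fun_prop) ‖f‖ (.of_forall fun _ ↦ f.norm_coe_le_norm _)

theorem norm_integral_comp_add_le (f : ℝ →ᵇ ℝ) (x : ℝ) :
    ‖∫ y, f (x + y) ∂ν‖ ≤ ν.real univ * ‖f‖ := by
  rw [mul_comm]
  exact norm_integral_le_of_norm_le_const (.of_forall fun y ↦ f.norm_coe_le_norm _)

/-- The operator `f ↦ ∫ f(· + y) dν(y)` on bounded continuous functions. -/
def jumpOp : NormedEnd (ℝ →ᵇ ℝ) :=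
  LinearMap.mkContinuous
    { toFun f := .ofNormedAddCommGroup (fun x ↦ ∫ y, f (x + y) ∂ν)
        (continuous_of_dominated (fun x ↦ (integrable_comp_add ν f x).aestronglyMeasurable)
          (fun x ↦ .of_forall fun y ↦ f.norm_coe_le_norm (x + y)) (integrable_const ‖f‖)
          (.of_forall fun y ↦ by fun_prop))
        (ν.real univ * ‖f‖) (norm_integral_comp_add_le ν f)
      map_add' f g := by
        ext x
        exact integral_add (integrable_comp_add ν f x) (integrable_comp_add ν g x)
      map_smul' c f := by
        ext x
        exact integral_const_mul c _ }
    (ν.real univ) fun f ↦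
      (BoundedContinuousFunction.norm_le (by positivity)).2 (norm_integral_comp_add_le ν f)

theorem jumpOp_apply (f : ℝ →ᵇ ℝ) (x : ℝ) : jumpOp ν f x = ∫ y, f (x + y) ∂ν := rfl

/-- The generator `f ↦ ∫ (f(· + y) - f) dν(y)` of the compound Poisson semigroup with jump
measure `ν`. -/
def jumpGen : NormedEnd (ℝ →ᵇ ℝ) := jumpOp ν - ν.real univ • 1

theorem jumpGen_apply (f : ℝ →ᵇ ℝ) (x : ℝ) : jumpGen ν f x = ∫ y, (f (x + y) - f x) ∂ν := by
  rw [integral_sub (integrable_comp_add ν f x) (integrable_const _), integral_const]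
  rfl

theorem jumpGen_const (c : ℝ) : jumpGen ν (.const ℝ c) = 0 := by
  ext x
  simp [jumpGen_apply]

/-- The compound Poisson semigroup `exp (t * jumpGen ν)`, with the scalar part of the generator
split off so that the remaining exponential series has nonnegative terms. -/
def jumpSemigroup (t : ℝ) : NormedEnd (ℝ →ᵇ ℝ) :=
  Real.exp (-ν.real univ * t) • NormedSpace.exp (t • jumpOp ν)

theorem jumpSemigroup_zero : jumpSemigroup ν 0 = 1 := by
  simp [jumpSemigroup]

theorem commute_jumpGen_jumpSemigroup (t : ℝ) : Commute (jumpGen ν) (jumpSemigroup ν t) := by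
  have h : Commute (jumpOp ν) (NormedSpace.exp (t • jumpOp ν)) :=
    ((Commute.refl (jumpOp ν)).smul_right t).exp_right
  exact (h.smul_right _).sub_left (((Commute.one_left _).smul_left _).smul_right _)

theorem hasDerivAt_jumpSemigroup (t : ℝ) :
    HasDerivAt (jumpSemigroup ν) (jumpGen ν * jumpSemigroup ν t) t := by
  have hexp : HasDerivAt (fun t ↦ Real.exp (-ν.real univ * t))
      (Real.exp (-ν.real univ * t) * (-ν.real univ * 1)) t :=
    ((hasDerivAt_id t).const_mul _).exp
  refine (hexp.smul (hasDerivAt_exp_smul_const' (jumpOp ν) t)).congr_deriv ?_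
  rw [jumpGen, jumpSemigroup, sub_mul, mul_smul_comm, smul_mul_assoc, one_mul, smul_smul, mul_one,
    mul_neg, neg_smul, sub_eq_add_neg, mul_comm (ν.real univ)]

theorem hasDerivAt_jumpSemigroup_apply (f : ℝ →ᵇ ℝ) (x t : ℝ) :
    HasDerivAt (fun s ↦ jumpSemigroup ν s f x) (jumpSemigroup ν t (jumpGen ν f) x) t := by
  have h := (hasDerivAt_jumpSemigroup ν t).clm_apply (hasDerivAt_const t f)
  rw [(commute_jumpGen_jumpSemigroup ν t).eq, map_zero, add_zero] at h
  exact (BoundedContinuousFunction.evalCLM ℝ x).hasFDerivAt.comp_hasDerivAt t h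

theorem hasSum_exp_jumpOp (t : ℝ) (f : ℝ →ᵇ ℝ) :
    HasSum (fun n : ℕ ↦ (n.factorial : ℝ)⁻¹ • t ^ n • (jumpOp ν ^ n) f)
      (NormedSpace.exp (t • jumpOp ν) f) := by
  refine ((NormedSpace.exp_series_hasSum_exp' (𝕂 := ℝ) (t • jumpOp ν)).mapL
    (ContinuousLinearMap.apply ℝ (ℝ →ᵇ ℝ) f)).congr_fun fun n ↦ ?_
  simp [smul_pow]

theorem jumpOp_pow_nonneg {f : ℝ →ᵇ ℝ} (hf : 0 ≤ f) (n : ℕ) : 0 ≤ (jumpOp ν ^ n) f := by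
  induction n with
  | zero => simpa using hf
  | succ n ih =>
    rw [pow_succ']
    exact fun x ↦ integral_nonneg fun y ↦ ih (x + y)

theorem jumpSemigroup_nonneg {t : ℝ} (ht : 0 ≤ t) {f : ℝ →ᵇ ℝ} (hf : 0 ≤ f) :
    0 ≤ jumpSemigroup ν t f := by
  intro x
  have hsum := (hasSum_exp_jumpOp ν t f).mapL (BoundedContinuousFunction.evalCLM ℝ x)
  refine mul_nonneg (Real.exp_pos _).le (hsum.nonneg fun n ↦ ?_)
  have : 0 ≤ (jumpOp ν ^ n) f x := jumpOp_pow_nonneg ν hf n x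
  simp only [map_smul, BoundedContinuousFunction.evalCLM_apply, smul_eq_mul]
  positivity

theorem jumpOp_pow_of_eigen {f : ℝ →ᵇ ℝ} {m : ℝ} (hf : jumpOp ν f = m • f) (n : ℕ) :
    (jumpOp ν ^ n) f = m ^ n • f := by
  induction n with
  | zero => simp
  | succ n ih => rw [pow_succ', mul_apply_eq_comp, ih, map_smul, hf, smul_smul, pow_succ]

theorem jumpSemigroup_of_eigen (t : ℝ) {f : ℝ →ᵇ ℝ} {m : ℝ} (hf : jumpGen ν f = m • f) :
    jumpSemigroup ν t f = Real.exp (m * t) • f := by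
  have hf' : jumpOp ν f = (m + ν.real univ) • f := by
    rw [add_smul, ← hf]
    simp [jumpGen]
  have hsum : HasSum (fun n : ℕ ↦ (n.factorial : ℝ)⁻¹ • t ^ n • (jumpOp ν ^ n) f)
      (Real.exp (t * (m + ν.real univ)) • f) := by
    have := NormedSpace.exp_series_hasSum_exp' (𝕂 := ℝ) (t * (m + ν.real univ))
    rw [← Real.exp_eq_exp_ℝ] at this
    refine (this.smul_const f).congr_fun fun n ↦ ?_
    rw [jumpOp_pow_of_eigen ν hf', smul_smul, smul_smul, smul_eq_mul, mul_pow, mul_assoc]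
  rw [jumpSemigroup, smul_apply, (hasSum_exp_jumpOp ν t f).unique hsum, smul_smul, ← Real.exp_add]
  ring_nf

theorem jumpSemigroup_const (t c : ℝ) : jumpSemigroup ν t (.const ℝ c) = .const ℝ c := by
  simpa using jumpSemigroup_of_eigen ν t (m := 0) ((jumpGen_const ν c).trans (zero_smul ℝ _).symm)

theorem jumpSemigroup_mono {t : ℝ} (ht : 0 ≤ t) {f g : ℝ →ᵇ ℝ} (h : ∀ x, f x ≤ g x) (x : ℝ) :
    jumpSemigroup ν t f x ≤ jumpSemigroup ν t g x := by
  have := jumpSemigroup_nonneg ν ht (f := g - f) (fun x ↦ sub_nonneg.2 (h x)) x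
  rw [map_sub] at this
  exact sub_nonneg.1 this

theorem abs_jumpSemigroup_le {t : ℝ} (ht : 0 ≤ t) {f : ℝ →ᵇ ℝ} {M : ℝ} (h : ∀ x, |f x| ≤ M)
    (x : ℝ) : |jumpSemigroup ν t f x| ≤ M := by
  have hle := jumpSemigroup_mono ν ht (g := .const ℝ M) (fun x ↦ (abs_le.1 (h x)).2) x
  have hge := jumpSemigroup_mono ν ht (f := .const ℝ (-M)) (fun x ↦ (abs_le.1 (h x)).1) x
  rw [jumpSemigroup_const] at hle hge
  exact abs_le.2 ⟨hge, hle⟩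

/-- Translation of bounded continuous functions. -/
def shiftOp (s : ℝ) : NormedEnd (ℝ →ᵇ ℝ) :=
  LinearMap.mkContinuous
    { toFun f := f.compContinuous ⟨fun x ↦ x + s, by fun_prop⟩
      map_add' _ _ := rfl
      map_smul' _ _ := rfl }
    1 fun f ↦ by
      rw [one_mul]
      exact (BoundedContinuousFunction.norm_le (norm_nonneg f)).2 fun x ↦ f.norm_coe_le_norm _

@[simp] theorem shiftOp_apply (s : ℝ) (f : ℝ →ᵇ ℝ) (x : ℝ) : shiftOp s f x = f (x + s) := rfl

theorem commute_shiftOp_jumpOp (s : ℝ) : Commute (shiftOp s) (jumpOp ν) := by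
  ext f x
  simp only [mul_apply_eq_comp, shiftOp_apply, jumpOp_apply, add_right_comm]

theorem jumpSemigroup_shiftOp (t s : ℝ) (f : ℝ →ᵇ ℝ) (x : ℝ) :
    jumpSemigroup ν t (shiftOp s f) x = jumpSemigroup ν t f (x + s) := by
  have : Commute (shiftOp s) (jumpSemigroup ν t) :=
    (((commute_shiftOp_jumpOp ν s).smul_right t).exp_right).smul_right _
  exact congrArg (fun T ↦ T f x) this.eq.symm

theorem hasDerivAt_jumpSemigroup_space {t : ℝ} (ht : 0 ≤ t) {f f' : ℝ →ᵇ ℝ} {M : ℝ}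
    (hf : ∀ x, HasDerivAt f (f' x) x) (hM : ∀ x y, |f' x - f' y| ≤ M * |x - y|) (x : ℝ) :
    HasDerivAt (jumpSemigroup ν t f) (jumpSemigroup ν t f' x) x := by
  have htaylor (s : ℝ) : |jumpSemigroup ν t f (x + s) - jumpSemigroup ν t f x -
      s * jumpSemigroup ν t f' x| ≤ M * s ^ 2 := by
    have := abs_jumpSemigroup_le ν ht (f := shiftOp s f - f - s • f') (M := M * s ^ 2)
      (fun y ↦ by
        simpa using abs_taylor_le (x := y) (y := y + s) convex_univ (fun u _ ↦ hf u)
          (fun u _ ↦ hM u y) trivial trivial) x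
    rw [map_sub, map_sub, map_smul] at this
    rwa [← jumpSemigroup_shiftOp]
  rw [hasDerivAt_iff_isLittleO_nhds_zero]
  refine Asymptotics.IsBigO.trans_isLittleO (g := fun s : ℝ ↦ s ^ 2)
    (.of_bound M (.of_forall fun s ↦ ?_)) (Asymptotics.isLittleO_pow_id one_lt_two)
  simpa using htaylor s

end JumpSemigroup

section Covariance

/-- The bounded function `y ↦ (y - x)² / (1 + (y - x)²)`, a bounded substitute for the squared
distance to `x`. -/
def bumpSq (x : ℝ) : ℝ →ᵇ ℝ :=
  .ofNormedAddCommGroup (fun y ↦ (y - x) ^ 2 / (1 + (y - x) ^ 2))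
    (.div (by fun_prop) (by fun_prop) fun y ↦ by positivity) 1 fun y ↦ by
      rw [Real.norm_eq_abs, abs_of_nonneg (by positivity), div_le_one (by positivity)]
      linarith

theorem bumpSq_apply (x y : ℝ) : bumpSq x y = (y - x) ^ 2 / (1 + (y - x) ^ 2) := rfl

theorem bumpSq_nonneg (x y : ℝ) : 0 ≤ bumpSq x y := by
  rw [bumpSq_apply]
  positivity

theorem bumpSq_le_one (x y : ℝ) : bumpSq x y ≤ 1 :=
  (le_abs_self _).trans (((bumpSq x).norm_coe_le_norm y).trans
    (BoundedContinuousFunction.norm_ofNormedAddCommGroup_le _ zero_le_one _))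

theorem bumpSq_second_diff_eq (x z y : ℝ) :
    bumpSq x (z + y) + bumpSq x (z - y) - 2 * bumpSq x z =
      2 * y ^ 2 * ((1 + y ^ 2 - 3 * (z - x) ^ 2) /
        ((1 + (z - x) ^ 2) * ((1 + (z - x + y) ^ 2) * (1 + (z - x - y) ^ 2)))) := by
  rw [bumpSq_apply, bumpSq_apply, bumpSq_apply, add_sub_right_comm z, sub_right_comm z]
  generalize z - x = u
  field_simp
  ring

theorem bumpSq_second_diff_le (x z y : ℝ) :
    bumpSq x (z + y) + bumpSq x (z - y) - 2 * bumpSq x z ≤ 2 * min 1 (y ^ 2) := by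
  rw [mul_min_of_nonneg _ _ zero_le_two, le_min_iff]
  constructor
  · linarith [bumpSq_le_one x (z + y), bumpSq_le_one x (z - y), bumpSq_nonneg x z]
  · rw [bumpSq_second_diff_eq]
    refine mul_le_of_le_one_right (by positivity) ((div_le_one (by positivity)).2 ?_)
    generalize z - x = u
    have : (1 + (u + y) ^ 2) * (1 + (u - y) ^ 2) =
      1 + 2 * u ^ 2 + 2 * y ^ 2 + (u ^ 2 - y ^ 2) ^ 2 := by ring
    rw [this]
    nlinarith [mul_nonneg (sq_nonneg u) (sq_nonneg y),
      mul_nonneg (sq_nonneg u) (sq_nonneg (u ^ 2 - y ^ 2))]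

theorem sq_le_bumpSq {F p x y : ℝ} (hp : |p| ≤ 2 * F) (hp' : |p| ≤ F * |y - x|) :
    p * p ≤ 5 * F ^ 2 * bumpSq x y := by
  have h₁ : p ^ 2 ≤ (2 * F) ^ 2 := sq_le_sq' (abs_le.1 hp).1 (abs_le.1 hp).2
  have h₂ : p ^ 2 ≤ (F * |y - x|) ^ 2 := sq_le_sq' (abs_le.1 hp').1 (abs_le.1 hp').2
  rw [mul_pow, sq_abs] at h₂
  rw [bumpSq_apply, mul_div_assoc', le_div_iff₀ (by positivity)]
  nlinarith [mul_le_mul_of_nonneg_right h₁ (sq_nonneg (y - x))]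

variable (ν : Measure ℝ) [IsFiniteMeasure ν]

theorem integrable_min_one_sq : Integrable (fun y : ℝ ↦ min 1 (y ^ 2)) ν :=
  .of_bound (by fun_prop) 1 (.of_forall fun y ↦ by
    rw [Real.norm_eq_abs, abs_of_nonneg (by positivity)]
    exact min_le_left _ _)

theorem two_mul_jumpGen_eq [ν.IsNegInvariant] (f : ℝ →ᵇ ℝ) (z : ℝ) :
    2 * jumpGen ν f z = ∫ y, (f (z + y) + f (z - y) - 2 * f z) ∂ν := by
  have hf : Integrable (fun y ↦ f (z + y) - f z) ν :=
    (integrable_comp_add ν _ z).sub (integrable_const _)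
  rw [jumpGen_apply, two_mul]
  nth_rw 2 [← integral_neg_eq_self]
  rw [← integral_add hf hf.comp_neg]
  refine integral_congr_ae (.of_forall fun y ↦ ?_)
  simp only [← sub_eq_add_neg]
  ring

variable {ν} {κ t : ℝ}

theorem jumpGen_bumpSq_le [ν.IsNegInvariant] (hκ : ∫ y, min 1 (y ^ 2) ∂ν ≤ κ) (x z : ℝ) :
    jumpGen ν (bumpSq x) z ≤ κ := by
  have h : 2 * jumpGen ν (bumpSq x) z ≤ 2 * ∫ y, min 1 (y ^ 2) ∂ν := by
    rw [two_mul_jumpGen_eq, ← integral_const_mul]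
    refine integral_mono ?_ ((integrable_min_one_sq ν).const_mul 2)
      fun y ↦ bumpSq_second_diff_le x z y
    have hadd := integrable_comp_add ν (bumpSq x) z
    have hsub : Integrable (fun y ↦ bumpSq x (z - y)) ν := by
      simpa only [← sub_eq_add_neg] using hadd.comp_neg
    exact (hadd.add hsub).sub (integrable_const _)
  linarith

theorem jumpSemigroup_bumpSq_le [ν.IsNegInvariant] (hκ : ∫ y, min 1 (y ^ 2) ∂ν ≤ κ)
    (ht : 0 ≤ t) (x : ℝ) : jumpSemigroup ν t (bumpSq x) x ≤ κ * t := by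
  have hderiv (s : ℝ) := hasDerivAt_jumpSemigroup_apply ν (bumpSq x) x s
  have h := (convex_Icc 0 t).image_sub_le_mul_sub_of_deriv_le (C := κ)
    (fun s _ ↦ (hderiv s).continuousAt.continuousWithinAt)
    (fun s _ ↦ (hderiv s).differentiableAt.differentiableWithinAt)
    (fun s hs ↦ ?_) 0 ⟨le_rfl, ht⟩ t ⟨ht, le_rfl⟩ ht
  · simpa [jumpSemigroup_zero, bumpSq_apply] using h
  · rw [(hderiv s).deriv]
    have := jumpSemigroup_mono ν (interior_subset hs).1 (g := .const ℝ κ)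
      (jumpGen_bumpSq_le hκ x) x
    rwa [jumpSemigroup_const] at this

variable (ν t)

/-- The covariance of `f` and `g` under the transition probabilities of the semigroup at
time `t`. -/
def jumpCov (f g : ℝ →ᵇ ℝ) : ℝ →ᵇ ℝ :=
  jumpSemigroup ν t (f * g) - jumpSemigroup ν t f * jumpSemigroup ν t g

theorem jumpCov_apply (f g : ℝ →ᵇ ℝ) (x : ℝ) : jumpCov ν t f g x =
    jumpSemigroup ν t (f * g) x - jumpSemigroup ν t f x * jumpSemigroup ν t g x := rfl

theorem jumpCov_self_eq (f : ℝ →ᵇ ℝ) (c x : ℝ) :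
    jumpCov ν t f f x = jumpSemigroup ν t ((f - .const ℝ c) * (f - .const ℝ c)) x -
      (jumpSemigroup ν t f x - c) ^ 2 := by
  have : (f - .const ℝ c) * (f - .const ℝ c) = f * f - (2 * c) • f + .const ℝ (c ^ 2) := by
    ext y
    simp
    ring
  simp only [this, jumpCov_apply, map_add, map_sub, map_smul, jumpSemigroup_const,
    BoundedContinuousFunction.add_apply, BoundedContinuousFunction.sub_apply,
    BoundedContinuousFunction.smul_apply, BoundedContinuousFunction.const_apply, smul_eq_mul]
  ring

theorem jumpCov_smul_add_self (f g : ℝ →ᵇ ℝ) (s x : ℝ) :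
    jumpCov ν t (s • f + g) (s • f + g) x =
      jumpCov ν t f f x * (s * s) + 2 * jumpCov ν t f g x * s + jumpCov ν t g g x := by
  have : (s • f + g) * (s • f + g) = (s * s) • (f * f) + (2 * s) • (f * g) + g * g := by
    ext y
    simp
    ring
  simp only [this, jumpCov_apply, map_add, map_smul, BoundedContinuousFunction.add_apply,
    BoundedContinuousFunction.smul_apply, smul_eq_mul]
  ring

variable {ν t}

theorem jumpCov_self_nonneg (ht : 0 ≤ t) (f : ℝ →ᵇ ℝ) (x : ℝ) : 0 ≤ jumpCov ν t f f x := by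
  rw [jumpCov_self_eq ν t f (jumpSemigroup ν t f x), sub_self, zero_pow two_ne_zero, sub_zero]
  exact jumpSemigroup_nonneg ν ht (fun y ↦ mul_self_nonneg _) x

theorem sq_jumpCov_le (ht : 0 ≤ t) (f g : ℝ →ᵇ ℝ) (x : ℝ) :
    jumpCov ν t f g x ^ 2 ≤ jumpCov ν t f f x * jumpCov ν t g g x := by
  have := discrim_le_zero fun s ↦
    (jumpCov_self_nonneg ht (s • f + g) x).trans_eq (jumpCov_smul_add_self ν t f g s x)
  rw [discrim] at this
  linarith

theorem jumpCov_self_le [ν.IsNegInvariant] (hκ : ∫ y, min 1 (y ^ 2) ∂ν ≤ κ) (ht : 0 ≤ t)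
    {f : ℝ →ᵇ ℝ} {F : ℝ} (hf : ∀ y, |f y| ≤ F) (hf' : ∀ y z, |f y - f z| ≤ F * |y - z|) (x : ℝ) :
    jumpCov ν t f f x ≤ 5 * F ^ 2 * (κ * t) := by
  have hmono := jumpSemigroup_mono ν ht
    (f := (f - .const ℝ (f x)) * (f - .const ℝ (f x))) (g := (5 * F ^ 2) • bumpSq x)
    (fun y ↦ sq_le_bumpSq (p := f y - f x) (by linarith [abs_sub (f y) (f x), hf y, hf x])
      (hf' y x)) x
  calc jumpCov ν t f f x
      ≤ jumpSemigroup ν t ((f - .const ℝ (f x)) * (f - .const ℝ (f x))) x := by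
        rw [jumpCov_self_eq ν t f (f x)]
        exact sub_le_self _ (sq_nonneg _)
    _ ≤ 5 * F ^ 2 * jumpSemigroup ν t (bumpSq x) x := by rwa [map_smul] at hmono
    _ ≤ 5 * F ^ 2 * (κ * t) :=
        mul_le_mul_of_nonneg_left (jumpSemigroup_bumpSq_le hκ ht x) (by positivity)

theorem abs_jumpCov_le [ν.IsNegInvariant] (hκ : ∫ y, min 1 (y ^ 2) ∂ν ≤ κ) (ht : 0 ≤ t)
    {f g : ℝ →ᵇ ℝ} {F G : ℝ} (hf : ∀ y, |f y| ≤ F) (hf' : ∀ y z, |f y - f z| ≤ F * |y - z|)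
    (hg : ∀ y, |g y| ≤ G) (hg' : ∀ y z, |g y - g z| ≤ G * |y - z|) (x : ℝ) :
    |jumpCov ν t f g x| ≤ 5 * F * G * (κ * t) := by
  have hF : 0 ≤ F := (abs_nonneg _).trans (hf 0)
  have hG : 0 ≤ G := (abs_nonneg _).trans (hg 0)
  have hκ0 : 0 ≤ κ := (integral_nonneg fun y ↦ by positivity).trans hκ
  refine abs_le_of_sq_le_sq ?_ (by positivity)
  calc jumpCov ν t f g x ^ 2 ≤ jumpCov ν t f f x * jumpCov ν t g g x := sq_jumpCov_le ht f g x
    _ ≤ (5 * F ^ 2 * (κ * t)) * (5 * G ^ 2 * (κ * t)) :=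
        mul_le_mul (jumpCov_self_le hκ ht hf hf' x) (jumpCov_self_le hκ ht hg hg' x)
          (jumpCov_self_nonneg ht g x) (by positivity)
    _ = (5 * F * G * (κ * t)) ^ 2 := by ring

theorem jumpCov_add_sub (f g : ℝ →ᵇ ℝ) (x k : ℝ) :
    jumpCov ν t f g (x + k) - jumpCov ν t f g x =
      jumpCov ν t (shiftOp k f - f) (shiftOp k g) x + jumpCov ν t f (shiftOp k g - g) x := by
  have : (shiftOp k f - f) * shiftOp k g = shiftOp k (f * g) - f * shiftOp k g := by
    ext y
    simp [sub_mul]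
  simp only [jumpCov_apply, this, mul_sub, map_sub, BoundedContinuousFunction.sub_apply,
    jumpSemigroup_shiftOp]
  ring

theorem abs_jumpCov_sub_le [ν.IsNegInvariant] (hκ : ∫ y, min 1 (y ^ 2) ∂ν ≤ κ) (ht : 0 ≤ t)
    {f g : ℝ →ᵇ ℝ} {F G : ℝ} (hf : ∀ y, |f y| ≤ F) (hf' : ∀ y z, |f y - f z| ≤ F * |y - z|)
    (hf'' : ∀ k y z, |f (y + k) - f y - (f (z + k) - f z)| ≤ F * |k| * |y - z|)
    (hg : ∀ y, |g y| ≤ G) (hg' : ∀ y z, |g y - g z| ≤ G * |y - z|)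
    (hg'' : ∀ k y z, |g (y + k) - g y - (g (z + k) - g z)| ≤ G * |k| * |y - z|) (x k : ℝ) :
    |jumpCov ν t f g (x + k) - jumpCov ν t f g x| ≤ 10 * F * G * (κ * t) * |k| := by
  have h₁ := abs_jumpCov_le hκ ht (f := shiftOp k f - f) (g := shiftOp k g)
    (fun y ↦ by simpa using hf' (y + k) y) (fun y z ↦ hf'' k y z) (fun y ↦ hg (y + k))
    (fun y z ↦ by simpa using hg' (y + k) (z + k)) x
  have h₂ := abs_jumpCov_le hκ ht (g := shiftOp k g - g) hf hf'
    (fun y ↦ by simpa using hg' (y + k) y) (fun y z ↦ hg'' k y z) x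
  rw [jumpCov_add_sub]
  refine (abs_add_le _ _).trans ((add_le_add h₁ h₂).trans_eq ?_)
  ring

end Covariance

theorem abs_second_sub_le {f f' : ℝ → ℝ} {M : ℝ} (hf : ∀ x, HasDerivAt f (f' x) x)
    (hM : ∀ x y, |f' x - f' y| ≤ M * |x - y|) (k y z : ℝ) :
    |f (y + k) - f y - (f (z + k) - f z)| ≤ M * |k| * |y - z| :=
  abs_sub_le_of_hasDerivAt (fun x ↦ ((hf (x + k)).comp_add_const x k).sub (hf x))
    (fun x ↦ by simpa using hM (x + k) x) y z

/-! ### Splitting error for finite jump measures -/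

section Splitting

theorem hasDerivWithinAt_of_forall_apply {F G : ℝ → ℝ →ᵇ ℝ} {s : Set ℝ} (hs : s.OrdConnected)
    (hF : ∀ t ∈ s, ∀ x, HasDerivWithinAt (fun r ↦ F r x) (G t x) s t) (hG : ContinuousOn G s)
    {t : ℝ} (ht : t ∈ s) : HasDerivWithinAt F (G t) s t := by
  rw [hasDerivWithinAt_iff_isLittleO, Asymptotics.isLittleO_iff]
  intro ε hε
  obtain ⟨δ, hδ, hGδ⟩ := Metric.continuousOn_iff.1 hG t ht ε hε
  filter_upwards [inter_mem_nhdsWithin s (Metric.ball_mem_nhds t hδ)] with r ⟨hrs, hrδ⟩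
  refine (BoundedContinuousFunction.norm_le (by positivity)).2 fun x ↦ ?_
  have hsub : uIcc t r ⊆ s := hs.uIcc_subset ht hrs
  have hderiv : ∀ u ∈ uIcc t r,
      HasDerivWithinAt (fun u ↦ F u x - u * G t x) (G u x - G t x) (uIcc t r) u := fun u hu ↦
    (((hF u (hsub hu) x).mono hsub).sub ((hasDerivWithinAt_id u _).mul_const _)).congr_deriv
      (by rw [one_mul])
  have hle : ∀ u ∈ uIcc t r, ‖G u x - G t x‖ ≤ ε := fun u hu ↦
    (BoundedContinuousFunction.dist_coe_le_dist x).trans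
      (hGδ u (hsub hu) ((abs_sub_left_of_mem_uIcc hu).trans_lt hrδ)).le
  have := (convex_uIcc t r).norm_image_sub_le_of_norm_hasDerivWithin_le hderiv hle
    left_mem_uIcc right_mem_uIcc
  refine le_of_eq_of_le (congrArg norm ?_) this
  simp only [BoundedContinuousFunction.sub_apply, BoundedContinuousFunction.smul_apply, smul_eq_mul]
  ring

theorem exists_boundedContinuous_curve {s : Set ℝ} {u : ℝ → ℝ → ℝ} {M : ℝ}
    (hc : ∀ t ∈ s, Continuous fun x ↦ u x t) (hb : ∀ t ∈ s, ∀ x, |u x t| ≤ M) :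
    ∃ U : ℝ → ℝ →ᵇ ℝ, ∀ t ∈ s, ⇑(U t) = fun x ↦ u x t := by
  choose! U hU using fun t (ht : t ∈ s) ↦
    (⟨.ofNormedAddCommGroup _ (hc t ht) M (hb t ht), rfl⟩ :
      ∃ U : ℝ →ᵇ ℝ, ⇑U = fun x ↦ u x t)
  exact ⟨U, hU⟩

theorem continuousOn_of_dist_apply_le {s : Set ℝ} {U : ℝ → ℝ →ᵇ ℝ} {m : ℝ → ℝ} (hm : Continuous m)
    (hm₀ : m 0 = 0) (hU : ∀ r ∈ s, ∀ t ∈ s, ∀ x, |U t x - U r x| ≤ m (t - r)) :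
    ContinuousOn U s := by
  intro t ht
  have hlim : Tendsto (fun r ↦ m (r - t)) (𝓝[s] t) (𝓝 0) := by
    have : Tendsto (fun r ↦ m (r - t)) (𝓝 t) (𝓝 (m (t - t))) :=
      (hm.comp (continuous_sub_right t)).tendsto t
    rw [sub_self, hm₀] at this
    exact this.mono_left nhdsWithin_le_nhds
  refine tendsto_iff_dist_tendsto_zero.2 (squeeze_zero' (.of_forall fun r ↦ dist_nonneg) ?_ hlim)
  filter_upwards [self_mem_nhdsWithin] with r hr
  exact (BoundedContinuousFunction.dist_le ((abs_nonneg _).trans (hU t ht r hr 0))).2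
    (hU t ht r hr)

theorem continuousOn_uncurry_of_abs_sub_le {u : ℝ → ℝ → ℝ} {s : Set ℝ} {A B : ℝ}
    (hx : ∀ t ∈ s, ∀ x y, |u x t - u y t| ≤ A * |x - y|)
    (ht : ∀ x, ∀ r ∈ s, ∀ t ∈ s, |u x t - u x r| ≤ B * |t - r|) :
    ContinuousOn (fun p : ℝ × ℝ ↦ u p.1 p.2) (univ ×ˢ s) := by
  rintro ⟨y, r⟩ ⟨-, hr⟩
  have hlim : Tendsto (fun p : ℝ × ℝ ↦ A * |p.1 - y| + B * |p.2 - r|) (𝓝[univ ×ˢ s] (y, r))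
      (𝓝 0) := by
    have : Continuous fun p : ℝ × ℝ ↦ A * |p.1 - y| + B * |p.2 - r| := by fun_prop
    simpa using (this.tendsto (y, r)).mono_left nhdsWithin_le_nhds
  refine tendsto_iff_dist_tendsto_zero.2 (squeeze_zero' (.of_forall fun p ↦ dist_nonneg) ?_ hlim)
  filter_upwards [self_mem_nhdsWithin] with ⟨x, t⟩ ⟨_, hts⟩
  calc |u x t - u y r| ≤ |u x t - u y t| + |u y t - u y r| := _root_.abs_sub_le _ _ _
    _ ≤ A * |x - y| + B * |t - r| := add_le_add (hx t hts x y) (ht y r hr t hts)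

namespace C3Bound

variable {f : ℝ → ℝ} {M : ℝ}

theorem abs_sub_le (hf : C3Bound f M) (x y : ℝ) : |f x - f y| ≤ M * |x - y| :=
  abs_sub_le_of_hasDerivAt hf.hasDerivAt hf.abs_deriv_le x y

theorem abs_deriv_sub_le (hf : C3Bound f M) (x y : ℝ) :
    |deriv f x - deriv f y| ≤ M * |x - y| :=
  abs_sub_le_of_hasDerivAt hf.hasDerivAt_deriv hf.abs_deriv_deriv_le x y

theorem abs_deriv_deriv_sub_le (hf : C3Bound f M) (x y : ℝ) :
    |deriv (deriv f) x - deriv (deriv f) y| ≤ M * |x - y| :=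
  abs_sub_le_of_hasDerivAt hf.hasDerivAt_deriv_deriv hf.abs_deriv_deriv_deriv_le x y

end C3Bound

/-- Spatially periodic solutions `θ`, bounded in `C³`, of Burgers' equation
`∂_t θ = θ ∂_x θ + f` with forcing `f` on the time interval `[0, h]`. -/
structure ForcedBurgers (θ f : ℝ → ℝ → ℝ) (M per h : ℝ) : Prop where
  c3Bound : ∀ t ∈ Icc 0 h, C3Bound (fun x ↦ θ x t) M
  periodic : ∀ t ∈ Icc 0 h, Function.Periodic (fun x ↦ θ x t) per
  hasDerivWithinAt : ∀ t ∈ Icc 0 h, ∀ x, HasDerivWithinAt (θ x)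
    (θ x t * deriv (fun y ↦ θ y t) x + f x t) (Icc 0 h) t

/-- The unforced equation seen as an evolution equation for a curve `W` in the space of bounded
continuous functions; `W'` is the spatial derivative of `W`. -/
structure BurgersCurve (W W' : ℝ → ℝ →ᵇ ℝ) (M per h : ℝ) : Prop where
  c3Bound : ∀ t ∈ Icc 0 h, C3Bound (W t) M
  coe_eq_deriv : ∀ t ∈ Icc 0 h, ⇑(W' t) = deriv (W t)
  periodic : ∀ t ∈ Icc 0 h, Function.Periodic (W t) per
  hasDerivWithinAt : ∀ t ∈ Icc 0 h, HasDerivWithinAt W (W t * W' t) (Icc 0 h) t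

theorem IsSliceBurgers.exists_burgersCurve {w : ℝ → ℝ → ℝ} {M per h : ℝ}
    (hw : IsSliceBurgers w 0 h) (hb : ∀ t ∈ Icc 0 h, C3Bound (fun x ↦ w x t) M)
    (hper : ∀ t ∈ Icc 0 h, Function.Periodic (fun x ↦ w x t) per) :
    ∃ W W', BurgersCurve W W' M per h ∧ ∀ t ∈ Icc 0 h, ⇑(W t) = fun x ↦ w x t := by
  obtain ⟨W, hW⟩ := exists_boundedContinuous_curve
    (fun t ht ↦ (hb t ht).contDiff.continuous) (fun t ht ↦ (hb t ht).abs_le)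
  obtain ⟨W', hW'⟩ := exists_boundedContinuous_curve (u := fun x t ↦ deriv (fun y ↦ w y t) x)
    (fun t ht ↦ (hb t ht).contDiff_deriv.continuous) (fun t ht ↦ (hb t ht).abs_deriv_le)
  have hWc : ContinuousOn W (Icc 0 h) := by
    refine continuousOn_of_dist_apply_le (m := fun s ↦ M ^ 2 * |s|) (by fun_prop) (by simp)
      fun s hs t ht x ↦ ?_
    rw [hW t ht, hW s hs]
    exact hw.abs_sub_le hb hs ht x
  have hWc' : ContinuousOn W' (Icc 0 h) := by
    refine continuousOn_of_dist_apply_le (m := fun s ↦ (2 * M ^ 2 + 2 * M) * √|s|)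
      (by fun_prop) (by simp) fun s hs t ht x ↦ ?_
    rw [hW' t ht, hW' s hs]
    exact hw.abs_deriv_sub_le hb hs ht x
  refine ⟨W, W', ⟨fun t ht ↦ hW t ht ▸ hb t ht, fun t ht ↦ hW t ht ▸ hW' t ht,
    fun t ht ↦ hW t ht ▸ hper t ht, fun t ht ↦ ?_⟩, hW⟩
  refine hasDerivWithinAt_of_forall_apply ordConnected_Icc (G := fun t ↦ W t * W' t)
    (fun s hs x ↦ ?_) (hWc.mul hWc') ht
  rw [BoundedContinuousFunction.mul_apply, hW s hs, hW' s hs]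
  exact (hw.hasDeriv x s hs).congr (fun u hu ↦ congrFun (hW u hu) x) (congrFun (hW s hs) x)

variable (ν : Measure ℝ) [IsFiniteMeasure ν]

theorem abs_jumpSemigroup_sub_le {t M k : ℝ} (ht : 0 ≤ t) {f : ℝ →ᵇ ℝ}
    (hf : ∀ x, |f (x + k) - f x| ≤ M) (x : ℝ) :
    |jumpSemigroup ν t f (x + k) - jumpSemigroup ν t f x| ≤ M := by
  have := abs_jumpSemigroup_le ν ht (f := shiftOp k f - f) hf x
  rwa [map_sub, BoundedContinuousFunction.sub_apply, jumpSemigroup_shiftOp] at this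

/-- The error made in replacing the forcing `f` by the jump generator with measure `ν`,
acting on `θ`. -/
def jumpResidual (θ f : ℝ → ℝ → ℝ) (x t : ℝ) : ℝ :=
  f x t - ∫ y, (θ (x + y) t - θ x t) ∂ν

variable {ν} {θ f : ℝ → ℝ → ℝ} {W W' : ℝ → ℝ →ᵇ ℝ} {M per h t κ η : ℝ}

namespace BurgersCurve

theorem hasDerivAt (hW : BurgersCurve W W' M per h) (ht : t ∈ Icc 0 h) (x : ℝ) :
    HasDerivAt (W t) (W' t x) x := by
  rw [hW.coe_eq_deriv t ht]
  exact (hW.c3Bound t ht).hasDerivAt x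

theorem abs_apply_le (hW : BurgersCurve W W' M per h) (ht : t ∈ Icc 0 h) (x : ℝ) :
    |W' t x| ≤ M := by
  rw [hW.coe_eq_deriv t ht]
  exact (hW.c3Bound t ht).abs_deriv_le x

theorem abs_apply_sub_le (hW : BurgersCurve W W' M per h) (ht : t ∈ Icc 0 h) (x y : ℝ) :
    |W' t x - W' t y| ≤ M * |x - y| := by
  rw [hW.coe_eq_deriv t ht]
  exact (hW.c3Bound t ht).abs_deriv_sub_le x y

theorem abs_apply_second_sub_le (hW : BurgersCurve W W' M per h) (ht : t ∈ Icc 0 h)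
    (k x y : ℝ) : |W' t (x + k) - W' t x - (W' t (y + k) - W' t y)| ≤ M * |k| * |x - y| := by
  rw [hW.coe_eq_deriv t ht]
  exact abs_second_sub_le (hW.c3Bound t ht).hasDerivAt_deriv
    (hW.c3Bound t ht).abs_deriv_deriv_sub_le k x y

theorem hasDerivWithinAt_jumpSemigroup (hW : BurgersCurve W W' M per h) (ht : t ∈ Icc 0 h) :
    HasDerivWithinAt (fun s ↦ jumpSemigroup ν s (W s))
      (jumpGen ν (jumpSemigroup ν t (W t)) + jumpSemigroup ν t (W t * W' t)) (Icc 0 h) t :=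
  (hasDerivAt_jumpSemigroup ν t).hasDerivWithinAt.clm_apply (hW.hasDerivWithinAt t ht)

theorem continuousOn_jumpSemigroup (hW : BurgersCurve W W' M per h) :
    ContinuousOn (fun p : ℝ × ℝ ↦ jumpSemigroup ν p.2 (W p.2) p.1) (univ ×ˢ Icc 0 h) := by
  have hc : ContinuousOn (fun s ↦ jumpSemigroup ν s (W s)) (Icc 0 h) := fun t ht ↦
    (hW.hasDerivWithinAt_jumpSemigroup ht).continuousWithinAt
  exact (continuous_eval (F := ℝ →ᵇ ℝ)).comp_continuousOn
    ((hc.comp continuousOn_snd fun p hp ↦ hp.2).prodMk continuousOn_fst)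

theorem periodic_jumpSemigroup (hW : BurgersCurve W W' M per h) (ht : t ∈ Icc 0 h) :
    Function.Periodic (jumpSemigroup ν t (W t)) per := fun x ↦ by
  have : shiftOp per (W t) = W t := DFunLike.ext _ _ (hW.periodic t ht)
  rw [← jumpSemigroup_shiftOp, this]

theorem hasDerivAt_jumpSemigroup (hW : BurgersCurve W W' M per h) (ht : t ∈ Icc 0 h) (x : ℝ) :
    HasDerivAt (jumpSemigroup ν t (W t)) (jumpSemigroup ν t (W' t) x) x :=
  hasDerivAt_jumpSemigroup_space ν ht.1 (hW.hasDerivAt ht) (hW.abs_apply_sub_le ht) x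

theorem abs_jumpCov_le [ν.IsNegInvariant] (hW : BurgersCurve W W' M per h)
    (hκ : ∫ y, min 1 (y ^ 2) ∂ν ≤ κ) (ht : t ∈ Icc 0 h) (x : ℝ) :
    |jumpCov ν t (W t) (W' t) x| ≤ 5 * M * M * (κ * t) :=
  have hb := hW.c3Bound t ht
  _root_.abs_jumpCov_le hκ ht.1 hb.abs_le hb.abs_sub_le (hW.abs_apply_le ht)
    (hW.abs_apply_sub_le ht) x

theorem abs_jumpCov_sub_le [ν.IsNegInvariant] (hW : BurgersCurve W W' M per h)
    (hκ : ∫ y, min 1 (y ^ 2) ∂ν ≤ κ) (ht : t ∈ Icc 0 h) (x k : ℝ) :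
    |jumpCov ν t (W t) (W' t) (x + k) - jumpCov ν t (W t) (W' t) x| ≤
      10 * M * M * (κ * t) * |k| :=
  have hb := hW.c3Bound t ht
  _root_.abs_jumpCov_sub_le hκ ht.1 hb.abs_le hb.abs_sub_le
    (abs_second_sub_le hb.hasDerivAt hb.abs_deriv_sub_le) (hW.abs_apply_le ht)
    (hW.abs_apply_sub_le ht) (hW.abs_apply_second_sub_le ht) x k

end BurgersCurve

namespace ForcedBurgers

theorem integrable (hθ : ForcedBurgers θ f M per h) (ht : t ∈ Icc 0 h) (x : ℝ) :
    Integrable (fun y ↦ θ (x + y) t - θ x t) ν :=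
  .sub (integrable_comp_add ν (.ofNormedAddCommGroup _ (hθ.c3Bound t ht).contDiff.continuous M
    (hθ.c3Bound t ht).abs_le) x) (integrable_const _)

theorem abs_forcing_le (hθ : ForcedBurgers θ f M per h)
    (hη : ∀ t ∈ Icc 0 h, ∀ x, |jumpResidual ν θ f x t| ≤ η) (ht : t ∈ Icc 0 h) (x : ℝ) :
    |f x t| ≤ η + 2 * M * ν.real univ := by
  have hsub (y : ℝ) : |θ (x + y) t - θ x t| ≤ 2 * M := (abs_sub _ _).trans
    (by linarith [(hθ.c3Bound t ht).abs_le (x + y), (hθ.c3Bound t ht).abs_le x])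
  have hint : |∫ y, (θ (x + y) t - θ x t) ∂ν| ≤ 2 * M * ν.real univ :=
    norm_integral_le_of_norm_le_const (μ := ν) (f := fun y ↦ θ (x + y) t - θ x t)
      (.of_forall hsub)
  rw [← sub_add_cancel (f x t) (∫ y, (θ (x + y) t - θ x t) ∂ν)]
  exact (abs_add_le _ _).trans (add_le_add (hη t ht x) hint)

theorem continuousOn (hθ : ForcedBurgers θ f M per h) {F : ℝ}
    (hF : ∀ t ∈ Icc 0 h, ∀ x, |f x t| ≤ F) :
    ContinuousOn (fun p : ℝ × ℝ ↦ θ p.1 p.2) (univ ×ˢ Icc 0 h) := by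
  refine continuousOn_uncurry_of_abs_sub_le (fun t ht ↦ (hθ.c3Bound t ht).abs_sub_le)
    (B := M * M + F) fun x r hr t ht ↦ ?_
  refine (convex_Icc 0 h).norm_image_sub_le_of_norm_hasDerivWithin_le
    (fun s hs ↦ hθ.hasDerivWithinAt s hs x) (fun s hs ↦ (norm_add_le _ _).trans ?_) hr ht
  have hb := hθ.c3Bound s hs
  rw [norm_mul]
  exact add_le_add (mul_le_mul (hb.abs_le x) (hb.abs_deriv_le x) (abs_nonneg _) hb.nonneg)
    (hF s hs x)

-- If `S_t` commuted with `w ↦ w ∂_x w`, then `S_t W_t` would solve the same equation as `θ`; the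
-- failure is the covariance of `W` and `∂_x W` under `S_t`.
theorem nonlocalSol (hθ : ForcedBurgers θ f M per h)
    (hη : ∀ t ∈ Icc 0 h, ∀ x, |jumpResidual ν θ f x t| ≤ η)
    (hW : BurgersCurve W W' M per h) (hWθ : ∀ x, W 0 x = θ x 0) :
    NonlocalSol ν (fun x t ↦ θ x t - jumpSemigroup ν t (W t) x)
      (fun x t ↦ deriv (fun y ↦ θ y t) x - jumpSemigroup ν t (W' t) x) θ
      (fun x t ↦ jumpSemigroup ν t (W' t) x)
      (fun x t ↦ jumpResidual ν θ f x t - jumpCov ν t (W t) (W' t) x) per h where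
  continuousOn :=
    (hθ.continuousOn fun _ ↦ hθ.abs_forcing_le hη).sub hW.continuousOn_jumpSemigroup
  periodic t ht := (hθ.periodic t ht).sub (hW.periodic_jumpSemigroup ht)
  apply_zero x := by
    rw [jumpSemigroup_zero, ← hWθ x]
    exact sub_self _
  hasDerivAt t ht x := ((hθ.c3Bound t ht).hasDerivAt x).sub (hW.hasDerivAt_jumpSemigroup ht x)
  hasDerivWithinAt t ht x := by
    have hS := (BoundedContinuousFunction.evalCLM ℝ x).hasFDerivAt.comp_hasDerivWithinAt t
      (hW.hasDerivWithinAt_jumpSemigroup (ν := ν) ht)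
    refine ((hθ.hasDerivWithinAt t ht x).sub hS).congr_deriv ?_
    have hint : ∫ y, (θ (x + y) t - jumpSemigroup ν t (W t) (x + y) -
          (θ x t - jumpSemigroup ν t (W t) x)) ∂ν =
        (∫ y, (θ (x + y) t - θ x t) ∂ν) - jumpGen ν (jumpSemigroup ν t (W t)) x := by
      simp_rw [sub_sub_sub_comm]
      rw [jumpGen_apply]
      exact integral_sub (hθ.integrable ht x)
        ((integrable_comp_add ν _ x).sub (integrable_const _))
    rw [hint, jumpResidual, jumpCov_apply, BoundedContinuousFunction.evalCLM_apply,
      BoundedContinuousFunction.add_apply]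
    ring

variable [ν.IsNegInvariant]

theorem abs_sub_jumpSemigroup_le (hθ : ForcedBurgers θ f M per h)
    (hη : ∀ t ∈ Icc 0 h, ∀ x, |jumpResidual ν θ f x t| ≤ η) (hW : BurgersCurve W W' M per h)
    (hWθ : ∀ x, W 0 x = θ x 0) (hper : 0 < per) (hκ : ∫ y, min 1 (y ^ 2) ∂ν ≤ κ)
    (ht : t ∈ Icc 0 h) (x : ℝ) :
    |θ x t - jumpSemigroup ν t (W t) x| ≤
      Real.exp (M * h) * ((5 * M * M * (κ * h) + η) * h) := by
  have hM : 0 ≤ M := (hW.c3Bound t ht).nonneg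
  have hκ₀ : 0 ≤ κ := (integral_nonneg fun y ↦ by positivity).trans hκ
  have hη₀ : 0 ≤ η := (abs_nonneg _).trans (hη t ht x)
  have hh : 0 ≤ h := ht.1.trans ht.2
  have hg : ∀ t ∈ Icc 0 h, ∀ x, |jumpResidual ν θ f x t - jumpCov ν t (W t) (W' t) x| ≤
      5 * M * M * (κ * h) + η := fun t ht x ↦ by
    have : 5 * M * M * (κ * t) ≤ 5 * M * M * (κ * h) := by gcongr; exact ht.2
    linarith [abs_sub (jumpResidual ν θ f x t) (jumpCov ν t (W t) (W' t) x), hη t ht x,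
      hW.abs_jumpCov_le hκ ht x]
  refine ((hθ.nonlocalSol hη hW hWθ).abs_le hper (fun t ht ↦ abs_jumpSemigroup_le ν ht.1
    (hW.abs_apply_le ht)) hg ht x).trans ?_
  obtain ⟨ht₀, hth⟩ := ht
  gcongr

theorem abs_increment_sub_jumpSemigroup_le (hθ : ForcedBurgers θ f M per h)
    (hη : ∀ t ∈ Icc 0 h, ∀ x, |jumpResidual ν θ f x t| ≤ η)
    (hη' : ∀ t ∈ Icc 0 h, ∀ x k,
      |jumpResidual ν θ f (x + k) t - jumpResidual ν θ f x t| ≤ η * |k|)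
    (hW : BurgersCurve W W' M per h) (hWθ : ∀ x, W 0 x = θ x 0) (hper : 0 < per)
    (hκ : ∫ y, min 1 (y ^ 2) ∂ν ≤ κ) (ht : t ∈ Icc 0 h) (x : ℝ) {k : ℝ} (hk : k ∈ Icc 0 per) :
    |(θ (x + k) t - jumpSemigroup ν t (W t) (x + k)) - (θ x t - jumpSemigroup ν t (W t) x)| ≤
      Real.exp (M * t) * ((M * (Real.exp (M * h) * ((5 * M * M * (κ * h) + η) * h)) +
        (10 * M * M * (κ * h) + η)) * Real.exp (M * t) * t * k) := by
  have hM : 0 ≤ M := (hW.c3Bound t ht).nonneg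
  have hκ₀ : 0 ≤ κ := (integral_nonneg fun y ↦ by positivity).trans hκ
  have hg : ∀ t ∈ Icc 0 h, ∀ x k, |jumpResidual ν θ f (x + k) t -
      jumpCov ν t (W t) (W' t) (x + k) - (jumpResidual ν θ f x t - jumpCov ν t (W t) (W' t) x)| ≤
        (10 * M * M * (κ * h) + η) * |k| := fun t ht x k ↦ by
    have : 10 * M * M * (κ * t) * |k| ≤ 10 * M * M * (κ * h) * |k| := by gcongr; exact ht.2
    rw [sub_sub_sub_comm]
    refine (abs_sub _ _).trans ?_
    linarith [hη' t ht x k, hW.abs_jumpCov_sub_le hκ ht x k]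
  exact (hθ.nonlocalSol hη hW hWθ).abs_sub_le hper
    (fun t ht ↦ abs_jumpSemigroup_le ν ht.1 (hW.abs_apply_le ht))
    (fun t ht x k ↦ by simpa using (hθ.c3Bound t ht).abs_sub_le (x + k) x)
    (fun t ht x k ↦ abs_jumpSemigroup_sub_le ν ht.1
      (fun x ↦ by simpa using hW.abs_apply_sub_le ht (x + k) x) x) hg
    (fun t ht ↦ hθ.abs_sub_jumpSemigroup_le hη hW hWθ hper hκ ht) ht x hk

end ForcedBurgers

end Splitting

/-! ### Truncation of the Lévy measure -/

theorem integrable_of_even {f : ℝ → ℝ} (heven : ∀ x, f (-x) = f x)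
    (hf : IntegrableOn f (Ioi 0)) : Integrable f := by
  rw [← integrableOn_univ, ← Iic_union_Ioi (a := (0 : ℝ))]
  refine IntegrableOn.union ?_ hf
  rw [integrableOn_Iic_iff_integrableOn_Iio]
  have hneg := ((Measure.measurePreserving_neg (volume : Measure ℝ)).integrableOn_comp_preimage
    (Homeomorph.neg ℝ).measurableEmbedding).2 hf
  rw [show f ∘ Neg.neg = f from funext heven] at hneg
  simpa using hneg

theorem measurableSet_lt_abs (ε : ℝ) : MeasurableSet {y : ℝ | ε < |y|} :=
  measurableSet_lt measurable_const (by fun_prop)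

theorem tendsto_setIntegral_lt_abs {g : ℝ → ℝ} (hg : Integrable g) :
    Tendsto (fun ε ↦ ∫ y in {y : ℝ | ε < |y|}, g y) (𝓝[>] 0) (𝓝 (∫ y, g y)) := by
  simp only [← integral_indicator (measurableSet_lt_abs _)]
  refine tendsto_integral_filter_of_dominated_convergence (fun y ↦ ‖g y‖)
    (.of_forall fun ε ↦ hg.aestronglyMeasurable.indicator (measurableSet_lt_abs ε))
    (.of_forall fun ε ↦ .of_forall fun y ↦ norm_indicator_le_norm_self _ _) hg.norm ?_
  filter_upwards [compl_mem_ae_iff.2 (measure_singleton (0 : ℝ))] with y hy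
  refine tendsto_const_nhds.congr' ?_
  filter_upwards [mem_nhdsWithin_of_mem_nhds (Iio_mem_nhds (abs_pos.2 hy))] with ε hε
  exact (indicator_of_mem (s := {y : ℝ | ε < |y|}) hε g).symm

theorem setIntegral_lt_abs_neg (ε : ℝ) (u : ℝ → ℝ) :
    ∫ y in {y : ℝ | ε < |y|}, u (-y) = ∫ y in {y : ℝ | ε < |y|}, u y := by
  rw [← integral_indicator (measurableSet_lt_abs ε), ← integral_indicator (measurableSet_lt_abs ε),
    ← integral_neg_eq_self ({y : ℝ | ε < |y|}.indicator u)]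
  congr 1
  ext y
  simp [indicator, abs_neg]

/-- The density `|y| ^ (-1 - 2α)` of the Lévy measure, weighted by `min 1 y²`; its integral is the
moment of the jump measure which controls the generator on functions with Lipschitz derivative. -/
def levyWeight (α y : ℝ) : ℝ := min 1 (y ^ 2) / |y| ^ (1 + 2 * α)

/-- The `levyWeight` of the jumps of size at most `ε`. -/
def levyTail (α ε : ℝ) : ℝ := ∫ y in {y : ℝ | ε < |y|}ᶜ, levyWeight α y

/-- The Lévy measure `|y| ^ (-1 - 2α) dy` of the dissipation, restricted to jumps larger than
`ε`. -/
def truncLevy (α ε : ℝ) : Measure ℝ :=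
  (volume.restrict {y : ℝ | ε < |y|}).withDensity fun y ↦ ENNReal.ofReal (1 / |y| ^ (1 + 2 * α))

theorem levyWeight_nonneg (α y : ℝ) : 0 ≤ levyWeight α y := by
  unfold levyWeight
  positivity

theorem integral_truncLevy (α ε : ℝ) (u : ℝ → ℝ) :
    ∫ y, u y ∂(truncLevy α ε) = ∫ y in {y : ℝ | ε < |y|}, u y / |y| ^ (1 + 2 * α) := by
  rw [truncLevy, integral_withDensity_eq_integral_toReal_smul (by fun_prop)
    (.of_forall fun _ ↦ ENNReal.ofReal_lt_top)]
  congr 1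
  ext y
  rw [ENNReal.toReal_ofReal (by positivity), smul_eq_mul, one_div_mul_eq_div]

instance isNegInvariant_truncLevy (α ε : ℝ) : (truncLevy α ε).IsNegInvariant where
  neg_eq_self := by
    ext s hs
    rw [Measure.neg_apply, truncLevy, withDensity_apply _ hs.neg, withDensity_apply _ hs,
      Measure.restrict_restrict hs.neg, Measure.restrict_restrict hs,
      ← lintegral_indicator (hs.neg.inter (measurableSet_lt_abs ε)),
      ← lintegral_indicator (hs.inter (measurableSet_lt_abs ε)), ← lintegral_neg_eq_self]
    congr 1
    ext y
    have hmem : -y ∈ -s ∩ {y : ℝ | ε < |y|} ↔ y ∈ s ∩ {y : ℝ | ε < |y|} := by simp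
    by_cases hy : y ∈ s ∩ {y : ℝ | ε < |y|}
    · rw [indicator_of_mem (hmem.2 hy), indicator_of_mem hy, abs_neg]
    · rw [indicator_of_notMem (mt hmem.1 hy), indicator_of_notMem hy]

section

variable {α ε : ℝ}

theorem integrable_levyWeight (hα₀ : 0 < α) (hα₁ : α < 1) : Integrable (levyWeight α) := by
  refine integrable_of_even (fun x ↦ by simp [levyWeight]) ?_
  rw [← Ioo_union_Ici_eq_Ioi (zero_lt_one' ℝ)]
  refine IntegrableOn.union ?_ ?_
  · refine ((intervalIntegral.integrableOn_Ioo_rpow_iff (s := 1 - 2 * α) one_pos).2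
      (by linarith)).congr_fun (fun y hy ↦ ?_) measurableSet_Ioo
    rw [levyWeight, min_eq_right (by nlinarith [hy.1, hy.2]), abs_of_pos hy.1,
      ← Real.rpow_natCast y 2, ← Real.rpow_sub hy.1]
    norm_num
    ring_nf
  · rw [integrableOn_Ici_iff_integrableOn_Ioi]
    refine (integrableOn_Ioi_rpow_of_lt (a := -(1 + 2 * α)) (by linarith) one_pos).congr_fun
      (fun y (hy : 1 < y) ↦ ?_) measurableSet_Ioi
    have hy₀ : 0 < y := one_pos.trans hy
    change y ^ (-(1 + 2 * α)) = _
    rw [levyWeight, min_eq_left (by nlinarith), abs_of_pos hy₀, Real.rpow_neg hy₀.le, one_div]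

theorem tendsto_levyTail (hα₀ : 0 < α) (hα₁ : α < 1) :
    Tendsto (levyTail α) (𝓝[>] 0) (𝓝 0) := by
  have hlim := (tendsto_setIntegral_lt_abs (integrable_levyWeight hα₀ hα₁)).const_sub
    (∫ y, levyWeight α y)
  rw [sub_self] at hlim
  refine hlim.congr fun ε ↦ ?_
  rw [levyTail, setIntegral_compl (measurableSet_lt_abs ε) (integrable_levyWeight hα₀ hα₁)]

theorem integral_min_truncLevy_le (hα₀ : 0 < α) (hα₁ : α < 1) :
    ∫ y, min 1 (y ^ 2) ∂(truncLevy α ε) ≤ ∫ y, levyWeight α y := by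
  rw [integral_truncLevy]
  exact setIntegral_le_integral (integrable_levyWeight hα₀ hα₁) (.of_forall (levyWeight_nonneg α))

theorem integrableOn_one_div_rpow (hα₀ : 0 < α) (hα₁ : α < 1) (hε : 0 < ε) :
    IntegrableOn (fun y : ℝ ↦ 1 / |y| ^ (1 + 2 * α)) {y : ℝ | ε < |y|} := by
  have hmin : 0 < min 1 (ε ^ 2) := by positivity
  refine Integrable.mono' (((integrable_levyWeight hα₀ hα₁).const_mul
    (min 1 (ε ^ 2))⁻¹).integrableOn) (Measurable.aestronglyMeasurable (by fun_prop)) ?_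
  filter_upwards [ae_restrict_mem (measurableSet_lt_abs ε)] with y (hy : ε < |y|)
  rw [Real.norm_eq_abs, abs_of_nonneg (by positivity), levyWeight, ← mul_div_assoc]
  gcongr
  rw [← div_eq_inv_mul, one_le_div₀ hmin, ← sq_abs y]
  gcongr

theorem isFiniteMeasure_truncLevy (hα₀ : 0 < α) (hα₁ : α < 1) (hε : 0 < ε) :
    IsFiniteMeasure (truncLevy α ε) :=
  isFiniteMeasure_withDensity_ofReal (integrableOn_one_div_rpow hα₀ hα₁ hε).hasFiniteIntegral

theorem integrableOn_div_rpow (hα₀ : 0 < α) (hα₁ : α < 1) (hε : 0 < ε) {u : ℝ → ℝ}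
    (hu : Continuous u) {B : ℝ} (hB : ∀ y, |u y| ≤ B) :
    IntegrableOn (fun y : ℝ ↦ u y / |y| ^ (1 + 2 * α)) {y : ℝ | ε < |y|} := by
  refine Integrable.mono' ((integrableOn_one_div_rpow hα₀ hα₁ hε).const_mul B)
    (Measurable.aestronglyMeasurable (hu.measurable.div (by fun_prop))) (.of_forall fun y ↦ ?_)
  rw [Real.norm_eq_abs, abs_div, abs_of_nonneg (a := |y| ^ (1 + 2 * α)) (by positivity),
    mul_one_div]
  gcongr
  exact hB y

end

/-- The integral defining `L_α f x`, restricted to `|y| > ε`. -/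
def truncDissip (α ε : ℝ) (f : ℝ → ℝ) (x : ℝ) : ℝ :=
  ∫ y in {y : ℝ | ε < |y|}, (f x - f (x + y)) / |y| ^ (1 + 2 * α)

/-- The principal value `L_α f x` exists and equals `l`. -/
def HasFracDissipAt (α : ℝ) (f : ℝ → ℝ) (l x : ℝ) : Prop :=
  Tendsto (fun ε ↦ truncDissip α ε f x) (𝓝[>] 0) (𝓝 l)

theorem integral_sub_truncLevy (α ε : ℝ) (f : ℝ → ℝ) (x : ℝ) :
    ∫ y, (f (x + y) - f x) ∂(truncLevy α ε) = -truncDissip α ε f x := by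
  rw [integral_truncLevy, truncDissip, ← integral_neg]
  congr 1
  ext y
  rw [← neg_div, neg_sub]

/-- The integrand of `L_α f x`, symmetrized in `y` up to a factor `2`: unlike the original one it
is integrable, so that the principal value becomes an honest integral. -/
def symmIntegrand (α : ℝ) (f : ℝ → ℝ) (x y : ℝ) : ℝ :=
  (2 * f x - f (x + y) - f (x - y)) / |y| ^ (1 + 2 * α)

theorem integrableOn_sub_div_rpow {α ε B : ℝ} (hα₀ : 0 < α) (hα₁ : α < 1) (hε : 0 < ε)
    {f g : ℝ → ℝ} (hf : Continuous f) (hB : ∀ x, |f x| ≤ B) (hg : Continuous g) (x : ℝ) :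
    IntegrableOn (fun y ↦ (f x - f (g y)) / |y| ^ (1 + 2 * α)) {y : ℝ | ε < |y|} :=
  integrableOn_div_rpow hα₀ hα₁ hε (by fun_prop) (B := 2 * B) fun y ↦
    (abs_sub _ _).trans (by linarith [hB x, hB (g y)])

theorem truncDissip_eq_symmIntegrand {α ε B : ℝ} (hα₀ : 0 < α) (hα₁ : α < 1) (hε : 0 < ε)
    {f : ℝ → ℝ} (hf : Continuous f) (hB : ∀ x, |f x| ≤ B) (x : ℝ) :
    truncDissip α ε f x = (∫ y in {y : ℝ | ε < |y|}, symmIntegrand α f x y) / 2 := by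
  have hint {g : ℝ → ℝ} (hg : Continuous g) :=
    integrableOn_sub_div_rpow hα₀ hα₁ hε hf hB hg x
  have hneg := setIntegral_lt_abs_neg ε fun y ↦ (f x - f (x + y)) / |y| ^ (1 + 2 * α)
  simp only [abs_neg, ← sub_eq_add_neg] at hneg
  have hadd := integral_add (hint (continuous_const_add x)) (hint (continuous_sub_left x))
  simp only [hneg, ← add_div] at hadd
  rw [truncDissip, eq_div_iff two_ne_zero, mul_two, ← hadd]
  simp only [symmIntegrand]
  ring_nf

section

variable {α B : ℝ} {f f' : ℝ → ℝ}

theorem abs_second_diff_le (hf : ∀ x, HasDerivAt f (f' x) x) (hB : ∀ x, |f x| ≤ B)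
    (hlip : ∀ x y, |f' x - f' y| ≤ B * |x - y|) (x y : ℝ) :
    |2 * f x - f (x + y) - f (x - y)| ≤ 4 * B * min 1 (y ^ 2) := by
  have hB₀ : 0 ≤ B := (abs_nonneg _).trans (hB 0)
  rw [mul_min_of_nonneg _ _ (by positivity)]
  refine le_min ?_ ?_
  · grind [hB x, hB (x + y), hB (x - y)]
  · have htaylor (z : ℝ) : |f z - f x - (z - x) * f' x| ≤ B * (z - x) ^ 2 :=
      abs_taylor_le convex_univ (fun u _ ↦ hf u) (fun u _ ↦ hlip u x) (mem_univ x) (mem_univ z)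
    have h₁ := htaylor (x + y)
    have h₂ := htaylor (x - y)
    have : 0 ≤ B * y ^ 2 := by positivity
    grind

theorem abs_symmIntegrand_le (hf : ∀ x, HasDerivAt f (f' x) x) (hB : ∀ x, |f x| ≤ B)
    (hlip : ∀ x y, |f' x - f' y| ≤ B * |x - y|) (α x y : ℝ) :
    |symmIntegrand α f x y| ≤ 4 * B * levyWeight α y := by
  rw [symmIntegrand, levyWeight, abs_div, abs_of_nonneg (a := |y| ^ (1 + 2 * α)) (by positivity),
    ← mul_div_assoc]
  gcongr
  exact abs_second_diff_le hf hB hlip x y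

theorem integrable_symmIntegrand (hf : ∀ x, HasDerivAt f (f' x) x) (hB : ∀ x, |f x| ≤ B)
    (hlip : ∀ x y, |f' x - f' y| ≤ B * |x - y|)
    (hα₀ : 0 < α) (hα₁ : α < 1) (x : ℝ) : Integrable (symmIntegrand α f x) := by
  have hcont : Continuous f := continuous_iff_continuousAt.2 fun x ↦ (hf x).continuousAt
  exact .mono' ((integrable_levyWeight hα₀ hα₁).const_mul (4 * B))
    (Measurable.aestronglyMeasurable (by unfold symmIntegrand; fun_prop))
    (.of_forall (abs_symmIntegrand_le hf hB hlip α x))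

theorem HasFracDissipAt.abs_sub_truncDissip_le {ε x l : ℝ} (hl : HasFracDissipAt α f l x)
    (hf : ∀ x, HasDerivAt f (f' x) x) (hB : ∀ x, |f x| ≤ B)
    (hlip : ∀ x y, |f' x - f' y| ≤ B * |x - y|)
    (hα₀ : 0 < α) (hα₁ : α < 1) (hε : 0 < ε) :
    |l - truncDissip α ε f x| ≤ 2 * B * levyTail α ε := by
  have hcont : Continuous f := continuous_iff_continuousAt.2 fun x ↦ (hf x).continuousAt
  have hint := integrable_symmIntegrand hf hB hlip hα₀ hα₁ x
  have hl' : l = (∫ y, symmIntegrand α f x y) / 2 := by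
    refine tendsto_nhds_unique hl (((tendsto_setIntegral_lt_abs hint).div_const 2).congr' ?_)
    filter_upwards [self_mem_nhdsWithin] with ε hε
    exact (truncDissip_eq_symmIntegrand hα₀ hα₁ hε hcont hB x).symm
  have hle : |∫ y in {y : ℝ | ε < |y|}ᶜ, symmIntegrand α f x y| ≤
      ∫ y in {y : ℝ | ε < |y|}ᶜ, 4 * B * levyWeight α y :=
    norm_integral_le_of_norm_le (f := symmIntegrand α f x)
      ((integrable_levyWeight hα₀ hα₁).const_mul (4 * B)).integrableOn
      (.of_forall (abs_symmIntegrand_le hf hB hlip α x))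
  rw [truncDissip_eq_symmIntegrand hα₀ hα₁ hε hcont hB x, hl', ← sub_div,
    ← setIntegral_compl (measurableSet_lt_abs ε) hint, abs_div, abs_two, div_le_iff₀ two_pos]
  rw [integral_const_mul, ← levyTail] at hle
  linarith

theorem truncDissip_increment {ε : ℝ} (hf : Continuous f) (hB : ∀ x, |f x| ≤ B) (hα₀ : 0 < α)
    (hα₁ : α < 1) (hε : 0 < ε) (x k : ℝ) :
    truncDissip α ε (fun y ↦ f (y + k) - f y) x =
      truncDissip α ε f (x + k) - truncDissip α ε f x := by
  have hint := fun x ↦ integrableOn_sub_div_rpow hα₀ hα₁ hε hf hB (continuous_const_add x) x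
  rw [truncDissip, truncDissip, truncDissip, ← integral_sub (hint _) (hint _)]
  simp only [add_right_comm x _ k]
  congr 1
  ext y
  ring

theorem HasFracDissipAt.increment {x k l l' : ℝ} (hl : HasFracDissipAt α f l x)
    (hl' : HasFracDissipAt α f l' (x + k)) (hf : Continuous f) (hB : ∀ x, |f x| ≤ B)
    (hα₀ : 0 < α) (hα₁ : α < 1) :
    HasFracDissipAt α (fun y ↦ f (y + k) - f y) (l' - l) x := by
  refine (Tendsto.sub hl' hl).congr' ?_
  filter_upwards [self_mem_nhdsWithin] with ε hε
  exact (truncDissip_increment hf hB hα₀ hα₁ hε x k).symm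

end

/-! ### The fractional heat kernel -/

/-- The cosine transform of the measure `F dμ`, that is its characteristic function if that
measure is symmetric. -/
def cosTransform (μ : Measure ℝ) (F : ℝ → ℝ) (x : ℝ) : ℝ := ∫ s, F s * Real.cos (x * s) ∂μ

section CosTransform

variable {μ ν : Measure ℝ} {F G : ℝ → ℝ}

theorem integrable_mul_cos (hF : Integrable F μ) (a c : ℝ) :
    Integrable (fun y ↦ F y * Real.cos (a * y + c)) μ :=
  hF.mul_bdd (c := 1) (by fun_prop) (.of_forall fun _ ↦ Real.abs_cos_le_one _)

theorem integrable_mul_sin (hF : Integrable F μ) (a : ℝ) :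
    Integrable (fun y ↦ F y * Real.sin (a * y)) μ :=
  hF.mul_bdd (c := 1) (by fun_prop) (.of_forall fun _ ↦ Real.abs_sin_le_one _)

theorem abs_cosTransform_le (hF : Integrable F μ) (x : ℝ) :
    |cosTransform μ F x| ≤ ∫ s, ‖F s‖ ∂μ :=
  norm_integral_le_of_norm_le (f := fun s ↦ F s * Real.cos (x * s)) hF.norm <| .of_forall fun _ ↦
    (norm_mul_le _ _).trans (mul_le_of_le_one_right (norm_nonneg _) (Real.abs_cos_le_one _))

theorem continuous_cosTransform (hF : Integrable F μ) : Continuous (cosTransform μ F) :=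
  continuous_of_dominated (bound := fun s ↦ ‖F s‖)
    (fun x ↦ hF.aestronglyMeasurable.mul (by fun_prop))
    (fun x ↦ .of_forall fun s ↦
      (norm_mul_le _ _).trans (mul_le_of_le_one_right (norm_nonneg _) (Real.abs_cos_le_one _)))
    hF.norm (.of_forall fun s ↦ by fun_prop)

theorem integral_even_mul_sin [μ.IsNegInvariant] (heven : ∀ y, F (-y) = F y) (a : ℝ) :
    ∫ y, F y * Real.sin (a * y) ∂μ = 0 := by
  have h := integral_neg_eq_self (fun y ↦ F y * Real.sin (a * y)) μ
  simp only [heven, mul_neg, Real.sin_neg, integral_neg] at h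
  linarith

theorem integral_even_mul_cos_add [μ.IsNegInvariant] (hF : Integrable F μ)
    (heven : ∀ y, F (-y) = F y) (a c : ℝ) :
    ∫ y, F y * Real.cos (a * y + c) ∂μ = Real.cos c * cosTransform μ F a := by
  have hcos : Integrable (fun y ↦ F y * Real.cos (a * y)) μ := by
    simpa using integrable_mul_cos hF a 0
  simp only [Real.cos_add, mul_sub, ← mul_assoc]
  rw [integral_sub (hcos.mul_const _) ((integrable_mul_sin hF a).mul_const _), integral_mul_const,
    integral_mul_const, integral_even_mul_sin heven, cosTransform]
  ring

theorem integral_even_mul_cexp [μ.IsNegInvariant] (hF : Integrable F μ)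
    (heven : ∀ y, F (-y) = F y) (a : ℝ) :
    ∫ v, Complex.exp ((a * v : ℝ) * Complex.I) * (F v : ℂ) ∂μ = (cosTransform μ F a : ℂ) := by
  have hcos : Integrable (fun y ↦ F y * Real.cos (a * y)) μ := by
    simpa using integrable_mul_cos hF a 0
  have hsplit (v : ℝ) : Complex.exp ((a * v : ℝ) * Complex.I) * (F v : ℂ) =
      ((F v * Real.cos (a * v) : ℝ) : ℂ) + ((F v * Real.sin (a * v) : ℝ) : ℂ) * Complex.I := by
    rw [Complex.exp_mul_I, ← Complex.ofReal_cos, ← Complex.ofReal_sin]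
    push_cast
    ring
  simp only [hsplit]
  rw [integral_add hcos.ofReal ((integrable_mul_sin hF a).ofReal.mul_const _), integral_mul_const,
    integral_complex_ofReal, integral_complex_ofReal, integral_even_mul_sin heven,
    Complex.ofReal_zero, zero_mul, add_zero, cosTransform]

theorem integral_cosTransform_add_mul [SFinite μ] [SFinite ν] (hF : Integrable F μ)
    (hG : Integrable G ν) (z : ℝ) :
    ∫ x, cosTransform μ F (z + x) * G x ∂ν =
      ∫ s, F s * ∫ x, G x * Real.cos (s * x + z * s) ∂ν ∂μ := by
  have hint : Integrable (Function.uncurry fun x s ↦ F s * Real.cos ((z + x) * s) * G x)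
      (ν.prod μ) := by
    refine ((hG.mul_prod hF).mul_bdd (c := 1) (g := fun p ↦ Real.cos ((z + p.1) * p.2))
      (by fun_prop) (.of_forall fun _ ↦ Real.abs_cos_le_one _)).congr (.of_forall fun p ↦ ?_)
    simp only [Function.uncurry_def]
    ring
  simp only [cosTransform, ← integral_mul_const, ← integral_const_mul]
  rw [integral_integral_swap hint]
  congr! 4
  ring_nf

theorem cosTransform_gaussian {δ : ℝ} (hδ : 0 < δ) (z : ℝ) :
    cosTransform volume (fun s ↦ Real.exp (-δ * s ^ 2)) z =
      √(Real.pi / δ) * Real.exp (-z ^ 2 / (4 * δ)) := by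
  have hfourier := fourierIntegral_gaussian (b := (δ : ℂ)) (by simpa using hδ) (z : ℂ)
  have hcast (s : ℝ) : Complex.exp (Complex.I * z * s) * Complex.exp (-δ * (s : ℂ) ^ 2) =
      Complex.exp ((z * s : ℝ) * Complex.I) * (Real.exp (-δ * s ^ 2) : ℝ) := by
    push_cast
    ring_nf
  simp only [hcast] at hfourier
  rw [integral_even_mul_cexp (integrable_exp_neg_mul_sq hδ) fun y ↦ by simp] at hfourier
  rw [← Complex.ofReal_inj, hfourier, Real.sqrt_eq_rpow, Complex.ofReal_mul,
    Complex.ofReal_cpow (by positivity)]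
  push_cast
  rfl

theorem integrable_of_integral_mul_gaussian_le {K : ℝ → ℝ} {C : ℝ} (hK : Continuous K)
    (hK₀ : ∀ x, 0 ≤ K x) (hint : ∀ δ > 0, Integrable fun x ↦ K x * Real.exp (-δ * x ^ 2))
    (hC : ∀ δ > 0, ∫ x, K x * Real.exp (-δ * x ^ 2) ≤ C) : Integrable K := by
  refine integrable_of_intervalIntegral_norm_bounded (l := atTop) (a := fun r ↦ -r) (b := id)
    (Real.exp 1 * C) (fun r ↦ (hK.integrableOn_Icc (a := -r) (b := r)).mono_set Ioc_subset_Icc_self)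
    tendsto_neg_atTop_atBot tendsto_id ?_
  filter_upwards [eventually_gt_atTop 0] with r hr
  have hδ : 0 < 1 / r ^ 2 := by positivity
  have hle : ∀ x ∈ Ioc (-r) r, ‖K x‖ ≤ Real.exp 1 * (K x * Real.exp (-(1 / r ^ 2) * x ^ 2)) := by
    intro x hx
    have hx' : 1 / r ^ 2 * x ^ 2 ≤ 1 := by
      rw [one_div_mul_eq_div, div_le_one₀ (by positivity)]
      exact sq_le_sq' hx.1.le hx.2
    rw [Real.norm_of_nonneg (hK₀ x), mul_left_comm, ← Real.exp_add]
    exact le_mul_of_one_le_right (hK₀ x) (Real.one_le_exp (by linarith))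
  rw [intervalIntegral.integral_of_le (by simp; linarith)]
  calc ∫ x in Ioc (-r) r, ‖K x‖
      ≤ ∫ x in Ioc (-r) r, Real.exp 1 * (K x * Real.exp (-(1 / r ^ 2) * x ^ 2)) :=
        setIntegral_mono_on ((hK.norm.integrableOn_Icc).mono_set Ioc_subset_Icc_self)
          ((hint _ hδ).const_mul _).integrableOn measurableSet_Ioc hle
    _ ≤ ∫ x, Real.exp 1 * (K x * Real.exp (-(1 / r ^ 2) * x ^ 2)) :=
        setIntegral_le_integral ((hint _ hδ).const_mul _) (.of_forall fun x ↦ by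
          have := hK₀ x
          positivity)
    _ ≤ Real.exp 1 * C := by
        rw [integral_const_mul]
        gcongr
        exact hC _ hδ

theorem integral_cosTransform_mul_gaussian_le (hF : Integrable F) (hF₁ : ∀ s, F s ≤ 1) {δ : ℝ}
    (hδ : 0 < δ) :
    ∫ x, cosTransform volume F x * Real.exp (-δ * x ^ 2) ≤ 2 * Real.pi := by
  have hδ' : 0 < 1 / (4 * δ) := by positivity
  have hswap : ∫ x, cosTransform volume F x * Real.exp (-δ * x ^ 2) =
      ∫ s, F s * cosTransform volume (fun x ↦ Real.exp (-δ * x ^ 2)) s := by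
    simpa [cosTransform] using integral_cosTransform_add_mul hF (integrable_exp_neg_mul_sq hδ) 0
  have hgauss (s : ℝ) : cosTransform volume (fun x ↦ Real.exp (-δ * x ^ 2)) s =
      √(Real.pi / δ) * Real.exp (-(1 / (4 * δ)) * s ^ 2) := by
    rw [cosTransform_gaussian hδ]
    ring_nf
  rw [hswap]
  calc ∫ s, F s * cosTransform volume (fun x ↦ Real.exp (-δ * x ^ 2)) s
      ≤ ∫ s, √(Real.pi / δ) * Real.exp (-(1 / (4 * δ)) * s ^ 2) := by
        refine integral_mono (hF.mul_bdd (c := ∫ x, ‖Real.exp (-δ * x ^ 2)‖)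
          (continuous_cosTransform (integrable_exp_neg_mul_sq hδ)).aestronglyMeasurable
          (.of_forall (abs_cosTransform_le (integrable_exp_neg_mul_sq hδ))))
          ((integrable_exp_neg_mul_sq hδ').const_mul _) fun s ↦ ?_
        rw [hgauss]
        exact mul_le_of_le_one_left (by positivity) (hF₁ s)
    _ = 2 * Real.pi := by
        rw [integral_const_mul, integral_gaussian, ← Real.sqrt_mul (by positivity),
          show Real.pi / δ * (Real.pi / (1 / (4 * δ))) = (2 * Real.pi) ^ 2 by field_simp; ring,
          Real.sqrt_sq (by positivity)]

theorem cosTransform_cosTransform (hF : Integrable F) (hcont : Continuous F)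
    (heven : ∀ x, F (-x) = F x) (hint : Integrable (cosTransform volume F)) (s : ℝ) :
    cosTransform volume (cosTransform volume F) s = 2 * Real.pi * F s := by
  have hπ : (2 * Real.pi : ℝ) ≠ 0 := by positivity
  have heven' (x : ℝ) : cosTransform volume F (-x) = cosTransform volume F x := by
    simp [cosTransform]
  have hfourier : FourierTransform.fourier (fun x : ℝ ↦ (F x : ℂ)) =
      fun w : ℝ ↦ (cosTransform volume F (2 * Real.pi * w) : ℂ) := by
    ext w
    rw [Real.fourier_eq', ← heven', ← integral_even_mul_cexp hF heven]
    congr! 5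
    simp
    ring
  have hinv := congrFun (Continuous.fourierInv_fourier_eq (f := fun x : ℝ ↦ (F x : ℂ))
    (by fun_prop) hF.ofReal (by rw [hfourier]; exact (hint.comp_mul_left' hπ).ofReal)) s
  have hscale (v : ℝ) : Complex.exp (((2 * Real.pi * inner ℝ v s : ℝ) : ℂ) * Complex.I) •
      (cosTransform volume F (2 * Real.pi * v) : ℂ) = (fun y : ℝ ↦
        Complex.exp ((s * y : ℝ) * Complex.I) * (cosTransform volume F y : ℂ))
          (2 * Real.pi * v) := by
    simp only [smul_eq_mul]
    congr 4
    simp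
    ring
  rw [hfourier, Real.fourierInv_eq'] at hinv
  simp only [hscale] at hinv
  rw [Measure.integral_comp_mul_left (fun y : ℝ ↦
      Complex.exp ((s * y : ℝ) * Complex.I) * (cosTransform volume F y : ℂ)),
    integral_even_mul_cexp hint heven', Complex.real_smul, ← Complex.ofReal_mul,
    Complex.ofReal_inj, abs_of_pos (by positivity)] at hinv
  rw [← hinv, mul_inv_cancel_left₀ hπ]

end CosTransform

/-- The integrable functions with nonnegative cosine transform. They form a convex cone closed
under dominated limits and under multiplication by characteristic functions of symmetric
measures. -/
structure HasNonnegCosTransform (F : ℝ → ℝ) : Prop where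
  integrable : Integrable F
  nonneg : ∀ z, 0 ≤ cosTransform volume F z

/-- The symbol of the jump generator of a symmetric measure. -/
def jumpSymbol (ν : Measure ℝ) (s : ℝ) : ℝ := ∫ y, (1 - Real.cos (s * y)) ∂ν

theorem jumpSymbol_nonneg (ν : Measure ℝ) (s : ℝ) : 0 ≤ jumpSymbol ν s :=
  integral_nonneg fun y ↦ by simpa using Real.cos_le_one (s * y)

theorem jumpSymbol_eq (ν : Measure ℝ) [IsFiniteMeasure ν] (s : ℝ) :
    jumpSymbol ν s = ν.real univ - cosTransform ν 1 s := by
  rw [jumpSymbol, integral_sub (integrable_const _)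
    (by simpa using integrable_mul_cos (integrable_const (1 : ℝ)) s 0)]
  simp [cosTransform]

namespace HasNonnegCosTransform

variable {F G : ℝ → ℝ} {ν : Measure ℝ}

theorem gaussian {δ : ℝ} (hδ : 0 < δ) :
    HasNonnegCosTransform fun s ↦ Real.exp (-δ * s ^ 2) where
  integrable := integrable_exp_neg_mul_sq hδ
  nonneg z := by
    rw [cosTransform_gaussian hδ]
    positivity

theorem add (hF : HasNonnegCosTransform F) (hG : HasNonnegCosTransform G) :
    HasNonnegCosTransform fun s ↦ F s + G s where
  integrable := hF.integrable.add hG.integrable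
  nonneg z := by
    have hint {H : ℝ → ℝ} (hH : Integrable H) : Integrable fun s ↦ H s * Real.cos (z * s) := by
      simpa using integrable_mul_cos hH z 0
    simp only [cosTransform, add_mul]
    rw [integral_add (hint hF.integrable) (hint hG.integrable)]
    exact add_nonneg (hF.nonneg z) (hG.nonneg z)

theorem const_mul (hF : HasNonnegCosTransform F) {c : ℝ} (hc : 0 ≤ c) :
    HasNonnegCosTransform fun s ↦ c * F s where
  integrable := hF.integrable.const_mul c
  nonneg z := by
    simp only [cosTransform, mul_assoc]
    rw [integral_const_mul]
    exact mul_nonneg hc (hF.nonneg z)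

theorem of_tendsto {ι : Type*} {l : Filter ι} [l.NeBot] [l.IsCountablyGenerated]
    {f : ι → ℝ → ℝ} (hf : ∀ᶠ i in l, HasNonnegCosTransform (f i)) (hF : Integrable F)
    (hG : Integrable G) (hle : ∀ᶠ i in l, ∀ s, |f i s| ≤ G s)
    (hlim : ∀ s, Tendsto (fun i ↦ f i s) l (𝓝 (F s))) : HasNonnegCosTransform F where
  integrable := hF
  nonneg z := by
    refine ge_of_tendsto (f := fun i ↦ cosTransform volume (f i) z) ?_
      (hf.mono fun i hi ↦ hi.nonneg z)
    refine tendsto_integral_filter_of_dominated_convergence G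
      (hf.mono fun i hi ↦ hi.integrable.aestronglyMeasurable.mul (by fun_prop)) ?_ hG
      (.of_forall fun s ↦ (hlim s).mul_const _)
    filter_upwards [hle] with i hi
    refine .of_forall fun s ↦ (norm_mul_le _ _).trans ?_
    exact (mul_le_of_le_one_right (norm_nonneg _) (Real.abs_cos_le_one _)).trans (hi s)

theorem mul_charFun (hF : HasNonnegCosTransform F) (ν : Measure ℝ) [IsFiniteMeasure ν]
    [ν.IsNegInvariant] : HasNonnegCosTransform fun s ↦ F s * cosTransform ν 1 s where
  integrable := hF.integrable.mul_bdd
    (continuous_cosTransform (integrable_const 1)).aestronglyMeasurable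
    (.of_forall (abs_cosTransform_le (integrable_const 1)))
  nonneg z := by
    have hswap := integral_cosTransform_add_mul (ν := ν) (G := 1) hF.integrable
      (integrable_const 1) z
    have hcos (s : ℝ) : ∫ x, (1 : ℝ → ℝ) x * Real.cos (s * x + z * s) ∂ν =
        Real.cos (z * s) * cosTransform ν 1 s :=
      integral_even_mul_cos_add (integrable_const 1) (fun _ ↦ rfl) s (z * s)
    simp only [hcos] at hswap
    simp only [Pi.one_apply, mul_one] at hswap
    have hrw : cosTransform volume (fun s ↦ F s * cosTransform ν 1 s) z =
        ∫ x, cosTransform volume F (z + x) ∂ν := by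
      rw [hswap, cosTransform]
      congr! 2
      ring
    rw [hrw]
    exact integral_nonneg fun x ↦ hF.nonneg (z + x)

theorem mul_one_add_pow (hF : HasNonnegCosTransform F) (ν : Measure ℝ) [IsFiniteMeasure ν]
    [ν.IsNegInvariant] {c : ℝ} (hc : 0 ≤ c) (n : ℕ) :
    HasNonnegCosTransform fun s ↦ F s * (1 + c * cosTransform ν 1 s) ^ n := by
  induction n with
  | zero => simpa using hF
  | succ n ih =>
    convert ih.add ((ih.mul_charFun ν).const_mul hc) using 2
    ring

theorem mul_exp (hF : HasNonnegCosTransform F) (ν : Measure ℝ) [IsFiniteMeasure ν]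
    [ν.IsNegInvariant] {t : ℝ} (ht : 0 ≤ t) :
    HasNonnegCosTransform fun s ↦ F s * Real.exp (t * cosTransform ν 1 s) := by
  set R := ∫ _, ‖(1 : ℝ)‖ ∂ν
  have hR (s : ℝ) : |cosTransform ν 1 s| ≤ R := abs_cosTransform_le (integrable_const 1) s
  have hcont := continuous_cosTransform (μ := ν) (F := 1) (integrable_const 1)
  refine of_tendsto (l := atTop) (G := fun s ↦ |F s| * Real.exp (t * R))
    (.of_forall fun n : ℕ ↦ hF.mul_one_add_pow ν (div_nonneg ht n.cast_nonneg) n)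
    (hF.integrable.mul_bdd (c := Real.exp (t * R)) (by fun_prop) (.of_forall fun s ↦ ?_))
    (hF.integrable.abs.mul_const _) ?_ fun s ↦ ?_
  · rw [Real.norm_of_nonneg (Real.exp_pos _).le]
    gcongr
    exact (le_abs_self _).trans (hR s)
  · filter_upwards [eventually_ne_atTop 0] with n hn s
    rw [abs_mul, abs_pow]
    gcongr
    calc |1 + t / n * cosTransform ν 1 s| ^ n ≤ Real.exp (t / n * R) ^ n := by
          gcongr
          refine (abs_add_le _ _).trans ?_
          rw [abs_one, abs_mul, abs_of_nonneg (by positivity : 0 ≤ t / n), add_comm]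
          refine le_trans ?_ (Real.add_one_le_exp _)
          gcongr
          exact hR s
      _ = Real.exp (t * R) := by
          rw [← Real.exp_nat_mul]
          congr 1
          field_simp
  · simpa only [div_mul_eq_mul_div] using
      (Real.tendsto_one_add_div_pow_exp (t * cosTransform ν 1 s)).const_mul (F s)

theorem mul_exp_neg_jumpSymbol (hF : HasNonnegCosTransform F) (ν : Measure ℝ)
    [IsFiniteMeasure ν] [ν.IsNegInvariant] {t : ℝ} (ht : 0 ≤ t) :
    HasNonnegCosTransform fun s ↦ F s * Real.exp (-(t * jumpSymbol ν s)) := by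
  convert (hF.mul_exp ν ht).const_mul (Real.exp_pos (-(t * ν.real univ))).le using 2 with s
  rw [jumpSymbol_eq, mul_left_comm, ← Real.exp_add]
  ring_nf

theorem exp_neg_of_tendsto {μ : ℕ → Measure ℝ} [∀ n, IsFiniteMeasure (μ n)]
    [∀ n, (μ n).IsNegInvariant] {ψ : ℝ → ℝ}
    (hψ : ∀ s, Tendsto (fun n ↦ jumpSymbol (μ n) s) atTop (𝓝 (ψ s))) {t : ℝ} (ht : 0 ≤ t)
    (hint : Integrable fun s ↦ Real.exp (-(t * ψ s))) :
    HasNonnegCosTransform fun s ↦ Real.exp (-(t * ψ s)) := by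
  have hgauss {δ : ℝ} (hδ : 0 < δ) :
      HasNonnegCosTransform fun s ↦ Real.exp (-δ * s ^ 2) * Real.exp (-(t * ψ s)) := by
    refine of_tendsto (l := atTop)
      (.of_forall fun n ↦ (gaussian hδ).mul_exp_neg_jumpSymbol (μ n) ht)
      (hint.bdd_mul (c := 1) (by fun_prop) (.of_forall fun s ↦ ?_)) (integrable_exp_neg_mul_sq hδ)
      (.of_forall fun n s ↦ ?_) fun s ↦ ?_
    · rw [Real.norm_of_nonneg (Real.exp_pos _).le, neg_mul]
      exact Real.exp_le_one_iff.2 (neg_nonpos.2 (by positivity))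
    · rw [abs_of_nonneg (by positivity)]
      refine mul_le_of_le_one_right (by positivity) (Real.exp_le_one_iff.2 (neg_nonpos.2 ?_))
      exact mul_nonneg ht (jumpSymbol_nonneg _ _)
    · exact (((hψ s).const_mul t).neg.rexp).const_mul _
  refine of_tendsto (l := 𝓝[>] (0 : ℝ)) (eventually_mem_nhdsWithin.mono fun δ hδ ↦ hgauss hδ)
    hint hint ?_ fun s ↦ ?_
  · filter_upwards [self_mem_nhdsWithin] with δ (hδ : 0 < δ) s
    rw [abs_of_nonneg (by positivity), neg_mul]
    exact mul_le_of_le_one_left (by positivity)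
      (Real.exp_le_one_iff.2 (neg_nonpos.2 (by positivity)))
  · have hcont : Continuous fun δ : ℝ ↦ Real.exp (-δ * s ^ 2) * Real.exp (-(t * ψ s)) := by
      fun_prop
    simpa using (hcont.tendsto 0).mono_left nhdsWithin_le_nhds

theorem integrable_cosTransform (hF : HasNonnegCosTransform F) (hF₁ : ∀ s, F s ≤ 1) :
    Integrable (cosTransform volume F) :=
  integrable_of_integral_mul_gaussian_le (continuous_cosTransform hF.integrable) hF.nonneg
    (fun _ hδ ↦ (integrable_exp_neg_mul_sq hδ).bdd_mul
      (continuous_cosTransform hF.integrable).aestronglyMeasurable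
      (.of_forall (abs_cosTransform_le hF.integrable)))
    fun _ ↦ integral_cosTransform_mul_gaussian_le hF.integrable hF₁

end HasNonnegCosTransform

/-- The Fourier symbol of `L_α`. -/
def fracSymbol (α s : ℝ) : ℝ := fracNormConst α * |s| ^ (2 * α)

theorem one_sub_cos_le (s y : ℝ) : 1 - Real.cos (s * y) ≤ (2 + s ^ 2) * min 1 (y ^ 2) := by
  rw [mul_min_of_nonneg _ _ (by positivity)]
  refine le_min ?_ ?_
  · nlinarith [Real.neg_one_le_cos (s * y), sq_nonneg s]
  · nlinarith [Real.one_sub_sq_div_two_le_cos (x := s * y), sq_nonneg (s * y), sq_nonneg y]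

theorem integral_one_sub_cos_div {α : ℝ} (hα₀ : 0 < α) (s : ℝ) :
    ∫ y : ℝ, (1 - Real.cos (s * y)) / |y| ^ (1 + 2 * α) = fracSymbol α s := by
  rcases eq_or_ne s 0 with rfl | hs
  · simp [fracSymbol, Real.zero_rpow (by positivity : (2 * α) ≠ 0)]
  have hs₀ : 0 < |s| := abs_pos.2 hs
  have hscale (y : ℝ) : (1 - Real.cos (s * y)) / |y| ^ (1 + 2 * α) =
      |s| ^ (1 + 2 * α) * (fun u : ℝ ↦ (1 - Real.cos u) / |u| ^ (1 + 2 * α)) (s * y) := by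
    simp only
    rw [abs_mul, Real.mul_rpow (abs_nonneg _) (abs_nonneg _), ← mul_div_assoc,
      mul_div_mul_left _ _ (Real.rpow_pos_of_pos hs₀ _).ne']
  simp only [hscale]
  rw [integral_const_mul,
    Measure.integral_comp_mul_left (fun u : ℝ ↦ (1 - Real.cos u) / |u| ^ (1 + 2 * α)),
    fracSymbol, fracNormConst, smul_eq_mul, abs_inv, Real.rpow_add hs₀, Real.rpow_one]
  field_simp

section

variable {α t : ℝ}

theorem continuous_fracSymbol (hα₀ : 0 < α) : Continuous (fracSymbol α) :=
  continuous_const.mul (continuous_abs.rpow_const fun _ ↦ .inr (by positivity))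

theorem integrable_one_sub_cos_div (hα₀ : 0 < α) (hα₁ : α < 1) (s : ℝ) :
    Integrable fun y : ℝ ↦ (1 - Real.cos (s * y)) / |y| ^ (1 + 2 * α) := by
  refine .mono' ((integrable_levyWeight hα₀ hα₁).const_mul (2 + s ^ 2))
    (Measurable.aestronglyMeasurable (by fun_prop)) (.of_forall fun y ↦ ?_)
  have : 0 ≤ 1 - Real.cos (s * y) := by linarith [Real.cos_le_one (s * y)]
  rw [Real.norm_of_nonneg (by positivity), levyWeight, ← mul_div_assoc]
  gcongr
  exact one_sub_cos_le s y

theorem fracNormConst_pos (hα₀ : 0 < α) (hα₁ : α < 1) : 0 < fracNormConst α := by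
  have hint := integrable_one_sub_cos_div hα₀ hα₁ 1
  simp only [one_mul] at hint
  rw [fracNormConst, integral_pos_iff_support_of_nonneg
    (fun u ↦ div_nonneg (by simpa using Real.cos_le_one u) (by positivity)) hint]
  refine lt_of_lt_of_le (b := volume (Ioo 0 Real.pi)) (by simp [Real.pi_pos])
    (measure_mono fun u hu ↦ ?_)
  have hcos : Real.cos u < 1 := by
    simpa using Real.cos_lt_cos_of_nonneg_of_le_pi le_rfl hu.2.le hu.1
  exact (div_pos (by linarith) (Real.rpow_pos_of_pos (abs_pos.2 hu.1.ne') _)).ne'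

theorem tendsto_jumpSymbol_truncLevy (hα₀ : 0 < α) (hα₁ : α < 1) (s : ℝ) :
    Tendsto (fun ε ↦ jumpSymbol (truncLevy α ε) s) (𝓝[>] 0) (𝓝 (fracSymbol α s)) := by
  simp only [jumpSymbol, integral_truncLevy]
  rw [← integral_one_sub_cos_div hα₀ s]
  exact tendsto_setIntegral_lt_abs (integrable_one_sub_cos_div hα₀ hα₁ s)

theorem integrable_exp_neg_fracSymbol (hα₀ : 0 < α) (hα₁ : α < 1) (ht : 0 < t) :
    Integrable fun s : ℝ ↦ Real.exp (-(t * fracSymbol α s)) := by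
  have hc := fracNormConst_pos hα₀ hα₁
  refine integrable_of_even (fun x ↦ by simp [fracSymbol]) ?_
  refine (integrableOn_rpow_mul_exp_neg_mul_rpow (p := 2 * α) (s := 0)
    (b := t * fracNormConst α) (by norm_num) (by positivity) (by positivity)).congr_fun
    (fun s (hs : 0 < s) ↦ ?_) measurableSet_Ioi
  simp only [fracSymbol, Real.rpow_zero, one_mul, abs_of_pos hs]
  ring_nf

theorem fracSemigroupKernel_eq_cosTransform (hα₀ : 0 < α) (hα₁ : α < 1) (ht : 0 < t) :
    fracSemigroupKernel α t = fun x ↦ (1 / (2 * Real.pi)) *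
      cosTransform volume (fun s ↦ Real.exp (-(t * fracSymbol α s))) x := by
  ext x
  have hcast (s : ℝ) : Complex.exp (((x * s : ℝ) : ℂ) * Complex.I
      - ((fracNormConst α * t * |s| ^ (2 * α) : ℝ) : ℂ)) =
      Complex.exp ((x * s : ℝ) * Complex.I) * (Real.exp (-(t * fracSymbol α s)) : ℝ) := by
    rw [sub_eq_add_neg, Complex.exp_add, ← Complex.ofReal_neg, ← Complex.ofReal_exp, fracSymbol]
    ring_nf
  simp only [fracSemigroupKernel, hcast]
  rw [integral_even_mul_cexp (integrable_exp_neg_fracSymbol hα₀ hα₁ ht)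
    (fun s ↦ by simp [fracSymbol]), Complex.ofReal_re]

theorem integrable_cosTransform_exp_neg_fracSymbol (hα₀ : 0 < α) (hα₁ : α < 1) (ht : 0 < t) :
    Integrable (cosTransform volume fun s ↦ Real.exp (-(t * fracSymbol α s))) := by
  have hc := fracNormConst_pos hα₀ hα₁
  have hint := integrable_exp_neg_fracSymbol hα₀ hα₁ ht
  obtain ⟨ε, -, hε₀, hε⟩ := exists_seq_strictAnti_tendsto (0 : ℝ)
  have (n : ℕ) := isFiniteMeasure_truncLevy hα₀ hα₁ (hε₀ n)
  refine (HasNonnegCosTransform.exp_neg_of_tendsto (fun s ↦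
    (tendsto_jumpSymbol_truncLevy hα₀ hα₁ s).comp
      (tendsto_nhdsWithin_iff.2 ⟨hε, .of_forall hε₀⟩)) ht.le hint).integrable_cosTransform
    fun s ↦ Real.exp_le_one_iff.2 (neg_nonpos.2 ?_)
  unfold fracSymbol
  positivity

theorem integrable_fracSemigroupKernel (hα₀ : 0 < α) (hα₁ : α < 1) (ht : 0 < t) :
    Integrable (fracSemigroupKernel α t) := by
  rw [fracSemigroupKernel_eq_cosTransform hα₀ hα₁ ht]
  exact (integrable_cosTransform_exp_neg_fracSymbol hα₀ hα₁ ht).const_mul _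

theorem cosTransform_fracSemigroupKernel (hα₀ : 0 < α) (hα₁ : α < 1) (ht : 0 < t) (s : ℝ) :
    cosTransform volume (fracSemigroupKernel α t) s = Real.exp (-(t * fracSymbol α s)) := by
  have hcont := continuous_fracSymbol hα₀
  have hinv := cosTransform_cosTransform (integrable_exp_neg_fracSymbol hα₀ hα₁ ht) (by fun_prop)
    (fun x ↦ by simp [fracSymbol]) (integrable_cosTransform_exp_neg_fracSymbol hα₀ hα₁ ht) s
  rw [fracSemigroupKernel_eq_cosTransform hα₀ hα₁ ht, cosTransform]
  simp only [mul_assoc]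
  rw [integral_const_mul, ← cosTransform, hinv]
  field_simp

theorem integral_fracSemigroupKernel_mul_cos (hα₀ : 0 < α) (hα₁ : α < 1) (ht : 0 < t)
    (s c x : ℝ) :
    ∫ y, fracSemigroupKernel α t y * Real.cos (s * (x - y) + c) =
      Real.exp (-(t * fracSymbol α s)) * Real.cos (s * x + c) := by
  have hcos := integral_even_mul_cos_add (integrable_fracSemigroupKernel hα₀ hα₁ ht)
    (fun y ↦ by simp [fracSemigroupKernel_eq_cosTransform hα₀ hα₁ ht, cosTransform])
    (-s) (s * x + c)
  have hneg : cosTransform volume (fracSemigroupKernel α t) (-s) =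
      cosTransform volume (fracSemigroupKernel α t) s := by
    simp [cosTransform]
  have harg (y : ℝ) : s * (x - y) + c = -s * y + (s * x + c) := by ring
  simp only [harg]
  rw [hcos, hneg, cosTransform_fracSemigroupKernel hα₀ hα₁ ht, mul_comm]

end

/-! ### Removal of the truncation -/

/-- Pointwise convergence of `T i V` to the convolution `φ ∗ V`. -/
def TendstoConv {ι : Type*} (T : ι → NormedEnd (ℝ →ᵇ ℝ)) (l : Filter ι) (φ : ℝ → ℝ)
    (V : ℝ →ᵇ ℝ) : Prop :=
  ∀ x, Tendsto (fun i ↦ T i V x) l (𝓝 (∫ y, φ y * V (x - y)))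

/-- The bounded continuous function `x ↦ cos (s * x + c)`. -/
def cosBCF (s c : ℝ) : ℝ →ᵇ ℝ :=
  .ofNormedAddCommGroup (fun x ↦ Real.cos (s * x + c)) (by fun_prop) 1 fun _ ↦
    Real.abs_cos_le_one _

theorem cosBCF_apply (s c x : ℝ) : cosBCF s c x = Real.cos (s * x + c) := rfl

/-- The lift to the line of the real part of `z * p`, for `p` a function on the circle. -/
def circleRe {per : ℝ} [Fact (0 < per)] (z : ℂ) (p : C(AddCircle per, ℂ)) : ℝ →ᵇ ℝ :=
  .ofNormedAddCommGroup (fun x : ℝ ↦ (z * p (x : AddCircle per)).re)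
    (Complex.continuous_re.comp
      (continuous_const.mul (p.continuous.comp (AddCircle.continuous_mk' per))))
    (‖z‖ * ‖p‖) fun x ↦ (Complex.abs_re_le_norm _).trans <| by
      rw [norm_mul]
      gcongr
      exact p.norm_coe_le_norm _

theorem circleRe_apply {per : ℝ} [Fact (0 < per)] (z : ℂ) (p : C(AddCircle per, ℂ)) (x : ℝ) :
    circleRe z p x = (z * p (x : AddCircle per)).re := rfl

theorem circleRe_fourier {per : ℝ} [Fact (0 < per)] (z : ℂ) (n : ℤ) :
    circleRe z (fourier n : C(AddCircle per, ℂ)) =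
      z.re • cosBCF (2 * Real.pi * n / per) 0 +
        z.im • cosBCF (2 * Real.pi * n / per) (Real.pi / 2) := by
  ext x
  have hexp : (2 * Real.pi * Complex.I * n * x / per : ℂ) =
      ((2 * Real.pi * n / per * x : ℝ) : ℂ) * Complex.I := by
    push_cast
    ring
  rw [circleRe_apply, fourier_coe_apply, hexp, Complex.mul_re, Complex.exp_ofReal_mul_I_re,
    Complex.exp_ofReal_mul_I_im]
  simp only [BoundedContinuousFunction.coe_add, BoundedContinuousFunction.coe_smul, Pi.add_apply,
    smul_eq_mul, cosBCF_apply, Real.cos_add_pi_div_two, add_zero]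
  ring

theorem integrable_mul_comp_sub {φ : ℝ → ℝ} (hφ : Integrable φ) (V : ℝ →ᵇ ℝ) (x : ℝ) :
    Integrable fun y ↦ φ y * V (x - y) :=
  hφ.mul_bdd (c := ‖V‖) (Continuous.aestronglyMeasurable (by fun_prop))
    (.of_forall fun _ ↦ V.norm_coe_le_norm _)

namespace TendstoConv

variable {ι : Type*} {T : ι → NormedEnd (ℝ →ᵇ ℝ)} {l : Filter ι} {φ : ℝ → ℝ} {V W : ℝ →ᵇ ℝ}

theorem add (hφ : Integrable φ) (hV : TendstoConv T l φ V) (hW : TendstoConv T l φ W) :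
    TendstoConv T l φ (V + W) := fun x ↦ by
  simp only [map_add, BoundedContinuousFunction.coe_add, Pi.add_apply, mul_add]
  rw [integral_add (integrable_mul_comp_sub hφ V x) (integrable_mul_comp_sub hφ W x)]
  exact (hV x).add (hW x)

theorem smul (hV : TendstoConv T l φ V) (c : ℝ) : TendstoConv T l φ (c • V) := fun x ↦ by
  simp only [map_smul, BoundedContinuousFunction.coe_smul, smul_eq_mul, mul_left_comm _ c]
  rw [integral_const_mul]
  exact (hV x).const_mul c

theorem of_approx (hφ : Integrable φ)
    (hT : ∀ i (f : ℝ →ᵇ ℝ) M, (∀ x, |f x| ≤ M) → ∀ x, |T i f x| ≤ M)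
    (happrox : ∀ δ > 0, ∃ W, TendstoConv T l φ W ∧ ∀ x, |V x - W x| ≤ δ) :
    TendstoConv T l φ V := by
  intro x
  rw [Metric.tendsto_nhds]
  intro ε hε
  set I := ∫ y, |φ y|
  have hI : 0 ≤ I := integral_nonneg fun y ↦ abs_nonneg _
  set δ := ε / (2 + I)
  have hδ : 0 < δ := by positivity
  obtain ⟨W, hW, hVW⟩ := happrox δ hδ
  have hlim : |(∫ y, φ y * W (x - y)) - ∫ y, φ y * V (x - y)| ≤ δ * I := by
    rw [← integral_sub (integrable_mul_comp_sub hφ W x) (integrable_mul_comp_sub hφ V x),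
      ← integral_const_mul]
    refine norm_integral_le_of_norm_le (f := fun y ↦ φ y * W (x - y) - φ y * V (x - y))
      (hφ.abs.const_mul δ) (.of_forall fun y ↦ ?_)
    rw [← mul_sub, Real.norm_eq_abs, abs_mul, mul_comm, abs_sub_comm]
    gcongr
    exact hVW _
  filter_upwards [Metric.tendsto_nhds.1 (hW x) δ hδ] with i hi
  have hTVW : |T i V x - T i W x| ≤ δ := by simpa using hT i (V - W) δ hVW x
  calc |T i V x - ∫ y, φ y * V (x - y)|
    _ ≤ |T i V x - T i W x| + |T i W x - ∫ y, φ y * V (x - y)| := abs_sub_le _ _ _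
    _ ≤ |T i V x - T i W x| + (|T i W x - ∫ y, φ y * W (x - y)| +
          |(∫ y, φ y * W (x - y)) - ∫ y, φ y * V (x - y)|) := by
        gcongr
        exact abs_sub_le _ _ _
    _ < δ + (δ + δ * I) := add_lt_add_of_le_of_lt hTVW (add_lt_add_of_lt_of_le hi hlim)
    _ = ε := by
        simp only [δ]
        field_simp
        ring

theorem circleRe_of_mem_span {per : ℝ} [Fact (0 < per)] (hφ : Integrable φ)
    (hcos : ∀ s c, TendstoConv T l φ (cosBCF s c)) {p : C(AddCircle per, ℂ)}
    (hp : p ∈ Submodule.span ℂ (range (@fourier per))) (z : ℂ) :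
    TendstoConv T l φ (circleRe z p) := by
  induction hp using Submodule.span_induction generalizing z with
  | mem p hp =>
    obtain ⟨n, rfl⟩ := hp
    rw [circleRe_fourier]
    exact ((hcos _ _).smul _).add hφ ((hcos _ _).smul _)
  | zero =>
    have hzero : circleRe z (0 : C(AddCircle per, ℂ)) = (0 : ℝ) • cosBCF 0 0 := by
      ext x
      simp [circleRe_apply]
    exact hzero ▸ (hcos _ _).smul _
  | add p q _ _ hp hq =>
    have hadd : circleRe z (p + q) = circleRe z p + circleRe z q := by
      ext x
      simp [circleRe_apply, mul_add]
    exact hadd ▸ (hp z).add hφ (hq z)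
  | smul a p _ hp =>
    have hsmul : circleRe z (a • p) = circleRe (z * a) p := by
      ext x
      simp only [circleRe_apply, ContinuousMap.smul_apply, smul_eq_mul, mul_assoc]
    exact hsmul ▸ hp _

theorem of_periodic {per : ℝ} (hper : 0 < per) (hφ : Integrable φ)
    (hT : ∀ i (f : ℝ →ᵇ ℝ) M, (∀ x, |f x| ≤ M) → ∀ x, |T i f x| ≤ M)
    (hcos : ∀ s c, TendstoConv T l φ (cosBCF s c)) (hV : Function.Periodic V per) :
    TendstoConv T l φ V := by
  have : Fact (0 < per) := ⟨hper⟩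
  have hVc : Function.Periodic (fun x ↦ (V x : ℂ)) per := fun x ↦ by simp only [hV x]
  let P : C(AddCircle per, ℂ) :=
    ⟨hVc.lift, continuous_coinduced_dom.2 (Complex.continuous_ofReal.comp V.continuous)⟩
  have hP : P ∈ (Submodule.span ℂ (range (@fourier per))).topologicalClosure :=
    span_fourier_closure_eq_top (T := per) ▸ Submodule.mem_top
  refine of_approx hφ hT fun δ hδ ↦ ?_
  obtain ⟨p, hp, hd⟩ := Metric.mem_closure_iff.1 hP δ hδ
  refine ⟨circleRe 1 p, circleRe_of_mem_span hφ hcos hp 1, fun x ↦ ?_⟩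
  have hre : V x - circleRe 1 p x = ((P - p) (x : AddCircle per)).re := by
    rw [circleRe_apply, one_mul, ContinuousMap.sub_apply, Complex.sub_re]
    rfl
  rw [hre]
  rw [dist_eq_norm] at hd
  exact (Complex.abs_re_le_norm _).trans (((P - p).norm_coe_le_norm _).trans hd.le)

end TendstoConv

theorem jumpGen_cosBCF (ν : Measure ℝ) [IsFiniteMeasure ν] [ν.IsNegInvariant] (s c : ℝ) :
    jumpGen ν (cosBCF s c) = (-jumpSymbol ν s) • cosBCF s c := by
  ext x
  have harg (y : ℝ) : s * (x + y) + c = s * y + (s * x + c) := by ring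
  have hcos := integral_even_mul_cos_add (μ := ν) (integrable_const (1 : ℝ)) (fun _ ↦ rfl) s
    (s * x + c)
  have hint := integrable_mul_cos (μ := ν) (integrable_const (1 : ℝ)) s (s * x + c)
  simp only [one_mul] at hcos hint
  rw [jumpGen_apply]
  simp only [cosBCF_apply, harg]
  rw [integral_sub hint (integrable_const _), hcos, integral_const, jumpSymbol_eq]
  simp only [BoundedContinuousFunction.coe_smul, cosBCF_apply, smul_eq_mul, Pi.one_def]
  ring

theorem tendsto_jumpSemigroup_truncLevy {α t per : ℝ} (hα₀ : 0 < α) (hα₁ : α < 1) (ht : 0 < t)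
    (hper : 0 < per) {ι : Type*} {l : Filter ι} {ε : ι → ℝ} (hε : Tendsto ε l (𝓝[>] 0))
    [∀ i, IsFiniteMeasure (truncLevy α (ε i))] {V : ℝ →ᵇ ℝ} (hV : Function.Periodic V per)
    (x : ℝ) :
    Tendsto (fun i ↦ jumpSemigroup (truncLevy α (ε i)) t V x) l
      (𝓝 (∫ y, fracSemigroupKernel α t y * V (x - y))) := by
  refine TendstoConv.of_periodic hper (T := fun i ↦ jumpSemigroup (truncLevy α (ε i)) t)
    (integrable_fracSemigroupKernel hα₀ hα₁ ht)
    (fun i f M hf x ↦ abs_jumpSemigroup_le _ ht.le hf x) (fun s c x ↦ ?_) hV x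
  simp only [jumpSemigroup_of_eigen _ t (jumpGen_cosBCF _ s c), cosBCF_apply,
    BoundedContinuousFunction.coe_smul, smul_eq_mul,
    integral_fracSemigroupKernel_mul_cos hα₀ hα₁ ht]
  refine Tendsto.mul_const _ ((Real.continuous_exp.tendsto _).comp ?_)
  rw [mul_comm t, ← neg_mul]
  exact (((tendsto_jumpSymbol_truncLevy hα₀ hα₁ s).comp hε).neg).mul_const t

section Residual

variable {α ε M t : ℝ} {θ Lθ : ℝ → ℝ → ℝ}

theorem abs_jumpResidual_truncLevy_le (hθ : C3Bound (fun x ↦ θ x t) M) {x : ℝ}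
    (hL : HasFracDissipAt α (fun y ↦ θ y t) (Lθ x t) x) (hα₀ : 0 < α) (hα₁ : α < 1)
    (hε : 0 < ε) :
    |jumpResidual (truncLevy α ε) θ (fun x t ↦ -Lθ x t) x t| ≤ 2 * M * levyTail α ε := by
  rw [jumpResidual, integral_sub_truncLevy α ε fun y ↦ θ y t, ← neg_sub_neg, neg_neg, neg_neg,
    abs_sub_comm]
  exact hL.abs_sub_truncDissip_le hθ.hasDerivAt hθ.abs_le hθ.abs_deriv_sub_le hα₀ hα₁ hε

theorem abs_jumpResidual_truncLevy_sub_le (hθ : C3Bound (fun x ↦ θ x t) M)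
    (hL : ∀ x, HasFracDissipAt α (fun y ↦ θ y t) (Lθ x t) x) (hα₀ : 0 < α) (hα₁ : α < 1)
    (hε : 0 < ε) (x k : ℝ) :
    |jumpResidual (truncLevy α ε) θ (fun x t ↦ -Lθ x t) (x + k) t -
      jumpResidual (truncLevy α ε) θ (fun x t ↦ -Lθ x t) x t| ≤ 2 * M * levyTail α ε * |k| := by
  have hcont := hθ.contDiff.continuous
  have hle := ((hL x).increment (hL (x + k)) hcont hθ.abs_le hα₀ hα₁).abs_sub_truncDissip_le
    (f' := fun y ↦ deriv (fun z ↦ θ z t) (y + k) - deriv (fun z ↦ θ z t) y) (B := M * |k|)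
    (fun y ↦ ((hθ.hasDerivAt (y + k)).comp_add_const y k).sub (hθ.hasDerivAt y))
    (fun y ↦ by simpa using hθ.abs_sub_le (y + k) y)
    (abs_second_sub_le hθ.hasDerivAt_deriv hθ.abs_deriv_deriv_sub_le k) hα₀ hα₁ hε
  rw [truncDissip_increment hcont hθ.abs_le hα₀ hα₁ hε, abs_sub_comm] at hle
  simp only [jumpResidual, integral_sub_truncLevy α ε fun y ↦ θ y t]
  convert hle using 1
  · congr 1
    ring
  · ring

end Residual

namespace ForcedBurgers

variable {α M per h t : ℝ} {θ Lθ : ℝ → ℝ → ℝ} {W W' : ℝ → ℝ →ᵇ ℝ}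

theorem mono {f : ℝ → ℝ → ℝ} {N : ℝ} (hθ : ForcedBurgers θ f M per h) (hMN : M ≤ N) :
    ForcedBurgers θ f N per h :=
  ⟨fun t ht ↦ (hθ.c3Bound t ht).mono hMN, hθ.periodic, hθ.hasDerivWithinAt⟩

theorem abs_sub_fracSemigroup_le (hθ : ForcedBurgers θ (fun x t ↦ -Lθ x t) M per h)
    (hL : ∀ t ∈ Icc 0 h, ∀ x, HasFracDissipAt α (fun y ↦ θ y t) (Lθ x t) x)
    (hW : BurgersCurve W W' M per h) (hWθ : ∀ x, W 0 x = θ x 0) (hα₀ : 0 < α) (hα₁ : α < 1)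
    (hper : 0 < per) (ht : t ∈ Ioc 0 h) (x : ℝ) :
    |θ x t - ∫ y, fracSemigroupKernel α t y * W t (x - y)| ≤
      Real.exp (M * h) * (5 * M * M * ((∫ y, levyWeight α y) * h) * h) := by
  obtain ⟨ε, -, hε₀, hε⟩ := exists_seq_strictAnti_tendsto (0 : ℝ)
  replace hε : Tendsto ε atTop (𝓝[>] 0) := tendsto_nhdsWithin_iff.2 ⟨hε, .of_forall hε₀⟩
  have hfin (n : ℕ) := isFiniteMeasure_truncLevy hα₀ hα₁ (hε₀ n)
  have ht' : t ∈ Icc 0 h := Ioc_subset_Icc_self ht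
  have hlim := tendsto_jumpSemigroup_truncLevy hα₀ hα₁ ht.1 hper hε (hW.periodic t ht') x
  have htail := ((tendsto_levyTail hα₀ hα₁).comp hε).const_mul (2 * M)
  rw [mul_zero] at htail
  have hbound := ((htail.const_add (5 * M * M * ((∫ y, levyWeight α y) * h))).mul_const
    h).const_mul (Real.exp (M * h))
  rw [add_zero] at hbound
  exact le_of_tendsto_of_tendsto' (hlim.const_sub _).abs hbound fun n ↦
    hθ.abs_sub_jumpSemigroup_le (fun t ht x ↦ abs_jumpResidual_truncLevy_le (hθ.c3Bound t ht)
      (hL t ht x) hα₀ hα₁ (hε₀ n)) hW hWθ hper (integral_min_truncLevy_le hα₀ hα₁) ht' x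

theorem abs_increment_sub_fracSemigroup_le (hθ : ForcedBurgers θ (fun x t ↦ -Lθ x t) M per h)
    (hL : ∀ t ∈ Icc 0 h, ∀ x, HasFracDissipAt α (fun y ↦ θ y t) (Lθ x t) x)
    (hW : BurgersCurve W W' M per h) (hWθ : ∀ x, W 0 x = θ x 0) (hα₀ : 0 < α) (hα₁ : α < 1)
    (hper : 0 < per) (ht : t ∈ Ioc 0 h) (x : ℝ) {k : ℝ} (hk : k ∈ Icc 0 per) :
    |(θ (x + k) t - ∫ y, fracSemigroupKernel α t y * W t (x + k - y)) -
        (θ x t - ∫ y, fracSemigroupKernel α t y * W t (x - y))| ≤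
      Real.exp (M * t) *
        ((M * (Real.exp (M * h) * (5 * M * M * ((∫ y, levyWeight α y) * h) * h)) +
          10 * M * M * ((∫ y, levyWeight α y) * h)) * Real.exp (M * t) * t * k) := by
  obtain ⟨ε, -, hε₀, hε⟩ := exists_seq_strictAnti_tendsto (0 : ℝ)
  replace hε : Tendsto ε atTop (𝓝[>] 0) := tendsto_nhdsWithin_iff.2 ⟨hε, .of_forall hε₀⟩
  have hfin (n : ℕ) := isFiniteMeasure_truncLevy hα₀ hα₁ (hε₀ n)
  have ht' : t ∈ Icc 0 h := Ioc_subset_Icc_self ht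
  have hlim := tendsto_jumpSemigroup_truncLevy hα₀ hα₁ ht.1 hper hε (hW.periodic t ht')
  have htail := ((tendsto_levyTail hα₀ hα₁).comp hε).const_mul (2 * M)
  rw [mul_zero] at htail
  have hbound := (((((((htail.const_add (5 * M * M * ((∫ y, levyWeight α y) * h))).mul_const
    h).const_mul (Real.exp (M * h))).const_mul M).add
    (htail.const_add (10 * M * M * ((∫ y, levyWeight α y) * h)))).mul_const
    (Real.exp (M * t))).mul_const t).mul_const k |>.const_mul (Real.exp (M * t))
  rw [add_zero, add_zero] at hbound
  exact le_of_tendsto_of_tendsto' (((hlim (x + k)).const_sub _).sub ((hlim x).const_sub _)).abs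
    hbound fun n ↦ hθ.abs_increment_sub_jumpSemigroup_le
      (fun t ht x ↦ abs_jumpResidual_truncLevy_le (hθ.c3Bound t ht) (hL t ht x) hα₀ hα₁ (hε₀ n))
      (fun t ht ↦ abs_jumpResidual_truncLevy_sub_le (hθ.c3Bound t ht) (hL t ht) hα₀ hα₁ (hε₀ n))
      hW hWθ hper (integral_min_truncLevy_le hα₀ hα₁) ht' x hk

end ForcedBurgers

theorem abs_deriv_le_of_increment {f : ℝ → ℝ} {x r K : ℝ} (hr : 0 < r) (hK : 0 ≤ K)
    (h : ∀ k ∈ Icc 0 r, |f (x + k) - f x| ≤ K * k) : |deriv f x| ≤ K := by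
  by_cases hd : DifferentiableAt ℝ f x
  · refine le_of_tendsto hd.hasDerivAt.tendsto_slope_zero_right.abs ?_
    filter_upwards [Ioo_mem_nhdsGT hr] with k hk
    rw [smul_eq_mul, abs_mul, abs_inv, abs_of_pos hk.1, inv_mul_le_iff₀ hk.1, mul_comm]
    exact h k ⟨hk.1.le, hk.2.le⟩
  · rwa [deriv_zero_of_not_differentiableAt hd, abs_zero]

theorem IsSliceBurgers.exists_burgersCurve_of_initial {w : ℝ → ℝ → ℝ} {N per h : ℝ}
    (hw : IsSliceBurgers w 0 h) (hb : C3Bound (fun x ↦ w x 0) N)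
    (hper : Function.Periodic (fun x ↦ w x 0) per) (hNh : N * h ≤ 1 / 2) :
    ∃ W W', BurgersCurve W W' (64 * N) per h ∧ ∀ t ∈ Icc 0 h, ⇑(W t) = fun x ↦ w x t := by
  have hfoot : ∀ t ∈ Icc 0 h, ∀ x, w x t = w (x + t * w x t) 0 := fun t ht x ↦ by
    simpa using hw.eq_apply_foot x ⟨le_rfl, ht.1.trans ht.2⟩ ht
  have hNt : ∀ t ∈ Icc 0 h, N * t ≤ 1 / 2 := fun t ht ↦
    (mul_le_mul_of_nonneg_left ht.2 hb.nonneg).trans hNh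
  exact hw.exists_burgersCurve
    (fun t ht ↦ .of_implicit ((hw.contDiff t ht).differentiable two_ne_zero) hb ht.1 (hNt t ht)
      (hfoot t ht))
    (fun t ht ↦ periodic_of_implicit (hb.contDiff.differentiable three_ne_zero)
      hb.abs_deriv_le ht.1 (hNt t ht) (hfoot t ht) hper)

/-- The factor of `h²` in the splitting error of solutions bounded by `M` in `C³`, on time intervals
of length `h ≤ 1 / M`. -/
def splitConst (α M : ℝ) : ℝ :=
  Real.exp 1 ^ 2 * (5 * Real.exp 1 + 10) * (M ^ 2 * ∫ y, levyWeight α y)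

theorem splitConst_nonneg (α M : ℝ) : 0 ≤ splitConst α M :=
  mul_nonneg (by positivity) (mul_nonneg (sq_nonneg M) (integral_nonneg (levyWeight_nonneg α)))

namespace ForcedBurgers

variable {α M per h : ℝ} {θ Lθ : ℝ → ℝ → ℝ} {W W' : ℝ → ℝ →ᵇ ℝ}

theorem abs_sub_fracSemigroup_le_sq (hθ : ForcedBurgers θ (fun x t ↦ -Lθ x t) M per h)
    (hL : ∀ t ∈ Icc 0 h, ∀ x, HasFracDissipAt α (fun y ↦ θ y t) (Lθ x t) x)
    (hW : BurgersCurve W W' M per h) (hWθ : ∀ x, W 0 x = θ x 0) (hα₀ : 0 < α) (hα₁ : α < 1)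
    (hper : 0 < per) (hh : 0 < h) (hMh : M * h ≤ 1) (x : ℝ) :
    |θ x h - ∫ y, fracSemigroupKernel α h y * W h (x - y)| ≤ splitConst α M * h ^ 2 := by
  have hκ : 0 ≤ ∫ y, levyWeight α y := integral_nonneg (levyWeight_nonneg α)
  have hE : 1 ≤ Real.exp 1 := Real.one_le_exp zero_le_one
  calc _ ≤ Real.exp (M * h) * (5 * M * M * ((∫ y, levyWeight α y) * h) * h) :=
        hθ.abs_sub_fracSemigroup_le hL hW hWθ hα₀ hα₁ hper ⟨hh, le_rfl⟩ x
    _ = Real.exp (M * h) * 5 * (M ^ 2 * ∫ y, levyWeight α y) * h ^ 2 := by ring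
    _ ≤ Real.exp 1 ^ 2 * (5 * Real.exp 1 + 10) * (M ^ 2 * ∫ y, levyWeight α y) * h ^ 2 := by
        gcongr
        · exact (Real.exp_le_exp.2 hMh).trans (le_self_pow₀ hE two_ne_zero)
        · linarith

theorem abs_deriv_sub_fracSemigroup_le_sq (hθ : ForcedBurgers θ (fun x t ↦ -Lθ x t) M per h)
    (hL : ∀ t ∈ Icc 0 h, ∀ x, HasFracDissipAt α (fun y ↦ θ y t) (Lθ x t) x)
    (hW : BurgersCurve W W' M per h) (hWθ : ∀ x, W 0 x = θ x 0) (hα₀ : 0 < α) (hα₁ : α < 1)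
    (hper : 0 < per) (hh : 0 < h) (hMh : M * h ≤ 1) (x : ℝ) :
    |deriv (fun x ↦ θ x h - ∫ y, fracSemigroupKernel α h y * W h (x - y)) x| ≤
      splitConst α M * h ^ 2 := by
  have hM : 0 ≤ M := (hθ.c3Bound h ⟨hh.le, le_rfl⟩).nonneg
  refine abs_deriv_le_of_increment hper (mul_nonneg (splitConst_nonneg α M) (sq_nonneg h))
    fun k hk ↦ (hθ.abs_increment_sub_fracSemigroup_le hL hW hWθ hα₀ hα₁ hper ⟨hh, le_rfl⟩ x
      hk).trans ?_
  set κ := ∫ y, levyWeight α y with hκ_def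
  have hκ : 0 ≤ κ := integral_nonneg (levyWeight_nonneg α)
  have hE : Real.exp (M * h) ≤ Real.exp 1 := Real.exp_le_exp.2 hMh
  have hfirst : M * (Real.exp (M * h) * (5 * M * M * (κ * h) * h)) ≤
      5 * Real.exp 1 * M ^ 2 * (κ * h) :=
    calc _ = Real.exp (M * h) * (5 * M ^ 2 * (κ * h)) * (M * h) := by ring
      _ ≤ Real.exp 1 * (5 * M ^ 2 * (κ * h)) * 1 := by gcongr
      _ = _ := by ring
  have hk₀ := hk.1
  calc _ ≤ Real.exp 1 * ((5 * Real.exp 1 * M ^ 2 * (κ * h) + 10 * M * M * (κ * h)) *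
        Real.exp 1 * h * k) := by gcongr
    _ = splitConst α M * h ^ 2 * k := by rw [splitConst, ← hκ_def]; ring

end ForcedBurgers

theorem burgers_time_splitting_general {α N : ℝ} (hα₀ : 0 < α) (hα₁ : α < 1) (hN : 0 < N) :
    ∃ h₀ > (0 : ℝ), ∃ C > (0 : ℝ), ∀ h per : ℝ, 0 < h → h ≤ h₀ → 0 < per →
      ∀ θ Lθ w : ℝ → ℝ → ℝ,
      ForcedBurgers θ (fun x t ↦ -Lθ x t) N per h →
      (∀ t ∈ Icc 0 h, ∀ x, HasFracDissipAt α (fun y ↦ θ y t) (Lθ x t) x) →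
      IsSliceBurgers w 0 h → (∀ x, w x 0 = θ x 0) →
      ∀ j ≤ 1, ∀ x,
        |iteratedDeriv j
          (fun x ↦ θ x h - ∫ y, fracSemigroupKernel α h y * w (x - y) h) x| ≤ C * h ^ 2 := by
  refine ⟨1 / (64 * N), by positivity, splitConst α (64 * N) + 1,
    add_pos_of_nonneg_of_pos (splitConst_nonneg α _) one_pos,
    fun h per hh hh₀ hper θ Lθ w hθ hL hw hwθ j hj x ↦ ?_⟩
  have hNh : 64 * N * h ≤ 1 := by rwa [le_div_iff₀' (by positivity)] at hh₀
  have hzero : (fun x ↦ w x 0) = fun x ↦ θ x 0 := funext hwθ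
  have h₀ : (0 : ℝ) ∈ Icc 0 h := ⟨le_rfl, hh.le⟩
  obtain ⟨W, W', hW, hWw⟩ := hw.exists_burgersCurve_of_initial (hzero ▸ hθ.c3Bound 0 h₀)
    (hzero ▸ hθ.periodic 0 h₀) (by linarith)
  have hWθ (x : ℝ) : W 0 x = θ x 0 := (congrFun (hWw 0 h₀) x).trans (hwθ x)
  have hWh (x : ℝ) : w x h = W h x := (congrFun (hWw h ⟨hh.le, le_rfl⟩) x).symm
  have hθ' := hθ.mono (show N ≤ 64 * N by linarith)
  simp only [hWh]
  refine le_trans (b := splitConst α (64 * N) * h ^ 2) ?_ (by gcongr; linarith)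
  interval_cases j
  · rw [iteratedDeriv_zero]
    exact hθ'.abs_sub_fracSemigroup_le_sq hL hW hWθ hα₀ hα₁ hper hh hNh x
  · rw [iteratedDeriv_one]
    exact hθ'.abs_deriv_sub_fracSemigroup_le_sq hL hW hWθ hα₀ hα₁ hper hh hNh x

/-- **Time-splitting approximation for the fractional Burgers equation (Prop. timesplit).**
For `0 < α < 1`, `N > 0` there are `h₀, C > 0` such that for `0 < h ≤ h₀`: if `θ` is a smooth
periodic solution of `∂_t θ = θ ∂_x θ − L_α θ` on `[0,h]` with `‖θ(·,t)‖_{C³} ≤ N`, `w` solves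
the inviscid Burgers equation with `w(·,0) = θ(·,0)`, and `v(·,h) = Φ_h ∗ w(·,h)`, then
`‖θ(·,h) − v(·,h)‖_{C¹} ≤ C h²`. -/
theorem burgers_time_splitting (α N : ℝ) (hα0 : 0 < α) (hα1 : α < 1) (hN : 0 < N) :
    ∃ h₀ > (0:ℝ), ∃ C > (0:ℝ), ∀ h per : ℝ, 0 < h → h ≤ h₀ → 0 < per →
      ∀ θ Lθ w : ℝ → ℝ → ℝ,
      ContDiffOn ℝ (⊤ : ℕ∞) (fun p : ℝ × ℝ => θ p.1 p.2) (univ ×ˢ Icc 0 h) →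
      (∀ t ∈ Icc (0:ℝ) h, ∀ x, θ (x + per) t = θ x t) →
      (∀ t ∈ Icc (0:ℝ) h, ∀ j ≤ 3, ∀ x, |iteratedDeriv j (fun x' => θ x' t) x| ≤ N) →
      (∀ t ∈ Icc (0:ℝ) h, ∀ x,
        Tendsto (fun ε => ∫ y in {y : ℝ | ε < |y|}, (θ x t - θ (x + y) t) / |y| ^ (1 + 2*α))
          (nhdsWithin 0 (Ioi 0)) (nhds (Lθ x t))) →
      (∀ x, ∀ t ∈ Icc (0:ℝ) h,
        HasDerivWithinAt (fun s => θ x s)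
          (θ x t * deriv (fun x' => θ x' t) x - Lθ x t) (Icc 0 h) t) →
      (∀ t ∈ Icc (0:ℝ) h, ContDiff ℝ 3 (fun x => w x t)) →
      (∀ x, w x 0 = θ x 0) →
      (∀ x, ∀ t ∈ Icc (0:ℝ) h,
        HasDerivWithinAt (fun s => w x s)
          (w x t * deriv (fun x' => w x' t) x) (Icc 0 h) t) →
      ∀ j ≤ 1, ∀ x,
        |iteratedDeriv j
          (fun x' => θ x' h - ∫ y : ℝ, fracSemigroupKernel α h y * w (x' - y) h) x|
          ≤ C * h ^ (2:ℕ) := by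
  obtain ⟨h₀, hh₀, C, hC, hmain⟩ := burgers_time_splitting_general hα0 hα1 hN
  refine ⟨h₀, hh₀, C, hC, fun h per hh hle hper θ Lθ w hθ hθper hθN hL hθt hw hwθ hwt ↦
    hmain h per hh hle hper θ Lθ w ⟨fun t ht ↦ .of_iteratedDeriv ?_ (hθN t ht), hθper,
      fun t ht x ↦ hθt x t ht⟩ hL ⟨fun t ht ↦ (hw t ht).of_le (by norm_num), hwt⟩ hwθ⟩
  have hslice : ContDiff ℝ 3 fun x : ℝ ↦ (x, t) := by fun_prop
  have hθ₃ := hθ.of_le (WithTop.coe_le_coe.2 (le_top : (3 : ℕ∞) ≤ ⊤))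
  exact contDiffOn_univ.1 (hθ₃.comp hslice.contDiffOn fun x _ ↦ ⟨mem_univ x, ht⟩)

end
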